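/- arXiv:0708.2890 — 2 statements merged into one kernel-verified Lean document; each statement's English description precedes it below -/
import Mathlib

section
/- Let g be a complex simple Lie algebra whose Chevalley involution ψ is an inner automorphism, and let G = Aut(g)⁰ be its adjoint group acting on V = g. Then G'/G is the group of order 2 generated by the coset of the scalar map −1 (multiplication by −1 on g); equivalently, G' = G ∪ (−1)·G. -/
noncomputable section

/-- A function `V → ℂ` is a polynomial function if it lies in the subalgebra of
functions generated by the linear functionals, i.e. it is given by a polynomial
in linear coordinates. -/
def IsPolyFun {V : Type*} [AddCommGroup V] [Module ℂ V] (f : V → ℂ) : Prop :=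
  f ∈ Algebra.adjoin ℂ (Set.range fun l : V →ₗ[ℂ] ℂ => (l : V → ℂ))

/-- Given a subgroup `G` of `GL(V)`, the group `G'` of all linear automorphisms of `V`
preserving every `G`-invariant polynomial function on `V`. -/
def primeGroup {V : Type*} [AddCommGroup V] [Module ℂ V]
    (G : Subgroup (V ≃ₗ[ℂ] V)) : Subgroup (V ≃ₗ[ℂ] V) where
  carrier := {φ | ∀ f : V → ℂ, IsPolyFun f →
      (∀ g ∈ G, ∀ v : V, f (g v) = f v) → ∀ v : V, f (φ v) = f v}
  one_mem' := by intro f _ _ v; rfl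
  mul_mem' := by
    intro a b ha hb f hf hinv v
    have h2 : f (a (b v)) = f (b v) := ha f hf hinv (b v)
    exact h2.trans (hb f hf hinv v)
  inv_mem' := by
    intro a ha f hf hinv v
    have h := ha f hf hinv (a⁻¹ v)
    have : a (a⁻¹ v) = v := a.apply_symm_apply v
    rw [this] at h
    exact h.symm

/-- The algebraic exponential of an endomorphism of a finite-dimensional space
(intended for nilpotent endomorphisms, where the series is a finite sum). -/
def endExp {g : Type*} [AddCommGroup g] [Module ℂ g] [FiniteDimensional ℂ g]
    (A : Module.End ℂ g) : Module.End ℂ g :=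
  ∑ k ∈ Finset.range (Module.finrank ℂ g + 1), (k.factorial : ℂ)⁻¹ • A ^ k

/-- The adjoint group `G = Aut(g)⁰` of a semisimple Lie algebra `g`: the subgroup of
`GL(g)` generated by the exponentials of nilpotent inner derivations `ad x`. -/
def adjointGroup (g : Type*) [LieRing g] [LieAlgebra ℂ g] [FiniteDimensional ℂ g] :
    Subgroup (g ≃ₗ[ℂ] g) :=
  Subgroup.closure {u : g ≃ₗ[ℂ] g | ∃ x : g,
    IsNilpotent (LieAlgebra.ad ℂ g x) ∧ (u : g →ₗ[ℂ] g) = endExp (LieAlgebra.ad ℂ g x)}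

/-- The subgroup of `GL(g)` fixing a subalgebra `t` pointwise. -/
def pointwiseStab {g : Type*} [LieRing g] [LieAlgebra ℂ g]
    (t : LieSubalgebra ℂ g) : Subgroup (g ≃ₗ[ℂ] g) where
  carrier := {u | ∀ x ∈ t, u x = x}
  one_mem' := by intro x _; rfl
  mul_mem' := by
    intro a b ha hb x hx
    have : a (b x) = a x := by rw [hb x hx]
    exact this.trans (ha x hx)
  inv_mem' := by
    intro a ha x hx
    conv_lhs => rw [← ha x hx]
    exact a.symm_apply_apply x

/-- The maximal torus of the adjoint group corresponding to a Cartan subalgebra `t`: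
the elements of the adjoint group acting trivially on `t`. -/
def maximalTorus (g : Type*) [LieRing g] [LieAlgebra ℂ g] [FiniteDimensional ℂ g]
    (t : LieSubalgebra ℂ g) : Subgroup (g ≃ₗ[ℂ] g) :=
  adjointGroup g ⊓ pointwiseStab t

/-!
Let `φ` preserve the invariants of `G`. Among these are the traces `x ↦ tr (ad x ^ k)`, and the
linear vector fields annihilating all of them are exactly `ad g`. Hence conjugation by `φ`
preserves `ad g`, so that `φ` is a scalar multiple of a Lie algebra automorphism `σ`, and the
scalar is `±1` because `φ` preserves the Killing form. The map `-1` itself preserves the invariants,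
because a generic `x` is conjugate into the Cartan subalgebra `H`, where `ψ` is `-1`. So it remains
to show `σ ∈ G`.

After multiplying by an element of `G` (conjugacy of Cartan subalgebras) we may assume that `σ`
preserves `H`. By a weak form of Chevalley's restriction theorem the `G`-invariants separate
generic orbits of the Weyl group `W` on `H`: if `F` is a `W`-invariant polynomial on `H` and `Δ` is
the discriminant of `x ↦ ad x`, then `Δ² F` extends to a `G`-invariant function on `g` which is
entire on lines and of polynomial growth, hence a polynomial. Therefore `σ` agrees on `H` with an
element of `W`, and we may assume that `σ` fixes `H` pointwise. Then `σ = exp (ad z)` for some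
`z ∈ H`, and, as `ψ` inverts the torus, `σ = τ ψ τ⁻¹ ψ⁻¹ ∈ G` with `τ = exp (ad z / 2)`.
-/

open LieAlgebra

theorem linearEquiv_conj_pow {K V : Type*} [CommSemiring K] [AddCommMonoid V] [Module K V]
    (u : V ≃ₗ[K] V) (A : Module.End K V) (k : ℕ) : u.conj (A ^ k) = u.conj A ^ k :=
  map_pow u.conjRingEquiv A k

section LieAutomorphisms

/-- The group of Lie algebra automorphisms of `L`, as a subgroup of `GL(L)` so that it can be
compared with `adjointGroup` and `primeGroup`. -/
def lieAut (K L : Type*) [CommRing K] [LieRing L] [LieAlgebra K L] : Subgroup (L ≃ₗ[K] L) where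
  carrier := {u | ∀ x y : L, u ⁅x, y⁆ = ⁅u x, u y⁆}
  one_mem' _ _ := rfl
  mul_mem' {u v} hu hv x y := by simp only [LinearEquiv.mul_apply, hv x y, hu (v x)]
  inv_mem' {u} hu x y := by
    apply u.injective
    rw [hu]
    simp only [← LinearEquiv.mul_apply, mul_inv_cancel, LinearEquiv.coe_one, id_eq]

variable {K L : Type*} [CommRing K] [LieRing L] [LieAlgebra K L] {u : L ≃ₗ[K] L}

theorem toLinearEquiv_mem_lieAut (σ : L ≃ₗ⁅K⁆ L) : σ.toLinearEquiv ∈ lieAut K L :=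
  fun x y => σ.map_lie x y

theorem ad_apply_of_mem_lieAut (hu : u ∈ lieAut K L) (x : L) :
    ad K L (u x) = u.conj (ad K L x) := by
  ext y
  simp [LinearEquiv.conj_apply, hu x]

theorem trace_ad_pow_of_mem_lieAut (hu : u ∈ lieAut K L) (k : ℕ) (x : L) :
    LinearMap.trace K L (ad K L (u x) ^ k) = LinearMap.trace K L (ad K L x ^ k) := by
  rw [ad_apply_of_mem_lieAut hu, ← linearEquiv_conj_pow, LinearMap.trace_conj']

theorem neg_notMem_lieAut {K L : Type*} [Field K] [CharZero K] [LieRing L] [LieAlgebra K L]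
    (hL : ¬IsLieAbelian L) : (LinearEquiv.neg K : L ≃ₗ[K] L) ∉ lieAut K L := by
  refine fun h => hL ⟨fun x y => ?_⟩
  have hxy : -⁅x, y⁆ = ⁅x, y⁆ := by simpa using h x y
  have h2 : (2 : K) • ⁅x, y⁆ = 0 := by rw [two_smul, ← neg_eq_iff_add_eq_zero, hxy]
  exact (smul_eq_zero_iff_right two_ne_zero).mp h2

end LieAutomorphisms

section AdjointGroup

theorem pow_eq_zero_of_isNilpotent_of_finrank_le {K V : Type*} [Field K] [AddCommGroup V]
    [Module K V] [FiniteDimensional K V] {A : Module.End K V} (hA : IsNilpotent A) {k : ℕ}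
    (hk : Module.finrank K V ≤ k) : A ^ k = 0 := by
  have h := LinearMap.aeval_self_charpoly A
  rw [hA.charpoly_eq_X_pow_finrank, map_pow, Polynomial.aeval_X] at h
  exact pow_eq_zero_of_le hk h

theorem endExp_eq_exp {V : Type*} [AddCommGroup V] [Module ℂ V] [FiniteDimensional ℂ V]
    [Module ℚ V] {A : Module.End ℂ V} (hA : IsNilpotent A) : endExp A = IsNilpotent.exp A := by
  rw [IsNilpotent.exp_eq_sum (pow_eq_zero_of_isNilpotent_of_finrank_le hA (Nat.le_succ _)), endExp]
  refine Finset.sum_congr rfl fun k _ => ?_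
  rw [← Rat.cast_smul_eq_qsmul ℂ]
  push_cast
  rfl

theorem conj_endExp {V : Type*} [AddCommGroup V] [Module ℂ V] [FiniteDimensional ℂ V]
    (s : V ≃ₗ[ℂ] V) (A : Module.End ℂ V) : s.conj (endExp A) = endExp (s.conj A) := by
  simp only [endExp, map_sum, map_smul, linearEquiv_conj_pow]

variable {g : Type*} [LieRing g] [LieAlgebra ℂ g] [FiniteDimensional ℂ g]

theorem exists_mem_lieAut_eq_endExp {x : g} (hx : IsNilpotent (ad ℂ g x)) :
    ∃ u ∈ lieAut ℂ g, (u : g →ₗ[ℂ] g) = endExp (ad ℂ g x) := by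
  let _ : Module ℚ g := Module.compHom g (algebraMap ℚ ℂ)
  let _ : LieAlgebra ℚ g := { lie_smul := fun q x y => lie_smul (algebraMap ℚ ℂ q) x y }
  have had : (LieDerivation.ad ℂ g x).toLinearMap = ad ℂ g x := by
    ext y
    simp
  refine ⟨_, toLinearEquiv_mem_lieAut (LieDerivation.exp (LieDerivation.ad ℂ g x) (had ▸ hx)), ?_⟩
  exact (congrArg IsNilpotent.exp had).trans (endExp_eq_exp hx).symm

theorem adjointGroup_le_lieAut : adjointGroup g ≤ lieAut ℂ g := by
  refine (Subgroup.closure_le _).mpr ?_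
  rintro u ⟨x, hx, hux⟩
  obtain ⟨v, hv, hvx⟩ := exists_mem_lieAut_eq_endExp hx
  rwa [LinearEquiv.toLinearMap_injective (hux.trans hvx.symm)]

theorem exists_mem_adjointGroup_eq_endExp {x : g} (hx : IsNilpotent (ad ℂ g x)) :
    ∃ u ∈ adjointGroup g, (u : g →ₗ[ℂ] g) = endExp (ad ℂ g x) := by
  obtain ⟨u, -, hux⟩ := exists_mem_lieAut_eq_endExp hx
  exact ⟨u, Subgroup.subset_closure ⟨x, hx, hux⟩, hux⟩

theorem conj_mem_adjointGroup {s u : g ≃ₗ[ℂ] g} (hs : s ∈ lieAut ℂ g) (hu : u ∈ adjointGroup g) :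
    s * u * s⁻¹ ∈ adjointGroup g := by
  suffices adjointGroup g ≤ (adjointGroup g).comap (MulAut.conj s).toMonoidHom from this hu
  refine (Subgroup.closure_le _).mpr ?_
  rintro u ⟨x, hx, hux⟩
  have hsx : IsNilpotent (ad ℂ g (s x)) := by
    rw [ad_apply_of_mem_lieAut hs]
    exact hx.map s.conjRingEquiv
  refine Subgroup.subset_closure ⟨s x, hsx, ?_⟩
  rw [ad_apply_of_mem_lieAut hs, ← conj_endExp, ← hux]
  rfl

theorem adjointGroup_le_primeGroup : adjointGroup g ≤ primeGroup (adjointGroup g) :=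
  fun u hu _ _ hinv => hinv u hu

end AdjointGroup

section Polarization

variable {K A : Type*} [Field K] [Ring A] [Algebra K A]

/-- The coefficient of `s` in `(X + s • Y) ^ n`, that is `∑ i < n, X ^ i * Y * X ^ (n - 1 - i)`. -/
def powDeriv (X Y : A) : ℕ → A
  | 0 => 0
  | n + 1 => powDeriv X Y n * X + X ^ n * Y

theorem exists_polynomial_apply_add_smul_pow (X Y : A) (n : ℕ) (l : A →ₗ[K] K) :
    ∃ p : Polynomial K, (∀ s, p.eval s = l ((X + s • Y) ^ n)) ∧ p.coeff 1 = l (powDeriv X Y n) := by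
  induction n generalizing l with
  | zero => exact ⟨.C (l 1), by simp, by simp [powDeriv]⟩
  | succ n ih =>
    obtain ⟨p, hp, hp1⟩ := ih (l ∘ₗ LinearMap.mulRight K X)
    obtain ⟨q, hq, -⟩ := ih (l ∘ₗ LinearMap.mulRight K Y)
    refine ⟨p + .X * q, fun s => ?_, ?_⟩
    · simp [hp, hq, pow_succ, mul_add]
    · have hq0 : q.coeff 0 = l (X ^ n * Y) := by
        simpa [Polynomial.coeff_zero_eq_eval_zero] using hq 0
      rw [Polynomial.coeff_add, Polynomial.coeff_X_mul, hp1, hq0]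
      simp [powDeriv]

theorem powDeriv_lie (X Y : A) (n : ℕ) : powDeriv X ⁅Y, X⁆ n = ⁅Y, X ^ n⁆ := by
  simp only [Ring.lie_def]
  induction n with
  | zero => simp [powDeriv]
  | succ n ih =>
    rw [powDeriv, ih, pow_succ]
    noncomm_ring

theorem trace_powDeriv_mul_pow {V : Type*} [AddCommGroup V] [Module K V] (X Y : Module.End K V)
    (n m : ℕ) : LinearMap.trace K V (powDeriv X Y n * X ^ m) =
      n * LinearMap.trace K V (X ^ (n - 1 + m) * Y) := by
  induction n generalizing m with
  | zero => simp [powDeriv]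
  | succ n ih =>
    have hcycle : LinearMap.trace K V (X ^ n * Y * X ^ m) =
        LinearMap.trace K V (X ^ (n + m) * Y) := by
      rw [LinearMap.trace_mul_comm, ← mul_assoc, ← pow_add, add_comm m]
    rw [powDeriv, add_mul, mul_assoc, ← pow_succ', map_add, ih, hcycle, Nat.add_sub_cancel]
    rcases n with _ | n
    · simp
    · rw [show n + 1 - 1 + (m + 1) = n + 1 + m by omega]
      push_cast
      ring

end Polarization

section AdTraces

attribute [local instance] LieRing.ofAssociativeRing

variable {K L : Type*} [Field K] [LieRing L] [LieAlgebra K L]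

/-- Linear automorphisms of `L` preserving the functions `x ↦ tr ((ad x) ^ k)`. Over `ℂ` these
include the elements of `primeGroup (adjointGroup L)`. -/
def PreservesAdTraces (φ : L ≃ₗ[K] L) : Prop :=
  ∀ (k : ℕ) (x : L), LinearMap.trace K L (ad K L (φ x) ^ k) = LinearMap.trace K L (ad K L x ^ k)

theorem PreservesAdTraces.symm {φ : L ≃ₗ[K] L} (hφ : PreservesAdTraces φ) :
    PreservesAdTraces φ.symm := fun k x => by
  rw [← hφ, LinearEquiv.apply_symm_apply]

theorem lie_ad (x y : L) : ⁅x, ad K L y⁆ = ad K L ⁅x, y⁆ := by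
  ext z
  simp

variable [CharZero K]

theorem PreservesAdTraces.trace_ad_pow_mul_ad {φ : L ≃ₗ[K] L} (hφ : PreservesAdTraces φ) (k : ℕ)
    (x y : L) : LinearMap.trace K L (ad K L (φ x) ^ k * ad K L (φ y)) =
      LinearMap.trace K L (ad K L x ^ k * ad K L y) := by
  obtain ⟨p, hp, hp1⟩ := exists_polynomial_apply_add_smul_pow (ad K L (φ x)) (ad K L (φ y)) (k + 1)
    (LinearMap.trace K L)
  obtain ⟨q, hq, hq1⟩ := exists_polynomial_apply_add_smul_pow (ad K L x) (ad K L y) (k + 1)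
    (LinearMap.trace K L)
  have hpq : p = q := Polynomial.funext fun s => by
    rw [hp, hq, ← map_smul, ← map_smul, ← map_add, ← map_add, hφ, map_add, map_smul]
  have hcoeff : (k + 1 : K) * LinearMap.trace K L (ad K L (φ x) ^ k * ad K L (φ y)) =
      (k + 1 : K) * LinearMap.trace K L (ad K L x ^ k * ad K L y) := by
    have hφxy := trace_powDeriv_mul_pow (ad K L (φ x)) (ad K L (φ y)) (k + 1) 0
    have hxy := trace_powDeriv_mul_pow (ad K L x) (ad K L y) (k + 1) 0
    simp only [pow_zero, mul_one, add_zero, Nat.add_sub_cancel, Nat.cast_add, Nat.cast_one]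
      at hφxy hxy
    rw [← hφxy, ← hxy, ← hp1, ← hq1, hpq]
  exact mul_left_cancel₀ (by exact_mod_cast k.succ_ne_zero) hcoeff

theorem PreservesAdTraces.killingForm_apply {φ : L ≃ₗ[K] L} (hφ : PreservesAdTraces φ) (x y : L) :
    killingForm K L (φ x) (φ y) = killingForm K L x y := by
  have h := hφ.trace_ad_pow_mul_ad 1 x y
  rwa [pow_one, pow_one] at h

variable (K L) in
/-- The endomorphisms of `L` which, as linear vector fields on `L`, annihilate all the functions
`x ↦ tr ((ad x) ^ k)`. -/
def adTraceVectorFields : LieSubmodule K L (Module.End K L) where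
  carrier := {A | ∀ (k : ℕ) (x : L), LinearMap.trace K L (ad K L x ^ k * ad K L (A x)) = 0}
  zero_mem' k x := by simp
  add_mem' {A B} hA hB k x := by simp [mul_add, hA k x, hB k x]
  smul_mem' c A hA k x := by simp [hA k x]
  lie_mem {y A} hA k x := by
    obtain ⟨p, hp, hp1⟩ := exists_polynomial_apply_add_smul_pow (ad K L x) (ad K L ⁅y, x⁆) k
      (LinearMap.trace K L ∘ₗ LinearMap.mulRight K (ad K L (A x)))
    obtain ⟨q, hq, -⟩ := exists_polynomial_apply_add_smul_pow (ad K L x) (ad K L ⁅y, x⁆) k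
      (LinearMap.trace K L ∘ₗ LinearMap.mulRight K (ad K L (A ⁅y, x⁆)))
    -- The condition on `A` at `x + s • ⁅y, x⁆`, as a polynomial identity in `s`.
    have hpq : p + .X * q = 0 := Polynomial.funext fun s => by
      have hAs := hA k (x + s • ⁅y, x⁆)
      simp only [map_add, map_smul, mul_add, mul_smul_comm, smul_eq_mul] at hAs
      simpa [hp, hq] using hAs
    have hq0 : q.coeff 0 = LinearMap.trace K L (ad K L x ^ k * ad K L (A ⁅y, x⁆)) := by
      simpa [Polynomial.coeff_zero_eq_eval_zero] using hq 0
    have hcoeff : LinearMap.trace K L (⁅ad K L y, ad K L x ^ k⁆ * ad K L (A x)) +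
        LinearMap.trace K L (ad K L x ^ k * ad K L (A ⁅y, x⁆)) = 0 := by
      have h1 := congrArg (Polynomial.coeff · 1) hpq
      rwa [Polynomial.coeff_add, Polynomial.coeff_X_mul, hp1, hq0, LieHom.map_lie, powDeriv_lie]
        at h1
    rw [LieHom.lie_apply, map_sub, mul_sub, map_sub, LieHom.map_lie, sub_eq_zero]
    rw [add_eq_zero_iff_neg_eq] at hcoeff
    rw [← hcoeff, Ring.lie_def, Ring.lie_def, sub_mul, mul_sub, map_sub, map_sub, neg_sub,
      mul_assoc (ad K L x ^ k), mul_assoc (ad K L y), LinearMap.trace_mul_comm K (ad K L y),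
      mul_assoc (ad K L x ^ k)]

theorem ad_mem_adTraceVectorFields (y : L) : ad K L y ∈ adTraceVectorFields K L := by
  intro k x
  rw [ad_apply, LieHom.map_lie, Ring.lie_def, mul_sub, map_sub, ← mul_assoc,
    LinearMap.trace_mul_comm, ← mul_assoc, ← mul_assoc, ← pow_succ', ← pow_succ, sub_self]

theorem PreservesAdTraces.lieConj_mem {φ : L ≃ₗ[K] L} (hφ : PreservesAdTraces φ)
    {A : Module.End K L} (hA : A ∈ adTraceVectorFields K L) :
    φ.lieConj A ∈ adTraceVectorFields K L := by
  intro k x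
  obtain ⟨u, rfl⟩ := φ.surjective x
  simp only [LinearEquiv.lieConj_apply, LinearEquiv.conj_apply, LinearMap.comp_apply,
    LinearEquiv.coe_coe, LinearEquiv.symm_apply_apply]
  rw [hφ.trace_ad_pow_mul_ad, hA k u]

theorem trace_aeval_ad_mul_ad_of_mem {A : Module.End K L} (hA : A ∈ adTraceVectorFields K L)
    (x : L) (P : Polynomial K) :
    LinearMap.trace K L (Polynomial.aeval (ad K L x) P * ad K L (A x)) = 0 := by
  induction P using Polynomial.induction_on' with
  | add p q hp hq => rw [map_add, add_mul, map_add, hp, hq, add_zero]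
  | monomial n a =>
    rw [Polynomial.aeval_monomial, mul_assoc, ← Algebra.smul_def, map_smul, hA n x, smul_zero]

theorem killingForm_apply_left_of_mem {A : Module.End K L} (hA : A ∈ adTraceVectorFields K L)
    (x y : L) : killingForm K L (A x) y = -killingForm K L x (A y) := by
  have hdiag (x : L) : killingForm K L x (A x) = 0 := by
    have h := hA 1 x
    rwa [pow_one] at h
  have hxy := hdiag (x + y)
  simp only [map_add, LinearMap.add_apply, hdiag x, hdiag y] at hxy
  rw [LieModule.traceForm_comm]
  linear_combination hxy

end AdTraces

section RootSpaces

open LieModule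

variable {K L : Type*} [Field K] [LieRing L] [LieAlgebra K L]

theorem eq_zero_of_forall_killingForm_eq_zero [IsKilling K L] {x : L}
    (hx : ∀ y, killingForm K L x y = 0) : x = 0 := by
  have hker : x ∈ LinearMap.ker (killingForm K L) := LinearMap.ext hx
  rwa [IsKilling.ker_killingForm_eq_bot] at hker

section

variable {H : LieSubalgebra K L} [LieRing.IsNilpotent H] [FiniteDimensional K L]
  [IsTriangularizable K H L]

theorem eq_top_of_rootSpace_le {p : Submodule K L}
    (hp : ∀ α : Weight K H L, (rootSpace H α).toSubmodule ≤ p) : p = ⊤ := by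
  have h := iSup_genWeightSpace_eq_top' K H L
  rw [← LieSubmodule.toSubmodule_inj, LieSubmodule.iSup_toSubmodule,
    LieSubmodule.top_toSubmodule] at h
  exact top_le_iff.mp (h ▸ iSup_le hp)

variable (H) in
theorem linearMap_ext_rootSpace {M : Type*} [AddCommGroup M] [Module K M] {A B : L →ₗ[K] M}
    (h : ∀ (α : Weight K H L), ∀ x ∈ rootSpace H α, A x = B x) : A = B :=
  LinearMap.eqLocus_eq_top.mp (eq_top_of_rootSpace_le h)

end

variable {H : LieSubalgebra K L} [H.IsCartanSubalgebra]

theorem weight_apply_ne_zero_of_injective {h : H}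
    (hh : Function.Injective (fun α : Weight K H L => α h)) {α : Weight K H L}
    (hα : α.IsNonZero) : α h ≠ 0 := by
  obtain ⟨x, -, hx⟩ := α.exists_ne_zero
  have : Nontrivial L := nontrivial_of_ne x 0 hx
  exact fun h0 => hα (congrArg Weight.IsZero (hh (h0.trans rfl : α h = (0 : Weight K H L) h)) ▸
    Weight.isZero_zero)

variable [FiniteDimensional K L]

theorem mem_rootSpace_of_isZero {α : Weight K H L} (hα : α.IsZero) {x : L} :
    x ∈ rootSpace H α ↔ x ∈ H := by
  rw [show (α : H → K) = 0 from hα, rootSpace_zero_eq, LieSubalgebra.mem_toLieSubmodule]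

variable (H) in
theorem exists_injective_weight_apply_and_notMem [CharZero K] {ι : Type*} [Finite ι]
    (S : ι → Submodule K H) (hS : ∀ i, S i ≠ ⊤) :
    ∃ h : H, Function.Injective (fun α : Weight K H L => α h) ∧ ∀ i, h ∉ S i := by
  let p : {q : Weight K H L × Weight K H L // q.1 ≠ q.2} ⊕ ι → Submodule K H :=
    Sum.elim (fun q => LinearMap.ker (q.1.1.toLinear - q.1.2.toLinear)) S
  have hp : ∀ i, p i ≠ ⊤ := by
    rintro (⟨⟨α, β⟩, hne⟩ | i)
    · intro htop
      have hαβ := sub_eq_zero.mp (LinearMap.ker_eq_top.mp htop)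
      exact hne (Weight.ext (LinearMap.congr_fun hαβ))
    · exact hS i
  obtain ⟨h, hh⟩ := Submodule.exists_forall_notMem_of_forall_ne_top p hp
  refine ⟨h, fun α β hαβ => ?_, fun i => hh (.inr i)⟩
  by_contra hne
  exact hh (.inl ⟨(α, β), hne⟩) (by simpa [p, sub_eq_zero] using hαβ)

variable (H) in
theorem exists_injective_weight_apply [CharZero K] :
    ∃ h : H, Function.Injective (fun α : Weight K H L => α h) := by
  obtain ⟨h, hh, -⟩ := exists_injective_weight_apply_and_notMem (K := K) H
    (Empty.elim : Empty → Submodule K H) (fun i => i.elim)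
  exact ⟨h, hh⟩

variable (H) in
theorem cartan_ne_bot [CharZero K] [IsTriangularizable K H L] [Nontrivial L] : H ≠ ⊥ := by
  intro hH
  obtain ⟨x, hx⟩ := exists_ne (0 : L)
  refine hx (LinearMap.congr_fun (linearMap_ext_rootSpace H
    (A := LinearMap.id) (B := 0) fun α y hy => ?_) x)
  have hα : α.IsZero := funext fun h => by
    have hzero : h = 0 := Subtype.ext (by simpa [hH] using h.2)
    rw [hzero]
    exact α.toLinear.map_zero
  simpa [hH] using (mem_rootSpace_of_isZero hα).mp hy

variable [IsKilling K L]

theorem eq_zero_of_mem_cartan_of_forall_killingForm_eq_zero {x : L} (hx : x ∈ H)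
    (h : ∀ y ∈ H, killingForm K L x y = 0) : x = 0 := by
  have hzero : (⟨x, hx⟩ : H) = 0 :=
    (IsKilling.traceForm_cartan_nondegenerate K L H).1 _ fun y => h y y.2
  exact congrArg Subtype.val hzero

variable [IsTriangularizable K H L]

variable (H) in
theorem eq_zero_of_forall_rootSpace_killingForm_eq_zero {x : L}
    (h : ∀ (α : Weight K H L), ∀ y ∈ rootSpace H α, killingForm K L x y = 0) : x = 0 :=
  eq_zero_of_forall_killingForm_eq_zero (K := K) <| LinearMap.congr_fun <|
    linearMap_ext_rootSpace H (A := killingForm K L x) (B := 0) h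

variable [CharZero K]

theorem lie_eq_neg_smul_of_mem_rootSpace {α : Weight K H L} {x : L} (hx : x ∈ rootSpace H α)
    (h : H) : ⁅x, (h : L)⁆ = -(α h • x) := by
  rw [← lie_skew]
  exact congrArg Neg.neg (IsKilling.lie_eq_smul_of_mem_rootSpace hx h)

theorem exists_smul_eq_of_mem_rootSpace {α : Weight K H L} (hα : α.IsNonZero) {e x : L}
    (he : e ∈ rootSpace H α) (he0 : e ≠ 0) (hx : x ∈ rootSpace H α) : ∃ c : K, c • e = x := by
  have hne : (⟨e, he⟩ : rootSpace H α) ≠ 0 := fun h => he0 (congrArg Subtype.val h)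
  obtain ⟨c, hc⟩ := (finrank_eq_one_iff_of_nonzero' _ hne).mp
    (IsKilling.finrank_rootSpace_eq_one α hα) ⟨x, hx⟩
  exact ⟨c, congrArg Subtype.val hc⟩

theorem exists_aeval_ad_eq_smul {h : H} (hh : Function.Injective (fun α : Weight K H L => α h))
    (f : Weight K H L → K) : ∃ P : Polynomial K, ∀ α : Weight K H L, ∀ x ∈ rootSpace H α,
      Polynomial.aeval (ad K L h) P x = f α • x := by
  classical
  let _ : Fintype (Weight K H L) := Fintype.ofFinite _
  refine ⟨Lagrange.interpolate Finset.univ (fun α : Weight K H L => α h) f, fun α x hx => ?_⟩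
  have heigen : ad K L h x = α h • x := IsKilling.lie_eq_smul_of_mem_rootSpace hx h
  rw [Module.End.aeval_apply_of_mem_apply_eq_smul heigen, Lagrange.eval_interpolate_at_node
    (v := fun α : Weight K H L => α h) _ hh.injOn (Finset.mem_univ α)]

theorem exists_ad_eq_aeval_ad {h : H} (hh : Function.Injective (fun α : Weight K H L => α h))
    (h' : H) : ∃ P : Polynomial K, ad K L h' = Polynomial.aeval (ad K L h) P := by
  obtain ⟨P, hP⟩ := exists_aeval_ad_eq_smul hh (fun α => α h')
  refine ⟨P, linearMap_ext_rootSpace H fun α x hx => ?_⟩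
  rw [hP α x hx]
  exact IsKilling.lie_eq_smul_of_mem_rootSpace hx h'

theorem exists_lie_eq_of_forall_killingForm_eq_zero {h : H}
    (hh : ∀ α : Weight K H L, α.IsNonZero → α h ≠ 0) {x : L}
    (hx : ∀ y ∈ H, killingForm K L x y = 0) : ∃ y : L, ⁅(h : L), y⁆ = x := by
  have htop : LinearMap.range (ad K L h) ⊔ H.toSubmodule = ⊤ := by
    refine eq_top_of_rootSpace_le (H := H) fun α y hy => ?_
    by_cases hα : α.IsZero
    · exact Submodule.mem_sup_right ((mem_rootSpace_of_isZero hα).mp hy)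
    · refine Submodule.mem_sup_left ⟨(α h)⁻¹ • y, ?_⟩
      have hsmul : ad K L h y = α h • y := IsKilling.lie_eq_smul_of_mem_rootSpace hy h
      rw [map_smul, hsmul, inv_smul_smul₀ (hh α hα)]
  obtain ⟨-, ⟨y, rfl⟩, k, hk, rfl⟩ := Submodule.mem_sup.mp (htop ▸ Submodule.mem_top : x ∈ _)
  suffices hk0 : k = 0 from ⟨y, by rw [hk0, add_zero, ad_apply]⟩
  refine eq_zero_of_mem_cartan_of_forall_killingForm_eq_zero hk fun h' hh' => ?_
  have hcomm : ⁅(h : L), h'⁆ = 0 := congrArg Subtype.val (trivial_lie_zero H H h ⟨h', hh'⟩)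
  have hzero := hx h' hh'
  rwa [map_add, LinearMap.add_apply, ad_apply, traceForm_apply_lie_apply', hcomm, map_zero,
    neg_zero, zero_add] at hzero

end RootSpaces

section CartanReduction

open LieModule

variable {K L : Type*} [Field K] [CharZero K] [LieRing L] [LieAlgebra K L] [FiniteDimensional K L]
  [IsKilling K L] {H : LieSubalgebra K L} [H.IsCartanSubalgebra] [IsTriangularizable K H L]
  {A : Module.End K L}

theorem killingForm_apply_cartan_eq_zero_of_mem (hA : A ∈ adTraceVectorFields K L) (h h' : H) :
    killingForm K L (A h) h' = 0 := by
  let S : Submodule K H := LinearMap.ker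
    ((killingForm K L).flip (h' : L) ∘ₗ A ∘ₗ H.toSubmodule.subtype)
  by_contra hne
  have hS : S ≠ ⊤ := fun htop => hne (htop ▸ Submodule.mem_top : h ∈ S)
  obtain ⟨k, hk, hkS⟩ := exists_injective_weight_apply_and_notMem H (fun _ : Unit => S) fun _ => hS
  obtain ⟨P, hP⟩ := exists_ad_eq_aeval_ad hk h'
  refine hkS () (?_ : killingForm K L (A k) h' = 0)
  rw [traceForm_comm, traceForm_apply_apply, ← Module.End.mul_eq_comp]
  exact hP ▸ trace_aeval_ad_mul_ad_of_mem hA k P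

theorem weight_apply_mul_killingForm_of_mem (hA : A ∈ adTraceVectorFields K L)
    {α : Weight K H L} {e : L} (he : e ∈ rootSpace H α) (h h' : H) :
    α h' * killingForm K L (A h) e = α h * killingForm K L (A h') e := by
  have horth := killingForm_apply_cartan_eq_zero_of_mem
    ((adTraceVectorFields K L).lie_mem (x := e) hA) h h'
  rw [LieHom.lie_apply, map_sub, LinearMap.sub_apply, traceForm_apply_lie_apply',
    lie_eq_neg_smul_of_mem_rootSpace he, lie_eq_neg_smul_of_mem_rootSpace he, map_neg, map_neg,
    map_neg, LinearMap.neg_apply, map_smul, map_smul, map_smul, LinearMap.smul_apply,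
    killingForm_apply_left_of_mem hA e, traceForm_comm K L L e, smul_eq_mul, smul_eq_mul] at horth
  linear_combination horth

variable (H) in
theorem exists_sub_ad_apply_cartan_eq_zero_of_mem (hA : A ∈ adTraceVectorFields K L) :
    ∃ z : L, ∀ h : H, (A - ad K L z) h = 0 := by
  obtain ⟨k, hk⟩ := exists_injective_weight_apply (K := K) H
  have hk0 (α : Weight K H L) : α.IsNonZero → α k ≠ 0 := weight_apply_ne_zero_of_injective hk
  obtain ⟨y, hy⟩ := exists_lie_eq_of_forall_killingForm_eq_zero hk0 fun h' hh' =>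
    killingForm_apply_cartan_eq_zero_of_mem hA k ⟨h', hh'⟩
  refine ⟨-y, fun h => eq_zero_of_forall_rootSpace_killingForm_eq_zero H fun α e he => ?_⟩
  have hB : A - ad K L (-y) ∈ adTraceVectorFields K L :=
    sub_mem hA (ad_mem_adTraceVectorFields _)
  have hBk : (A - ad K L (-y)) k = 0 := by
    rw [LinearMap.sub_apply, ad_apply, neg_lie, lie_skew, hy, sub_self]
  by_cases hα : α.IsZero
  · exact killingForm_apply_cartan_eq_zero_of_mem hB h ⟨e, (mem_rootSpace_of_isZero hα).mp he⟩
  · have hrel := weight_apply_mul_killingForm_of_mem hB he h k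
    rw [hBk, map_zero, LinearMap.zero_apply, mul_zero] at hrel
    exact (mul_eq_zero.mp hrel).resolve_left (hk0 α hα)

theorem weight_eq_neg_or_eq_of_forall_mul_eq {α β : Weight K H L} (hα : α.IsNonZero)
    (hβ : β.IsNonZero) (h : ∀ h h' : H, α h' * β h = α h * β h') : α = -β ∨ α = β := by
  obtain ⟨k, hk⟩ : ∃ k, β k ≠ 0 := Function.ne_iff.mp hβ
  refine IsKilling.eq_neg_or_eq_of_eq_smul β α hα (k := α k / β k) (funext fun h' => ?_)
  rw [Pi.smul_apply, smul_eq_mul, div_mul_eq_mul_div, eq_div_iff hk, h]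

theorem weight_add_apply_mul_killingForm_eq_zero (hA : A ∈ adTraceVectorFields K L)
    (hAH : ∀ h : H, A h = 0) {α β : Weight K H L} {x y : L} (hx : x ∈ rootSpace H β)
    (hy : y ∈ rootSpace H α) (h : H) : (α h + β h) * killingForm K L (A x) y = 0 := by
  by_cases hβ : β.IsZero
  · rw [hAH ⟨x, (mem_rootSpace_of_isZero hβ).mp hx⟩, map_zero, LinearMap.zero_apply, mul_zero]
  by_cases hα : α.IsZero
  · rw [killingForm_apply_left_of_mem hA, hAH ⟨y, (mem_rootSpace_of_isZero hα).mp hy⟩, map_zero,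
      neg_zero, mul_zero]
  by_cases hxy : killingForm K L (A x) y = 0
  · rw [hxy, mul_zero]
  have hprop (h h' : H) : α h' * β h = α h * β h' := by
    have hrel := weight_apply_mul_killingForm_of_mem
      ((adTraceVectorFields K L).lie_mem (x := x) hA) hy h h'
    simp only [LieHom.lie_apply, hAH, lie_eq_neg_smul_of_mem_rootSpace hx, lie_zero, zero_sub,
      map_neg, neg_neg, map_smul, LinearMap.smul_apply, smul_eq_mul, ← mul_assoc] at hrel
    exact mul_right_cancel₀ hxy hrel
  rcases weight_eq_neg_or_eq_of_forall_mul_eq hα hβ hprop with rfl | rfl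
  · rw [Weight.coe_neg, Pi.neg_apply, neg_add_cancel, zero_mul]
  -- Root spaces are lines, on which the skew form `(x, y) ↦ κ (A x) y` vanishes.
  refine absurd ?_ hxy
  obtain ⟨e, he⟩ := finrank_eq_one_iff'.mp (IsKilling.finrank_rootSpace_eq_one α hα)
  obtain ⟨c, hc⟩ := he.2 ⟨x, hx⟩
  obtain ⟨d, hd⟩ := he.2 ⟨y, hy⟩
  have hxe : x = c • (e : L) := (congrArg Subtype.val hc).symm
  have hye : y = d • (e : L) := (congrArg Subtype.val hd).symm
  have hee : killingForm K L (A e) e = 0 := by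
    have hskew := killingForm_apply_left_of_mem hA (e : L) e
    rw [traceForm_comm K L L e] at hskew
    linear_combination hskew / 2
  rw [hxe, hye, map_smul, map_smul, map_smul, LinearMap.smul_apply, hee, smul_zero, smul_zero]

theorem lie_eq_zero_of_mem_of_apply_cartan_eq_zero (hA : A ∈ adTraceVectorFields K L)
    (hAH : ∀ h : H, A h = 0) (h : H) : ⁅(h : L), A⁆ = 0 := by
  refine linearMap_ext_rootSpace H fun β x hx => ?_
  refine eq_zero_of_forall_rootSpace_killingForm_eq_zero H fun α y hy => ?_
  have hxh : ⁅(h : L), x⁆ = β h • x := IsKilling.lie_eq_smul_of_mem_rootSpace hx h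
  have hyh : ⁅(h : L), y⁆ = α h • y := IsKilling.lie_eq_smul_of_mem_rootSpace hy h
  rw [LieHom.lie_apply, map_sub, LinearMap.sub_apply, traceForm_apply_lie_apply', hyh, hxh,
    map_smul, map_smul, map_smul, LinearMap.smul_apply, smul_eq_mul, smul_eq_mul]
  linear_combination -weight_add_apply_mul_killingForm_eq_zero hA hAH hx hy h

theorem exists_lie_cartan_eq_ad_of_mem (hA : A ∈ adTraceVectorFields K L) (h : H) :
    ∃ z : L, ⁅(h : L), A⁆ = ad K L z := by
  obtain ⟨z, hz⟩ := exists_sub_ad_apply_cartan_eq_zero_of_mem H hA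
  have hzero := lie_eq_zero_of_mem_of_apply_cartan_eq_zero
    (sub_mem hA (ad_mem_adTraceVectorFields z)) hz h
  exact ⟨⁅(h : L), z⁆, by rw [← lie_ad, ← sub_eq_zero, ← lie_sub, hzero]⟩

end CartanReduction

section Schur

variable {K L M : Type*} [Field K] [IsAlgClosed K] [LieRing L] [LieAlgebra K L] [AddCommGroup M]
  [Module K M] [FiniteDimensional K M] [LieRingModule L M] [LieModule K L M]
  [LieModule.IsIrreducible K L M]

variable (L) in
theorem exists_eq_smul_one_of_forall_lie_eq_zero {B : Module.End K M} (hB : ∀ x : L, ⁅x, B⁆ = 0) :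
    ∃ c : K, B = c • (1 : Module.End K M) := by
  have : Nontrivial M := LieModule.nontrivial_of_isIrreducible K L M
  obtain ⟨c, hc⟩ := Module.End.exists_eigenvalue B
  let N : LieSubmodule K L M :=
    { Module.End.eigenspace B c with
      lie_mem := fun {x m} hm => by
        have hm' : B m = c • m := Module.End.mem_eigenspace_iff.mp hm
        have hxm : ⁅x, B m⁆ = B ⁅x, m⁆ := by
          rw [← sub_eq_zero, ← LieHom.lie_apply, hB, LinearMap.zero_apply]
        exact Module.End.mem_eigenspace_iff.mpr (by rw [← hxm, hm', lie_smul]) }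
  have hN : N ≠ ⊥ := by
    obtain ⟨v, hv⟩ := hc.exists_hasEigenvector
    exact fun hbot => hv.2 ((LieSubmodule.eq_bot_iff N).mp hbot v hv.1)
  have htop : N = ⊤ := (eq_bot_or_eq_top N).resolve_left hN
  refine ⟨c, LinearMap.ext fun m => Module.End.mem_eigenspace_iff.mp (?_ : m ∈ N)⟩
  exact htop ▸ LieSubmodule.mem_top m

end Schur

section AdTraceVectorFields

attribute [local instance] LieRing.ofAssociativeRing

variable {K L : Type*} [Field K] [LieRing L] [LieAlgebra K L]

theorem ad_injective [HasTrivialRadical K L] : Function.Injective (ad K L) :=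
  (LieHom.ker_eq_bot _).mp (ad_ker_eq_bot_of_hasTrivialRadical K L)

theorem exists_forall_lie_sub_ad_eq_zero [FiniteDimensional K L] [IsKilling K L]
    {A : Module.End K L} (hA : ∀ x : L, ⁅x, A⁆ ∈ (ad K L).range) :
    ∃ w : L, ∀ x : L, ⁅x, A - ad K L w⁆ = 0 := by
  have hinj : Function.Injective (ad K L) := ad_injective
  choose D hD using hA
  replace hD (x : L) : ⁅x, A⁆ = ad K L (D x) := (hD x).symm
  let D' : LieDerivation K L L :=
    { toFun := D
      map_add' x y := hinj (by rw [map_add, ← hD, ← hD, ← hD, add_lie])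
      map_smul' c x := hinj (by rw [RingHom.id_apply, map_smul, ← hD, ← hD, smul_lie])
      leibniz' x y := hinj (by
        change ad K L (D ⁅x, y⁆) = ad K L (⁅x, D y⁆ - ⁅y, D x⁆)
        rw [map_sub, ← lie_ad, ← lie_ad, ← hD, ← hD, ← hD, lie_lie]) }
  obtain ⟨w, hw⟩ := LieDerivation.IsKilling.exists_eq_ad D'
  refine ⟨-w, fun x => ?_⟩
  have hwx : D x = ⁅w, x⁆ := (LieDerivation.congr_fun hw x).symm.trans
    (LieDerivation.ad_apply_apply K L w x)
  rw [map_neg, sub_neg_eq_add, lie_add, hD, lie_ad, hwx, ← map_add, ← lie_skew, neg_add_cancel,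
    map_zero]

variable [CharZero K]

variable (K L) in
/-- The kernel of the action of `L` on the quotient module `adTraceVectorFields K L / ad L`. -/
def adTraceVectorFieldsQuotientKer : LieIdeal K L where
  carrier := {x | ∀ A ∈ adTraceVectorFields K L, ⁅x, A⁆ ∈ (ad K L).range}
  zero_mem' A _ := by simp
  add_mem' {x y} hx hy A hA := by
    rw [add_lie]
    exact add_mem (hx A hA) (hy A hA)
  smul_mem' c x hx A hA := by
    rw [smul_lie]
    exact SMulMemClass.smul_mem c (hx A hA)
  lie_mem {y x} hx A hA := by
    obtain ⟨z, hz⟩ := hx A hA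
    have hzA : ⁅x, A⁆ = ad K L z := hz.symm
    rw [lie_lie, hzA, lie_ad]
    exact sub_mem ⟨⁅y, z⁆, rfl⟩ (hx _ ((adTraceVectorFields K L).lie_mem hA))

theorem exists_killingForm_ne_zero [FiniteDimensional K L] [IsSimple K L] :
    ∃ x y : L, killingForm K L x y ≠ 0 := by
  have : Nontrivial L := LieModule.nontrivial_of_isIrreducible K L L
  obtain ⟨x, hx⟩ := exists_ne (0 : L)
  by_contra! hzero
  exact hx (eq_zero_of_forall_killingForm_eq_zero (hzero x))

variable [IsAlgClosed K] [FiniteDimensional K L] [IsSimple K L]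

theorem adTraceVectorFieldsQuotientKer_eq_top : adTraceVectorFieldsQuotientKer K L = ⊤ := by
  obtain ⟨x, _⟩ := exists_isCartanSubalgebra_engel K L
  have : Nontrivial L := LieModule.nontrivial_of_isIrreducible K L L
  obtain ⟨h, hh, h0⟩ : ∃ h ∈ LieSubalgebra.engel K x, h ≠ 0 := by
    by_contra! hbot
    exact cartan_ne_bot (LieSubalgebra.engel K x) ((LieSubalgebra.eq_bot_iff _).mpr hbot)
  have hker : h ∈ adTraceVectorFieldsQuotientKer K L := fun A hA => by
    obtain ⟨z, hz⟩ := exists_lie_cartan_eq_ad_of_mem hA ⟨h, hh⟩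
    exact ⟨z, hz.symm⟩
  exact (eq_bot_or_eq_top _).resolve_left fun hbot =>
    h0 ((LieSubmodule.eq_bot_iff _).mp hbot h hker)

theorem exists_eq_ad_of_mem_adTraceVectorFields {A : Module.End K L}
    (hA : A ∈ adTraceVectorFields K L) : ∃ w : L, A = ad K L w := by
  have hker (x : L) : x ∈ adTraceVectorFieldsQuotientKer K L :=
    adTraceVectorFieldsQuotientKer_eq_top (K := K) (L := L) ▸ LieSubmodule.mem_top x
  obtain ⟨w, hw⟩ := exists_forall_lie_sub_ad_eq_zero fun x => hker x A hA
  obtain ⟨c, hc⟩ := exists_eq_smul_one_of_forall_lie_eq_zero L hw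
  have hmem : c • (1 : Module.End K L) ∈ adTraceVectorFields K L :=
    hc ▸ sub_mem hA (ad_mem_adTraceVectorFields w)
  obtain ⟨x, y, hxy⟩ := exists_killingForm_ne_zero (K := K) (L := L)
  have hskew := killingForm_apply_left_of_mem hmem x y
  simp only [LinearMap.smul_apply, Module.End.one_apply, map_smul, smul_eq_mul] at hskew
  have hc0 : c = 0 := by
    have hcxy : c * killingForm K L x y = 0 := by linear_combination hskew / 2
    exact (mul_eq_zero.mp hcxy).resolve_right hxy
  exact ⟨w, sub_eq_zero.mp (by rw [hc, hc0, zero_smul])⟩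

variable {φ : L ≃ₗ[K] L}

theorem PreservesAdTraces.map_lieConj_range_ad (hφ : PreservesAdTraces φ) :
    (ad K L).range.map φ.lieConj = (ad K L).range := by
  have hle {ψ : L ≃ₗ[K] L} (hψ : PreservesAdTraces ψ) (y : L) :
      ψ.lieConj (ad K L y) ∈ (ad K L).range := by
    obtain ⟨w, hw⟩ := exists_eq_ad_of_mem_adTraceVectorFields
      (hψ.lieConj_mem (ad_mem_adTraceVectorFields y))
    exact ⟨w, hw.symm⟩
  apply le_antisymm
  · rintro - ⟨-, ⟨y, rfl⟩, rfl⟩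
    exact hle hφ y
  · rintro - ⟨y, rfl⟩
    exact ⟨_, hle hφ.symm y, LinearEquiv.apply_symm_apply φ.conj _⟩

theorem PreservesAdTraces.exists_lieEquiv (hφ : PreservesAdTraces φ) :
    ∃ σ : L ≃ₗ⁅K⁆ L, ∀ x y, φ ⁅x, y⁆ = ⁅σ x, φ y⁆ := by
  let adEquiv := LieEquiv.ofInjective (ad K L) ad_injective
  let σ := (adEquiv.trans (φ.lieConj.ofSubalgebras _ _ hφ.map_lieConj_range_ad)).trans adEquiv.symm
  have hσ (x : L) : ad K L (σ x) = φ.lieConj (ad K L x) :=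
    congrArg Subtype.val (adEquiv.apply_symm_apply _)
  refine ⟨σ, fun x y => ?_⟩
  have hxy : ⁅σ x, φ y⁆ = φ.lieConj (ad K L x) (φ y) := LinearMap.congr_fun (hσ x) (φ y)
  simp [hxy, LinearEquiv.conj_apply]

theorem PreservesAdTraces.exists_eq_smul_lieEquiv (hφ : PreservesAdTraces φ) :
    ∃ (c : K) (σ : L ≃ₗ⁅K⁆ L), ∀ x, φ x = c • σ x := by
  obtain ⟨σ, hσ⟩ := hφ.exists_lieEquiv
  obtain ⟨c, hc⟩ := exists_eq_smul_one_of_forall_lie_eq_zero L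
    (B := (φ.trans σ.symm.toLinearEquiv : L →ₗ[K] L)) fun x => by
      ext y
      have hxy : ⁅x, σ.symm (φ y)⁆ = σ.symm ⁅σ x, φ y⁆ := by
        rw [LieEquiv.map_lie, LieEquiv.symm_apply_apply]
      simp [LieHom.lie_apply, hσ, hxy]
  refine ⟨c, σ, fun x => ?_⟩
  have hx : σ.symm (φ x) = c • x := LinearMap.congr_fun hc x
  rw [← map_smul, ← hx, LieEquiv.apply_symm_apply]

theorem PreservesAdTraces.exists_mem_lieAut_eq_or_eq_neg_mul (hφ : PreservesAdTraces φ) :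
    ∃ σ ∈ lieAut K L, φ = σ ∨ φ = LinearEquiv.neg K * σ := by
  obtain ⟨c, σ, hσ⟩ := hφ.exists_eq_smul_lieEquiv
  obtain ⟨x, y, hxy⟩ := exists_killingForm_ne_zero (K := K) (L := L)
  have hκ := hφ.killingForm_apply x y
  rw [hσ, hσ, map_smul, map_smul, LinearMap.smul_apply, killingForm_of_equiv_apply] at hκ
  have hc : c * c = 1 := mul_right_cancel₀ hxy (by simpa [mul_assoc] using hκ)
  refine ⟨σ.toLinearEquiv, toLinearEquiv_mem_lieAut σ, ?_⟩
  rcases mul_self_eq_one_iff.mp hc with rfl | rfl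
  · exact .inl (LinearEquiv.ext fun x => by simp [hσ])
  · exact .inr (LinearEquiv.ext fun x => by simp [hσ])

end AdTraceVectorFields

section Chart

open Filter Topology

theorem exists_differentiableAt_rightInverse_of_surjective {𝕜 E F : Type*} [RCLike 𝕜]
    [NormedAddCommGroup E] [NormedSpace 𝕜 E] [NormedAddCommGroup F] [NormedSpace 𝕜 F]
    [FiniteDimensional 𝕜 F] {f : E → F} {f' : E →L[𝕜] F} {a : E} (hf : HasStrictFDerivAt f f' a)
    (hsurj : Function.Surjective f') :
    ∃ r : F → E, DifferentiableAt 𝕜 r (f a) ∧ r (f a) = a ∧ ∀ᶠ y in 𝓝 (f a), f (r y) = y := by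
  have : CompleteSpace F := FiniteDimensional.complete 𝕜 F
  obtain ⟨s, hs⟩ := f'.exists_rightInverse_of_surjective (LinearMap.range_eq_top.mpr hsurj)
  let j : F → E := fun y => a + s y
  have hj0 : j 0 = a := by simp [j]
  have hj : HasStrictFDerivAt j s 0 := s.hasStrictFDerivAt.const_add a
  have hfj : HasStrictFDerivAt (f ∘ j) (ContinuousLinearEquiv.refl 𝕜 F : F →L[𝕜] F) 0 := by
    rw [← hj0] at hf
    exact (hf.comp 0 hj).congr_fderiv hs
  have himage : (f ∘ j) 0 = f a := congrArg f hj0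
  have hinv0 : hfj.localInverse (f ∘ j) _ 0 (f a) = 0 := himage ▸ hfj.localInverse_apply_image
  refine ⟨j ∘ hfj.localInverse, ?_, ?_, himage ▸ hfj.eventually_right_inverse⟩
  · refine DifferentiableAt.comp _ ?_ (himage ▸ hfj.to_localInverse.hasFDerivAt.differentiableAt)
    rw [hinv0]
    exact hj.hasFDerivAt.differentiableAt
  · rw [Function.comp_apply, hinv0, hj0]

theorem hasStrictFDerivAt_list_prod_of_apply_zero_eq_one {𝕜 𝔸 ι : Type*}
    [NontriviallyNormedField 𝕜] [NormedRing 𝔸] [NormedAlgebra 𝕜 𝔸] [Finite ι] {E : ι → 𝕜 → 𝔸}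
    {N : ι → 𝔸} (hE : ∀ i, HasStrictDerivAt (E i) (N i) 0) (hE0 : ∀ i, E i 0 = 1) (l : List ι) :
    HasStrictFDerivAt (fun s : ι → 𝕜 => (l.map fun i => E i (s i)).prod)
      (l.map fun i => (ContinuousLinearMap.proj (R := 𝕜) (φ := fun _ : ι => 𝕜) i).smulRight
        (N i)).sum 0 := by
  have := Fintype.ofFinite ι
  have hE' (i : ι) : HasStrictFDerivAt (fun s : ι → 𝕜 => E i (s i))
      ((ContinuousLinearMap.proj (R := 𝕜) (φ := fun _ : ι => 𝕜) i).smulRight (N i)) 0 :=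
    ((hE i).hasStrictFDerivAt.comp (0 : ι → 𝕜)
      (ContinuousLinearMap.proj (R := 𝕜) (φ := fun _ : ι => 𝕜) i).hasStrictFDerivAt).congr_fderiv
        (by ext s; simp)
  induction l with
  | nil => simpa using hasStrictFDerivAt_const (1 : 𝔸) (0 : ι → 𝕜)
  | cons i l ih =>
    simp only [List.map_cons, List.prod_cons, List.sum_cons]
    refine ((hE' i).mul' ih).congr_fderiv ?_
    have hl : (l.map fun j => E j ((0 : ι → 𝕜) j)).prod = 1 :=
      List.prod_eq_one (by simp [hE0])
    rw [hl, Pi.zero_apply, hE0, one_smul, MulOpposite.op_one, one_smul, add_comm]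

variable {V : Type*} [NormedAddCommGroup V] [NormedSpace ℂ V] [FiniteDimensional ℂ V]

theorem exp_toContinuousLinearMap_of_isNilpotent {A : Module.End ℂ V} (hA : IsNilpotent A) :
    NormedSpace.exp (Module.End.toContinuousLinearMap V A) =
      Module.End.toContinuousLinearMap V (endExp A) := by
  rw [NormedSpace.exp_eq_tsum ℂ, endExp, map_sum]
  simp only [map_smul, map_pow]
  refine tsum_eq_sum fun k hk => ?_
  have hdim : Module.finrank ℂ V ≤ k := by
    rw [Finset.mem_range] at hk
    omega
  rw [← map_pow, pow_eq_zero_of_isNilpotent_of_finrank_le hA hdim, map_zero, smul_zero]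

theorem exists_chart_of_surjective {ι : Type*} [Fintype ι] (C : Submodule ℂ V) (N : ι → V →L[ℂ] V)
    (h₀ : C) (hsurj : ∀ x : V, ∃ (q : ι → ℂ) (c : C), (c : V) + ∑ i, q i • N i h₀ = x) (v : V) :
    ∃ (a : ℂ → ι → ℂ) (b : ℂ → C), DifferentiableAt ℂ b 0 ∧ b 0 = h₀ ∧ ∀ᶠ s in 𝓝 (0 : ℂ),
      (Finset.univ.toList.map fun i => NormedSpace.exp (a s i • N i)).prod (b s) =
        (h₀ : V) + s • v := by
  have : CompleteSpace V := FiniteDimensional.complete ℂ V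
  have hexp := hasStrictFDerivAt_list_prod_of_apply_zero_eq_one (𝕜 := ℂ)
    (E := fun i c => NormedSpace.exp (c • N i)) (N := N)
    (fun i => by simpa using hasStrictDerivAt_exp_smul_const (N i) (0 : ℂ)) (by simp)
    Finset.univ.toList
  have hderiv := (hexp.comp ((0 : ι → ℂ), h₀) (hasStrictFDerivAt_fst (𝕜 := ℂ))).clm_apply
    (C.subtypeL.hasStrictFDerivAt.comp ((0 : ι → ℂ), h₀) (hasStrictFDerivAt_snd (𝕜 := ℂ)))
  obtain ⟨r, hr, hr0, hfr⟩ := exists_differentiableAt_rightInverse_of_surjective hderiv fun x => by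
    obtain ⟨q, c, rfl⟩ := hsurj x
    exact ⟨(q, c), by simp⟩
  have hbase : (Finset.univ.toList.map fun i => NormedSpace.exp ((0 : ι → ℂ) i • N i)).prod
      (C.subtypeL h₀) = (h₀ : V) + (0 : ℂ) • v := by simp
  rw [hbase] at hr hr0 hfr
  have hline : DifferentiableAt ℂ (fun s : ℂ => (h₀ : V) + s • v) 0 := by fun_prop
  exact ⟨fun s => (r (h₀ + s • v)).1, fun s => (r (h₀ + s • v)).2, (hr.comp 0 hline).snd,
    congrArg Prod.snd hr0, hline.continuousAt.eventually hfr⟩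

end Chart

section LieChart

open Filter Topology LieModule

variable {g : Type*} [LieRing g] [LieAlgebra ℂ g] [FiniteDimensional ℂ g] [IsKilling ℂ g]
  {H : LieSubalgebra ℂ g} [H.IsCartanSubalgebra]

theorem exists_add_sum_lie_eq {h₀ : H} (hh₀ : ∀ α : Weight ℂ H g, α.IsNonZero → α h₀ ≠ 0)
    [Fintype {α : Weight ℂ H g // α.IsNonZero}] {e : {α : Weight ℂ H g // α.IsNonZero} → g}
    (he : ∀ i, e i ∈ rootSpace H i.1) (he0 : ∀ i, e i ≠ 0) (x : g) :
    ∃ (q : {α : Weight ℂ H g // α.IsNonZero} → ℂ) (c : H.toSubmodule),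
      (c : g) + ∑ i, q i • ad ℂ g (e i) h₀ = x := by
  let F : ({α : Weight ℂ H g // α.IsNonZero} → ℂ) × H.toSubmodule →ₗ[ℂ] g :=
    (Fintype.linearCombination ℂ fun i => ad ℂ g (e i) h₀).comp (LinearMap.fst ℂ _ _) +
      H.toSubmodule.subtype.comp (LinearMap.snd ℂ _ _)
  have hF : LinearMap.range F = ⊤ := by
    refine eq_top_of_rootSpace_le (H := H) fun α y hy => ?_
    by_cases hα : α.IsZero
    · exact ⟨(0, ⟨y, (mem_rootSpace_of_isZero hα).mp hy⟩), by simp [F]⟩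
    · classical
      let i : {α : Weight ℂ H g // α.IsNonZero} := ⟨α, hα⟩
      obtain ⟨c, hcy⟩ := exists_smul_eq_of_mem_rootSpace hα (he i) (he0 i) hy
      refine ⟨(Pi.single i (-(c * (α h₀)⁻¹)), 0), ?_⟩
      simp [F, Fintype.linearCombination_apply_single, lie_eq_neg_smul_of_mem_rootSpace (he i),
        smul_smul, i, hh₀ α hα, ← hcy]
  obtain ⟨⟨q, c⟩, rfl⟩ := LinearMap.range_eq_top.mp hF x
  exact ⟨q, c, by simp [F, Fintype.linearCombination_apply, add_comm]⟩

theorem exists_adjointGroup_chart {h₀ : H} (hh₀ : ∀ α : Weight ℂ H g, α.IsNonZero → α h₀ ≠ 0)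
    (v : g) :
    ∃ (u : ℂ → g ≃ₗ[ℂ] g) (b : ℂ → H), b 0 = h₀ ∧ (∀ s, u s ∈ adjointGroup g) ∧
      (∀ᶠ s in 𝓝 (0 : ℂ), u s (b s) = h₀ + s • v) ∧
      ∀ l : H →ₗ[ℂ] ℂ, DifferentiableAt ℂ (fun s => l (b s)) 0 := by
  let ι := {α : Weight ℂ H g // α.IsNonZero}
  let _ : Fintype ι := Fintype.ofFinite ι
  choose e he he0 using fun i : ι => i.1.exists_ne_zero
  have hnil (i : ι) (c : ℂ) : IsNilpotent (ad ℂ g (c • e i)) :=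
    isNilpotent_ad_of_mem_rootSpace H i.2 ((rootSpace H i.1).smul_mem c (he i))
  choose w hw hwe using fun (i : ι) (c : ℂ) => exists_mem_adjointGroup_eq_endExp (hnil i c)
  let coords := (Module.finBasis ℂ g).equivFun
  let _ : NormedAddCommGroup g := NormedAddCommGroup.induced g (Fin _ → ℂ) coords coords.injective
  let _ : NormedSpace ℂ g := NormedSpace.induced ℂ g (Fin _ → ℂ) coords
  let T := Module.End.toContinuousLinearMap (𝕜 := ℂ) g
  obtain ⟨a, b, hb, hb0, hab⟩ := exists_chart_of_surjective H.toSubmodule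
    (fun i => T (ad ℂ g (e i))) h₀ (exists_add_sum_lie_eq hh₀ he he0) v
  have hexp (i : ι) (c : ℂ) : NormedSpace.exp (c • T (ad ℂ g (e i))) = T (w i c) := by
    rw [← map_smul, ← map_smul, exp_toContinuousLinearMap_of_isNilpotent (hnil i c), hwe]
  refine ⟨fun s => (Finset.univ.toList.map fun i => w i (a s i)).prod, b, hb0, fun s => ?_, ?_,
    fun l => l.toContinuousLinearMap.differentiableAt.comp 0 hb⟩
  · refine Subgroup.list_prod_mem _ fun y hy => ?_
    obtain ⟨i, -, rfl⟩ := List.mem_map.mp hy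
    exact hw i _
  · filter_upwards [hab] with s hs
    let toEnd : (g ≃ₗ[ℂ] g) →* (g →L[ℂ] g) :=
      (T : Module.End ℂ g →* (g →L[ℂ] g)).comp LinearEquiv.automorphismGroup.toLinearMapMonoidHom
    have hprod := map_list_prod toEnd (Finset.univ.toList.map fun i => w i (a s i))
    rw [List.map_map] at hprod
    rw [← hs]
    simp only [hexp]
    exact congrArg (fun A : g →L[ℂ] g => A (b s)) hprod

end LieChart

section PolynomialFunctions

variable {V W : Type*} [AddCommGroup V] [Module ℂ V] [AddCommGroup W] [Module ℂ W]

theorem isPolyFun_linear (l : V →ₗ[ℂ] ℂ) : IsPolyFun (fun x => l x) :=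
  Algebra.subset_adjoin ⟨l, rfl⟩

theorem isPolyFun_const (c : ℂ) : IsPolyFun (fun _ : V => c) :=
  Subalgebra.algebraMap_mem _ c

theorem IsPolyFun.add {f₁ f₂ : V → ℂ} (h₁ : IsPolyFun f₁) (h₂ : IsPolyFun f₂) :
    IsPolyFun (fun x => f₁ x + f₂ x) :=
  Subalgebra.add_mem _ h₁ h₂

theorem IsPolyFun.mul {f₁ f₂ : V → ℂ} (h₁ : IsPolyFun f₁) (h₂ : IsPolyFun f₂) :
    IsPolyFun (fun x => f₁ x * f₂ x) :=
  Subalgebra.mul_mem _ h₁ h₂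

theorem isPolyFun_sum {ι : Type*} (s : Finset ι) {f : ι → V → ℂ} (hf : ∀ i ∈ s, IsPolyFun (f i)) :
    IsPolyFun (fun x => ∑ i ∈ s, f i x) := by
  simpa only [IsPolyFun, Finset.sum_fn] using Subalgebra.sum_mem _ hf

theorem isPolyFun_prod {ι : Type*} (s : Finset ι) {f : ι → V → ℂ} (hf : ∀ i ∈ s, IsPolyFun (f i)) :
    IsPolyFun (fun x => ∏ i ∈ s, f i x) := by
  simpa only [IsPolyFun, Finset.prod_fn] using Subalgebra.prod_mem _ hf

theorem IsPolyFun.polynomial_eval {f : V → ℂ} (hf : IsPolyFun f) (P : Polynomial ℂ) :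
    IsPolyFun (fun x => P.eval (f x)) := by
  have heval : (fun x => P.eval (f x)) = Polynomial.aeval f P := by
    ext x
    rw [Polynomial.aeval_fn_apply, Polynomial.coe_aeval_eq_eval]
  rw [IsPolyFun, heval]
  exact Algebra.adjoin_le (Set.singleton_subset_iff.mpr hf)
    (Polynomial.aeval_mem_adjoin_singleton ℂ f)

theorem isPolyFun_mvPolynomial_eval {ι : Type*} (l : ι → V →ₗ[ℂ] ℂ) (p : MvPolynomial ι ℂ) :
    IsPolyFun (fun x => MvPolynomial.eval (fun i => l i x) p) := by
  induction p using MvPolynomial.induction_on with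
  | C a => simpa using isPolyFun_const a
  | add p q hp hq => simpa using hp.add hq
  | mul_X p i hp => simpa using hp.mul (isPolyFun_linear (l i))

theorem IsPolyFun.comp_linearMap {f : V → ℂ} (hf : IsPolyFun f) (A : W →ₗ[ℂ] V) :
    IsPolyFun (fun x => f (A x)) := by
  unfold IsPolyFun at hf
  induction hf using Algebra.adjoin_induction with
  | mem f hf =>
    obtain ⟨l, rfl⟩ := hf
    exact isPolyFun_linear (l ∘ₗ A)
  | algebraMap c => exact isPolyFun_const c
  | add _ _ _ _ h₁ h₂ => exact h₁.add h₂
  | mul _ _ _ _ h₁ h₂ => exact h₁.mul h₂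

theorem isPolyFun_trace_pow [FiniteDimensional ℂ W] (φ : V →ₗ[ℂ] Module.End ℂ W) (k : ℕ) :
    IsPolyFun (fun x => LinearMap.trace ℂ W (φ x ^ k)) := by
  let b := Module.finBasis ℂ W
  have hentry (k : ℕ) (i j) : IsPolyFun fun x => (LinearMap.toMatrix b b (φ x) ^ k) i j := by
    induction k generalizing i with
    | zero => simpa using isPolyFun_const (V := V) ((1 : Matrix _ _ ℂ) i j)
    | succ k ih =>
      simp only [pow_succ', Matrix.mul_apply]
      exact isPolyFun_sum _ fun m _ => (isPolyFun_linear ((Matrix.entryLinearMap ℂ ℂ i m).comp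
        ((LinearMap.toMatrix b b).toLinearMap.comp φ))).mul (ih m)
  simp only [LinearMap.trace_eq_matrix_trace ℂ b, ← LinearMap.toMatrix_pow, Matrix.trace,
    Matrix.diag_apply]
  exact isPolyFun_sum _ fun i _ => hentry k i i

theorem isPolyFun_charpoly_coeff [FiniteDimensional ℂ V] [FiniteDimensional ℂ W]
    (φ : V →ₗ[ℂ] Module.End ℂ W) (k : ℕ) : IsPolyFun (fun x => (φ x).charpoly.coeff k) := by
  let b := Module.finBasis ℂ V
  simp only [← LinearMap.polyCharpoly_coeff_eval φ b]
  exact isPolyFun_mvPolynomial_eval b.coord _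

theorem IsPolyFun.exists_natDegree_le_forall_line {f : V → ℂ} (hf : IsPolyFun f) :
    ∃ D : ℕ, ∀ x v : V, ∃ P : Polynomial ℂ, P.natDegree ≤ D ∧
      ∀ s : ℂ, f (x + s • v) = P.eval s := by
  unfold IsPolyFun at hf
  induction hf using Algebra.adjoin_induction with
  | mem f hf =>
    obtain ⟨l, rfl⟩ := hf
    exact ⟨1, fun x v => ⟨Polynomial.C (l v) * Polynomial.X + Polynomial.C (l x),
      Polynomial.natDegree_linear_le, fun s => by simp; ring⟩⟩
  | algebraMap c => exact ⟨0, fun x v => ⟨Polynomial.C c, by simp, fun s => by simp⟩⟩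
  | add f₁ f₂ _ _ h₁ h₂ =>
    obtain ⟨D₁, h₁⟩ := h₁
    obtain ⟨D₂, h₂⟩ := h₂
    refine ⟨max D₁ D₂, fun x v => ?_⟩
    obtain ⟨P₁, hd₁, hP₁⟩ := h₁ x v
    obtain ⟨P₂, hd₂, hP₂⟩ := h₂ x v
    exact ⟨P₁ + P₂, (Polynomial.natDegree_add_le _ _).trans (max_le_max hd₁ hd₂),
      fun s => by simp [hP₁, hP₂]⟩
  | mul f₁ f₂ _ _ h₁ h₂ =>
    obtain ⟨D₁, h₁⟩ := h₁
    obtain ⟨D₂, h₂⟩ := h₂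
    refine ⟨D₁ + D₂, fun x v => ?_⟩
    obtain ⟨P₁, hd₁, hP₁⟩ := h₁ x v
    obtain ⟨P₂, hd₂, hP₂⟩ := h₂ x v
    exact ⟨P₁ * P₂, Polynomial.natDegree_mul_le.trans (add_le_add hd₁ hd₂),
      fun s => by simp [hP₁, hP₂]⟩

theorem IsPolyFun.exists_polynomial_line {f : V → ℂ} (hf : IsPolyFun f) (x v : V) :
    ∃ P : Polynomial ℂ, ∀ s : ℂ, f (x + s • v) = P.eval s :=
  let ⟨_, hD⟩ := hf.exists_natDegree_le_forall_line
  let ⟨P, _, hP⟩ := hD x v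
  ⟨P, hP⟩

theorem IsPolyFun.finite_setOf_line_eq_zero {f : V → ℂ} (hf : IsPolyFun f) {x v : V}
    (h : ∃ s : ℂ, f (x + s • v) ≠ 0) : {s : ℂ | f (x + s • v) = 0}.Finite := by
  obtain ⟨P, hP⟩ := hf.exists_polynomial_line x v
  have hP0 : P ≠ 0 := by
    rintro rfl
    obtain ⟨s, hs⟩ := h
    exact hs (by rw [hP, Polynomial.eval_zero])
  refine P.rootSet_finite ℂ |>.subset fun s hs => ?_
  rw [Polynomial.mem_rootSet]
  exact ⟨hP0, by rw [Polynomial.coe_aeval_eq_eval, ← hP, hs]⟩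

theorem polynomial_eval_eq_sum_lagrangeBasis {P : Polynomial ℂ} {D : ℕ} (hP : P.natDegree ≤ D)
    (s : ℂ) : P.eval s = ∑ j ∈ Finset.range (D + 1),
      P.eval (j : ℂ) * (Lagrange.basis (Finset.range (D + 1)) Nat.cast j).eval s := by
  have hinj : Set.InjOn (Nat.cast : ℕ → ℂ) (Finset.range (D + 1)) := Nat.cast_injective.injOn
  have hdeg : P.degree < (Finset.range (D + 1)).card := by
    rw [Finset.card_range]
    exact Polynomial.degree_lt_iff_coeff_zero _ _ |>.mpr fun m hm =>
      Polynomial.coeff_eq_zero_of_natDegree_lt (by omega)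
  conv_lhs => rw [Lagrange.eq_interpolate hinj hdeg, Lagrange.interpolate_apply]
  simp [Polynomial.eval_finsetSum]

theorem isPolyFun_add_sum_smul_of_forall_line {f : V → ℂ} {D : ℕ}
    (h : ∀ x v : V, ∃ P : Polynomial ℂ, P.natDegree ≤ D ∧ ∀ s : ℂ, f (x + s • v) = P.eval s)
    (k : ℕ) (v : Fin k → V) (x : V) :
    IsPolyFun (fun s : Fin k → ℂ => f (x + ∑ i, s i • v i)) := by
  induction k generalizing x with
  | zero => simpa using isPolyFun_const (f x)
  | succ k ih =>
    let tail : (Fin (k + 1) → ℂ) →ₗ[ℂ] (Fin k → ℂ) := LinearMap.funLeft ℂ ℂ Fin.succ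
    let T := Finset.range (D + 1)
    have hlagrange (s : Fin (k + 1) → ℂ) : f (x + ∑ i, s i • v i) = ∑ j ∈ T,
        f ((x + (j : ℂ) • v 0) + ∑ i, tail s i • v i.succ) *
          (Lagrange.basis T (Nat.cast : ℕ → ℂ) j).eval (s 0) := by
      obtain ⟨P, hPd, hP⟩ := h (x + ∑ i, tail s i • v i.succ) (v 0)
      have hsplit : x + ∑ i, s i • v i = (x + ∑ i, tail s i • v i.succ) + s 0 • v 0 := by
        rw [Fin.sum_univ_succ]
        simp only [tail, LinearMap.funLeft_apply]
        abel
      rw [hsplit, hP, polynomial_eval_eq_sum_lagrangeBasis hPd]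
      refine Finset.sum_congr rfl fun j _ => ?_
      rw [← hP, add_right_comm]
    simp only [hlagrange]
    exact isPolyFun_sum _ fun j _ => ((ih (fun i => v i.succ) _).comp_linearMap tail).mul
      ((isPolyFun_linear (LinearMap.proj (φ := fun _ : Fin (k + 1) => ℂ) 0)).polynomial_eval _)

theorem isPolyFun_of_forall_line [FiniteDimensional ℂ V] {f : V → ℂ} {D : ℕ}
    (h : ∀ x v : V, ∃ P : Polynomial ℂ, P.natDegree ≤ D ∧ ∀ s : ℂ, f (x + s • v) = P.eval s) :
    IsPolyFun f := by
  let b := Module.finBasis ℂ V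
  convert (isPolyFun_add_sum_smul_of_forall_line h _ b 0).comp_linearMap b.equivFun.toLinearMap
    using 2 with x
  rw [zero_add]
  exact congrArg f (b.sum_equivFun x).symm

end PolynomialFunctions

section RegularElements

attribute [local instance] LieRing.ofAssociativeRing

open Module Pointwise

variable {K L : Type*} [Field K] [LieRing L] [LieAlgebra K L] {x y : L}

theorem mem_engel_apply_iff_of_mem_lieAut {u : L ≃ₗ[K] L} (hu : u ∈ lieAut K L) {z : L} :
    u z ∈ LieSubalgebra.engel K (u x) ↔ z ∈ LieSubalgebra.engel K x := by
  simp only [LieSubalgebra.mem_engel_iff, ad_apply_of_mem_lieAut hu, ← linearEquiv_conj_pow,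
    LinearEquiv.conj_apply_apply, u.symm_apply_apply, u.map_eq_zero_iff]

theorem smul_engel_of_mem_lieAut {u : L ≃ₗ[K] L} (hu : u ∈ lieAut K L) (x : L) :
    u • (LieSubalgebra.engel K x).toSubmodule = (LieSubalgebra.engel K (u x)).toSubmodule := by
  ext z
  obtain ⟨z, rfl⟩ := u.surjective z
  rw [LieSubalgebra.mem_toSubmodule, mem_engel_apply_iff_of_mem_lieAut hu]
  exact Set.smul_mem_smul_set_iff

variable [FiniteDimensional K L]

theorem engel_eq_of_engel_le_of_isRegular (hx : IsRegular K x)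
    (h : LieSubalgebra.engel K y ≤ LieSubalgebra.engel K x) :
    LieSubalgebra.engel K y = LieSubalgebra.engel K x := by
  refine LieSubalgebra.toSubmodule_injective (Submodule.eq_of_le_of_finrank_le h ?_)
  exact ((isRegular_iff_finrank_engel_eq_rank K x).mp hx).le.trans (rank_le_finrank_engel K y)

theorem isCartanSubalgebra_engel_of_isRegular [Infinite K] (hx : IsRegular K x) :
    (LieSubalgebra.engel K x).IsCartanSubalgebra := by
  have hcard : (finrank K L : Cardinal) ≤ Cardinal.mk K :=
    Cardinal.natCast_le_aleph0.trans (Cardinal.infinite_iff.mp inferInstance)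
  have hbot := engel_isBot_of_isMin hcard (LieSubalgebra.engel K x)
    ⟨_, x, LieSubalgebra.self_mem_engel K x, rfl⟩ le_rfl <| by
      rintro ⟨_, y, _, rfl⟩ hyx
      exact (engel_eq_of_engel_le_of_isRegular hx hyx).ge
  exact ⟨LieSubalgebra.isNilpotent_of_forall_le_engel _ fun y hy => hbot ⟨_, y, hy, rfl⟩,
    LieSubalgebra.normalizer_engel _ _⟩

variable (K) in
/-- The discriminant of the Lie algebra `L` at `x`: the lowest coefficient of the characteristic
polynomial of `ad x` that does not vanish identically. It is nonzero exactly at the regular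
elements. -/
def adDiscriminant (x : L) : K := (ad K L x).charpoly.coeff (LieAlgebra.rank K L)

theorem adDiscriminant_ne_zero_iff : adDiscriminant K x ≠ 0 ↔ IsRegular K x := Iff.rfl

theorem adDiscriminant_apply_of_mem_lieAut {u : L ≃ₗ[K] L} (hu : u ∈ lieAut K L) (x : L) :
    adDiscriminant K (u x) = adDiscriminant K x := by
  rw [adDiscriminant, ad_apply_of_mem_lieAut hu, LinearEquiv.charpoly_conj, adDiscriminant]

theorem isRegular_apply_iff_of_mem_lieAut {u : L ≃ₗ[K] L} (hu : u ∈ lieAut K L) :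
    IsRegular K (u x) ↔ IsRegular K x := by
  rw [← adDiscriminant_ne_zero_iff, adDiscriminant_apply_of_mem_lieAut hu,
    adDiscriminant_ne_zero_iff]

variable {g : Type*} [LieRing g] [LieAlgebra ℂ g] [FiniteDimensional ℂ g]

theorem isPolyFun_adDiscriminant : IsPolyFun (adDiscriminant ℂ : g → ℂ) :=
  isPolyFun_charpoly_coeff (ad ℂ g).toLinearMap _

theorem finite_setOf_not_isRegular_line {x v : g} (h : ∃ s : ℂ, IsRegular ℂ (x + s • v)) :
    {s : ℂ | ¬IsRegular ℂ (x + s • v)}.Finite := by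
  simpa only [← adDiscriminant_ne_zero_iff, not_not] using
    isPolyFun_adDiscriminant.finite_setOf_line_eq_zero h

theorem IsPolyFun.eq_of_forall_isRegular {f₁ f₂ : g → ℂ} (hf₁ : IsPolyFun f₁)
    (hf₂ : IsPolyFun f₂) (h : ∀ x, IsRegular ℂ x → f₁ x = f₂ x) : f₁ = f₂ := by
  ext x
  obtain ⟨y, hy⟩ := LieAlgebra.exists_isRegular ℂ g
  have hfin := finite_setOf_not_isRegular_line (x := x) (v := y - x) ⟨1, by simpa using hy⟩
  obtain ⟨P₁, hP₁⟩ := hf₁.exists_polynomial_line x (y - x)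
  obtain ⟨P₂, hP₂⟩ := hf₂.exists_polynomial_line x (y - x)
  have hP : P₁ = P₂ := Polynomial.eq_of_infinite_eval_eq _ _ <|
    hfin.infinite_compl.mono fun s hs => by
      rw [Set.mem_ofPred_eq, ← hP₁, ← hP₂, h _ (not_not.mp hs)]
  simpa [← hP₁, ← hP₂] using congrArg (Polynomial.eval 0) hP

end RegularElements

section Conjugacy

open LieModule Module Filter Topology Pointwise

section

variable {K L : Type*} [Field K] [LieRing L] [LieAlgebra K L] [FiniteDimensional K L]
  [IsKilling K L] {H : LieSubalgebra K L} [H.IsCartanSubalgebra]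

theorem lie_eq_zero_of_mem_cartan {x y : L} (hx : x ∈ H) (hy : y ∈ H) : ⁅x, y⁆ = 0 :=
  congrArg Subtype.val (trivial_lie_zero H H ⟨x, hx⟩ ⟨y, hy⟩)

theorem cartan_le_engel {h : L} (hh : h ∈ H) : H ≤ LieSubalgebra.engel K h := fun x hx =>
  (LieSubalgebra.mem_engel_iff K h x).mpr ⟨1, by simpa using lie_eq_zero_of_mem_cartan hh hx⟩

variable [CharZero K] [IsTriangularizable K H L]

theorem mem_cartan_of_forall_killingForm_eq_zero {x : L} (hx : ∀ α : Weight K H L, α.IsNonZero →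
    ∀ y ∈ rootSpace H α, killingForm K L x y = 0) : x ∈ H := by
  have hcomm (h : H) : ⁅(h : L), x⁆ = 0 := by
    refine eq_zero_of_forall_rootSpace_killingForm_eq_zero (K := K) H fun α y hy => ?_
    have hlie : ⁅(h : L), y⁆ = α h • y := IsKilling.lie_eq_smul_of_mem_rootSpace hy h
    rw [LieModule.traceForm_apply_lie_apply', hlie, map_smul]
    by_cases hα : α.IsZero
    · simp [hα.eq]
    · simp [hx α hα y hy]
  rw [← LieSubalgebra.IsCartanSubalgebra.self_normalizing (H := H),
    LieSubalgebra.mem_normalizer_iff']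
  intro h hh
  rw [hcomm ⟨h, hh⟩]
  exact H.zero_mem

theorem engel_eq_of_forall_weight_ne_zero {h : H}
    (hh : ∀ α : Weight K H L, α.IsNonZero → α h ≠ 0) : LieSubalgebra.engel K (h : L) = H := by
  refine le_antisymm (fun x hx => ?_) (cartan_le_engel h.2)
  have hss := (IsKilling.isSemisimple_ad_of_mem_isCartanSubalgebra h.2).isFinitelySemisimple
  have hx0 : ⁅(h : L), x⁆ = 0 := by
    have hx' : x ∈ (ad K L (h : L)).maxGenEigenspace 0 := hx
    rw [hss.maxGenEigenspace_eq_eigenspace, End.mem_eigenspace_iff, zero_smul] at hx'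
    exact hx'
  refine mem_cartan_of_forall_killingForm_eq_zero fun α hα y hy => ?_
  have hlie : ⁅(h : L), y⁆ = α h • y := IsKilling.lie_eq_smul_of_mem_rootSpace hy h
  have hinv := LieModule.traceForm_apply_lie_apply' K L L (h : L) x y
  rw [hx0, hlie, map_zero, LinearMap.zero_apply, map_smul, zero_eq_neg] at hinv
  exact (smul_eq_zero_iff_right (hh α hα)).mp hinv

theorem weight_ne_zero_of_engel_le {h : H} (hE : LieSubalgebra.engel K (h : L) ≤ H)
    {α : Weight K H L} (hα : α.IsNonZero) : α h ≠ 0 := by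
  intro h0
  have hlie {y : L} (hy : y ∈ rootSpace H α) (h' : H) : ⁅(h' : L), y⁆ = α h' • y :=
    IsKilling.lie_eq_smul_of_mem_rootSpace hy h'
  obtain ⟨e, he, he0⟩ := α.exists_ne_zero
  have heH : e ∈ H := hE <| (LieSubalgebra.mem_engel_iff K _ _).mpr ⟨1, by simp [hlie he, h0]⟩
  refine hα (funext fun h' => ?_)
  have := hlie he h'
  rw [lie_eq_zero_of_mem_cartan h'.2 heH] at this
  exact (smul_eq_zero_iff_left he0).mp this.symm

end

variable {g : Type*} [LieRing g] [LieAlgebra ℂ g] [FiniteDimensional ℂ g] [IsKilling ℂ g]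
  {H : LieSubalgebra ℂ g} [H.IsCartanSubalgebra]

variable (H) in
theorem exists_mem_cartan_isRegular : ∃ h : H, IsRegular ℂ (h : g) := by
  obtain ⟨h₀, hh₀⟩ := exists_injective_weight_apply H
  obtain ⟨y, hy⟩ := LieAlgebra.exists_isRegular ℂ g
  obtain ⟨u, b, -, hu, hub, -⟩ := exists_adjointGroup_chart
    (fun α hα => weight_apply_ne_zero_of_injective hh₀ hα) (y - h₀)
  have hfin := finite_setOf_not_isRegular_line (x := (h₀ : g)) (v := y - h₀) ⟨1, by simpa using hy⟩
  have hreg : ∀ᶠ s in 𝓝[≠] (0 : ℂ), IsRegular ℂ ((h₀ : g) + s • (y - h₀))  := by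
    filter_upwards [nhdsNE_le_cofinite 0 hfin.compl_mem_cofinite] with s hs using not_not.mp hs
  obtain ⟨s, hs, hus⟩ := (hreg.and (nhdsWithin_le_nhds hub)).exists
  refine ⟨b s, ?_⟩
  rwa [← hus, isRegular_apply_iff_of_mem_lieAut (adjointGroup_le_lieAut (hu s))] at hs

variable (H) in
theorem finrank_cartan_eq_rank : finrank ℂ H = LieAlgebra.rank ℂ g := by
  obtain ⟨h, hh⟩ := exists_mem_cartan_isRegular H
  obtain ⟨h₀, hh₀⟩ := exists_injective_weight_apply H
  refine le_antisymm ?_ ?_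
  · rw [← (isRegular_iff_finrank_engel_eq_rank ℂ (h : g)).mp hh]
    exact Submodule.finrank_mono (cartan_le_engel h.2)
  · have := rank_le_finrank_engel ℂ (h₀ : g)
    rwa [engel_eq_of_forall_weight_ne_zero fun α hα => weight_apply_ne_zero_of_injective hh₀ hα]
      at this

theorem engel_eq_of_isRegular {h : H} (hh : IsRegular ℂ (h : g)) :
    LieSubalgebra.engel ℂ (h : g) = H := by
  refine LieSubalgebra.toSubmodule_injective
    (Submodule.eq_of_le_of_finrank_le (cartan_le_engel h.2) ?_).symm
  exact ((isRegular_iff_finrank_engel_eq_rank ℂ (h : g)).mp hh).trans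
    (finrank_cartan_eq_rank H).symm |>.le

theorem isRegular_iff_forall_weight_ne_zero {h : H} :
    IsRegular ℂ (h : g) ↔ ∀ α : Weight ℂ H g, α.IsNonZero → α h ≠ 0 := by
  refine ⟨fun hh α => weight_ne_zero_of_engel_le (engel_eq_of_isRegular hh).le, fun hh => ?_⟩
  rw [isRegular_iff_finrank_engel_eq_rank, engel_eq_of_forall_weight_ne_zero hh]
  exact finrank_cartan_eq_rank H

theorem apply_mem_cartan_iff_of_isRegular {u : g ≃ₗ[ℂ] g} (hu : u ∈ lieAut ℂ g) {h : H}
    (hh : IsRegular ℂ (h : g)) (huh : u h ∈ H) {z : g} : u z ∈ H ↔ z ∈ H := by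
  have huh' : IsRegular ℂ ((⟨u h, huh⟩ : H) : g) := (isRegular_apply_iff_of_mem_lieAut hu).mpr hh
  have := mem_engel_apply_iff_of_mem_lieAut hu (x := (h : g)) (z := z)
  rwa [engel_eq_of_isRegular hh, engel_eq_of_isRegular huh'] at this

theorem eventually_engel_mem_orbit_of_isRegular {x : g} (hx : IsRegular ℂ x) (v : g) :
    ∀ᶠ s in 𝓝 (0 : ℂ), IsRegular ℂ (x + s • v) → MulAction.orbitRel (adjointGroup g)
      (Submodule ℂ g) (LieSubalgebra.engel ℂ (x + s • v)).toSubmodule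
      (LieSubalgebra.engel ℂ x).toSubmodule := by
  have := isCartanSubalgebra_engel_of_isRegular hx
  let h₀ : LieSubalgebra.engel ℂ x := ⟨x, LieSubalgebra.self_mem_engel ℂ x⟩
  obtain ⟨u, b, -, hu, hub, -⟩ :=
    exists_adjointGroup_chart (isRegular_iff_forall_weight_ne_zero (h := h₀).mp hx) v
  filter_upwards [hub] with s hs hreg
  have hs' : x + s • v = u s (b s) := hs.symm
  have hus := adjointGroup_le_lieAut (hu s)
  rw [hs', isRegular_apply_iff_of_mem_lieAut hus] at hreg
  exact ⟨⟨u s, hu s⟩, by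
    rw [hs', ← smul_engel_of_mem_lieAut hus, engel_eq_of_isRegular hreg]; rfl⟩

theorem engel_mem_orbit_of_isRegular {x y : g} (hx : IsRegular ℂ x) (hy : IsRegular ℂ y) :
    MulAction.orbitRel (adjointGroup g) (Submodule ℂ g)
      (LieSubalgebra.engel ℂ x).toSubmodule (LieSubalgebra.engel ℂ y).toSubmodule := by
  let v := y - x
  have hfin := finite_setOf_not_isRegular_line (x := x) (v := v) ⟨0, by simpa using hx⟩
  have hconn := (hfin.countable.isConnected_compl_of_one_lt_rank
    (by simp) : IsConnected _).isPreconnected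
  have := hconn.induction₂ (fun s s' : ℂ => MulAction.orbitRel (adjointGroup g) (Submodule ℂ g)
      (LieSubalgebra.engel ℂ (x + s • v)).toSubmodule
      (LieSubalgebra.engel ℂ (x + s' • v)).toSubmodule)
    (x := 0) (y := 1) (fun s hs => ?_) (fun _ _ _ _ _ _ => Setoid.trans' _)
    (fun _ _ _ _ => Setoid.symm' _) (by simpa using hx) (by simpa [v] using hy)
  · simpa [v] using this
  · have hnear := eventually_engel_mem_orbit_of_isRegular (not_not.mp hs) v
    rw [← sub_self s] at hnear
    have hsub : Tendsto (fun s' : ℂ => s' - s) (𝓝 s) (𝓝 (s - s)) :=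
      tendsto_id.sub_const s
    filter_upwards [nhdsWithin_le_nhds (hsub.eventually hnear), self_mem_nhdsWithin] with s' h₁ h₂
    rw [sub_smul, add_add_sub_cancel] at h₁
    exact Setoid.symm' _ (h₁ (not_not.mp h₂))

variable (H) in
theorem exists_mem_adjointGroup_apply_mem_cartan {x : g} (hx : IsRegular ℂ x) :
    ∃ u ∈ adjointGroup g, u x ∈ H := by
  obtain ⟨h, hh⟩ := exists_mem_cartan_isRegular H
  obtain ⟨⟨u, hu⟩, huE⟩ := engel_mem_orbit_of_isRegular hh hx
  refine ⟨u, hu, ?_⟩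
  rw [← LieSubalgebra.mem_toSubmodule, ← engel_eq_of_isRegular hh, ← huE]
  exact Submodule.smul_mem_pointwise_smul _ _ _ (LieSubalgebra.self_mem_engel ℂ x)

variable (H) in
theorem exists_mem_adjointGroup_mul_apply_mem_cartan_iff {σ : g ≃ₗ[ℂ] g} (hσ : σ ∈ lieAut ℂ g) :
    ∃ u ∈ adjointGroup g, ∀ z, (u * σ) z ∈ H ↔ z ∈ H := by
  obtain ⟨h, hh⟩ := exists_mem_cartan_isRegular H
  obtain ⟨u, hu, huh⟩ := exists_mem_adjointGroup_apply_mem_cartan H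
    ((isRegular_apply_iff_of_mem_lieAut hσ).mpr hh)
  exact ⟨u, hu, fun z => apply_mem_cartan_iff_of_isRegular
    (mul_mem (adjointGroup_le_lieAut hu) hσ) hh huh⟩

theorem neg_mem_primeGroup_adjointGroup {ψ : g ≃ₗ[ℂ] g} (hψ : ψ ∈ adjointGroup g)
    (hψH : ∀ x ∈ H, ψ x = -x) : LinearEquiv.neg ℂ ∈ primeGroup (adjointGroup g) := by
  intro f hf hinv v
  refine congrFun ((hf.comp_linearMap (LinearEquiv.neg ℂ).toLinearMap).eq_of_forall_isRegular hf
    fun x hx => ?_) v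
  obtain ⟨u, hu, hux⟩ := exists_mem_adjointGroup_apply_mem_cartan H hx
  calc f (-x) = f (ψ (u x)) := by rw [← hinv u hu (-x), map_neg, hψH _ hux]
    _ = f x := by rw [hinv ψ hψ, hinv u hu]

end Conjugacy

section PolynomialGrowth

open Filter Topology Asymptotics

/-- `f` has polynomial growth of degree at most `D` on all of `ℂ`. The comparison function
`(1 + ‖s‖) ^ D` is bounded below, so the bound is uniform and not just asymptotic. -/
def HasPolyGrowth (D : ℕ) (f : ℂ → ℂ) : Prop :=
  f =O[⊤] fun s => (1 + ‖s‖) ^ D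

namespace HasPolyGrowth

variable {D E : ℕ} {f₁ f₂ : ℂ → ℂ}

theorem mono (h : HasPolyGrowth D f₁) (hDE : D ≤ E) : HasPolyGrowth E f₁ :=
  h.trans <| isBigO_of_le _ fun s => by
    have : 1 ≤ 1 + ‖s‖ := le_add_of_nonneg_right (norm_nonneg s)
    simpa only [norm_pow, Real.norm_of_nonneg (zero_le_one.trans this)] using
      pow_le_pow_right₀ this hDE

theorem const (c : ℂ) : HasPolyGrowth D fun _ => c := by
  refine HasPolyGrowth.mono (D := 0) ?_ (Nat.zero_le D)
  simpa only [HasPolyGrowth, pow_zero] using isBigO_const_one ℝ c ⊤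

theorem add (h₁ : HasPolyGrowth D f₁) (h₂ : HasPolyGrowth D f₂) :
    HasPolyGrowth D fun s => f₁ s + f₂ s :=
  IsBigO.add h₁ h₂

theorem mul (h₁ : HasPolyGrowth D f₁) (h₂ : HasPolyGrowth E f₂) :
    HasPolyGrowth (D + E) fun s => f₁ s * f₂ s := by
  simpa only [HasPolyGrowth, pow_add] using IsBigO.mul h₁ h₂

theorem isBigO_one_nhds (h : HasPolyGrowth D f₁) (a : ℂ) : f₁ =O[𝓝 a] fun _ => (1 : ℂ) :=
  have hcont : Continuous fun s : ℂ => (1 + ‖s‖) ^ D := by fun_prop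
  (IsBigO.mono h le_top).trans ((hcont.tendsto a).isBigO_one ℂ)

end HasPolyGrowth

theorem hasPolyGrowth_polynomial_eval {P : Polynomial ℂ} {D : ℕ} (hP : P.natDegree ≤ D) :
    HasPolyGrowth D fun s => P.eval s := by
  simp only [Polynomial.eval_eq_sum_range]
  refine IsBigO.fun_sum fun i hi => ?_
  have hpow : HasPolyGrowth i fun s => s ^ i := isBigO_of_le _ fun s => by
    rw [norm_pow, norm_pow]
    gcongr
    exact (le_add_of_nonneg_left zero_le_one).trans (le_abs_self _)
  have hi' : 0 + i ≤ D := by rw [Finset.mem_range] at hi; omega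
  exact ((HasPolyGrowth.const _).mul hpow).mono hi'

theorem HasPolyGrowth.iteratedDeriv_eq_zero {f : ℂ → ℂ} {D n : ℕ} (hf : Differentiable ℂ f)
    (h : HasPolyGrowth D f) (hn : D < n) : iteratedDeriv n f 0 = 0 := by
  obtain ⟨C, hC⟩ := isBigO_top.mp h
  have hcauchy (R : ℝ) (hR : 0 < R) :
      ‖iteratedDeriv n f 0‖ ≤ n.factorial * (C * (1 + R) ^ D) / R ^ n := by
    refine Complex.norm_iteratedDeriv_le_of_forall_mem_sphere_norm_le n hR hf.diffContOnCl
      fun z hz => ?_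
    rw [mem_sphere_zero_iff_norm] at hz
    simpa [hz, abs_of_pos (by positivity : 0 < 1 + R)] using hC z
  let P : Polynomial ℝ := .C (n.factorial * C) * (1 + .X) ^ D
  have hP : P.degree < (Polynomial.X ^ n : Polynomial ℝ).degree := by
    rw [Polynomial.degree_X_pow]
    have hdeg : P.degree ≤ D := by dsimp only [P]; compute_degree; rfl
    exact hdeg.trans_lt (by exact_mod_cast hn)
  have hlim := Polynomial.div_tendsto_atTop_zero_of_degree_lt P (Polynomial.X ^ n) hP
  refine norm_le_zero_iff.mp (ge_of_tendsto hlim ?_)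
  filter_upwards [eventually_gt_atTop 0] with R hR
  simpa [P, mul_assoc] using hcauchy R hR

theorem HasPolyGrowth.exists_polynomial {f : ℂ → ℂ} {D : ℕ} (hf : Differentiable ℂ f)
    (h : HasPolyGrowth D f) : ∃ P : Polynomial ℂ, P.natDegree ≤ D ∧ ∀ s, f s = P.eval s := by
  let c (n : ℕ) : ℂ := (n.factorial : ℂ)⁻¹ * iteratedDeriv n f 0
  refine ⟨∑ n ∈ Finset.range (D + 1), Polynomial.C (c n) * Polynomial.X ^ n, ?_, fun s => ?_⟩
  · refine Polynomial.natDegree_sum_le_of_forall_le _ _ fun n hn => ?_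
    exact (Polynomial.natDegree_C_mul_X_pow_le _ _).trans (Finset.mem_range_succ_iff.mp hn)
  · rw [← Complex.taylorSeries_eq_of_entire' 0 s hf, tsum_eq_sum (s := Finset.range (D + 1))]
    · simp [Polynomial.eval_finsetSum, c]
    · intro n hn
      rw [Finset.mem_range, not_lt] at hn
      simp [h.iteratedDeriv_eq_zero hf hn]

theorem differentiableAt_sq_mul_of_isBigO_one {p k : ℂ → ℂ} {a : ℂ} (hp : DifferentiableAt ℂ p a)
    (hpa : p a = 0) (hk : k =O[𝓝 a] fun _ => (1 : ℂ)) :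
    DifferentiableAt ℂ (fun s => p s ^ 2 * k s) a := by
  have hp' : p =O[𝓝 a] fun s => s - a := by simpa only [hpa, sub_zero] using hp.isBigO_sub
  have hsq : (fun s => p s ^ 2 * k s) =O[𝓝 a] fun s => ‖s - a‖ ^ 2 := by
    simpa only [norm_one, mul_one] using (hp'.norm_right.pow 2).mul hk.norm_right
  exact (hsq.hasFDerivAt one_lt_two).differentiableAt

end PolynomialGrowth

section WeylGroup

open LieModule

variable {g : Type*} [LieRing g] [LieAlgebra ℂ g]

theorem exists_linearEquiv_coe_eq {H : LieSubalgebra ℂ g} {u : g ≃ₗ[ℂ] g}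
    (h : ∀ z, u z ∈ H ↔ z ∈ H) : ∃ w : H ≃ₗ[ℂ] H, ∀ z : H, (w z : g) = u z := by
  refine ⟨u.ofSubmodules H.toSubmodule H.toSubmodule (Submodule.ext fun z => ?_), fun _ => rfl⟩
  rw [Submodule.mem_map_equiv, LieSubalgebra.mem_toSubmodule, ← h, u.apply_symm_apply]
  rfl

variable [FiniteDimensional ℂ g]

/-- The Weyl group of a Cartan subalgebra `H`: the linear automorphisms of `H` that are restrictions
of elements of the adjoint group. -/
def weylGroup (H : LieSubalgebra ℂ g) : Subgroup (H ≃ₗ[ℂ] H) where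
  carrier := {w | ∃ u ∈ adjointGroup g, ∀ h : H, u h = (w h : g)}
  one_mem' := ⟨1, one_mem _, fun _ => rfl⟩
  mul_mem' := by
    rintro w w' ⟨u, hu, huw⟩ ⟨u', hu', huw'⟩
    exact ⟨u * u', mul_mem hu hu', fun h => by
      rw [LinearEquiv.mul_apply, huw', huw, LinearEquiv.mul_apply]⟩
  inv_mem' := by
    rintro w ⟨u, hu, huw⟩
    exact ⟨u⁻¹, inv_mem hu, fun h => (u.symm_apply_eq).mpr (by
      rw [huw]; exact congrArg Subtype.val (w.apply_symm_apply h).symm)⟩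

variable [IsKilling ℂ g] {H : LieSubalgebra ℂ g} [H.IsCartanSubalgebra]

theorem exists_mem_weylGroup_of_isRegular {u : g ≃ₗ[ℂ] g} (hu : u ∈ adjointGroup g) {h : H}
    (hh : IsRegular ℂ (h : g)) (huh : u h ∈ H) : ∃ w ∈ weylGroup H, ∀ z : H, (w z : g) = u z := by
  obtain ⟨w, hw⟩ := exists_linearEquiv_coe_eq fun _ =>
    apply_mem_cartan_iff_of_isRegular (adjointGroup_le_lieAut hu) hh huh
  exact ⟨w, ⟨u, hu, fun z => (hw z).symm⟩, hw⟩

end WeylGroup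

section InvariantExtension

open Filter Topology LieModule Module

theorem exists_norm_eigenvalue_line_le {V : Type*} [AddCommGroup V] [Module ℂ V]
    [FiniteDimensional ℂ V] (A B : End ℂ V) :
    ∃ C : ℝ, ∀ s c : ℂ, (A + s • B).HasEigenvalue c → ‖c‖ ≤ C * (1 + ‖s‖) := by
  let coords := (finBasis ℂ V).equivFun
  let _ : NormedAddCommGroup V := NormedAddCommGroup.induced V (Fin _ → ℂ) coords coords.injective
  let _ : NormedSpace ℂ V := NormedSpace.induced ℂ V (Fin _ → ℂ) coords
  let T := End.toContinuousLinearMap (𝕜 := ℂ) V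
  refine ⟨‖T A‖ + ‖T B‖, fun s c hc => ?_⟩
  obtain ⟨e, he⟩ := hc.exists_hasEigenvector
  have heig : T (A + s • B) e = c • e := he.apply_eq_smul
  have hcA : ‖c‖ ≤ ‖T (A + s • B)‖ := by
    refine le_of_mul_le_mul_right ?_ (norm_pos_iff.mpr he.2)
    rw [← norm_smul, ← heig]
    exact (T (A + s • B)).le_opNorm e
  calc ‖c‖ ≤ ‖T A + s • T B‖ := by rwa [map_add, map_smul] at hcA
    _ ≤ ‖T A‖ + ‖s‖ * ‖T B‖ := by rw [← norm_smul]; exact norm_add_le _ _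
    _ ≤ (‖T A‖ + ‖T B‖) * (1 + ‖s‖) := by
      nlinarith [norm_nonneg (T A), norm_nonneg (T B), norm_nonneg s]

variable {W : Type*} [AddCommGroup W] [Module ℂ W] {F : W → ℂ}

theorem IsPolyFun.exists_hasPolyGrowth_comp (hF : IsPolyFun F) :
    ∃ D, ∀ c : ℂ → W, (∀ l : W →ₗ[ℂ] ℂ, HasPolyGrowth 1 fun s => l (c s)) →
      HasPolyGrowth D fun s => F (c s) := by
  unfold IsPolyFun at hF
  induction hF using Algebra.adjoin_induction with
  | mem F hF =>
    obtain ⟨l, rfl⟩ := hF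
    exact ⟨1, fun c hc => hc l⟩
  | algebraMap a => exact ⟨0, fun _ _ => HasPolyGrowth.const a⟩
  | add F₁ F₂ _ _ h₁ h₂ =>
    obtain ⟨D₁, h₁⟩ := h₁
    obtain ⟨D₂, h₂⟩ := h₂
    exact ⟨max D₁ D₂, fun c hc =>
      ((h₁ c hc).mono (le_max_left _ _)).add ((h₂ c hc).mono (le_max_right _ _))⟩
  | mul F₁ F₂ _ _ h₁ h₂ =>
    obtain ⟨D₁, h₁⟩ := h₁
    obtain ⟨D₂, h₂⟩ := h₂
    exact ⟨D₁ + D₂, fun c hc => (h₁ c hc).mul (h₂ c hc)⟩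

theorem IsPolyFun.differentiableAt_comp (hF : IsPolyFun F) {c : ℂ → W} {a : ℂ}
    (hc : ∀ l : W →ₗ[ℂ] ℂ, DifferentiableAt ℂ (fun s => l (c s)) a) :
    DifferentiableAt ℂ (fun s => F (c s)) a := by
  unfold IsPolyFun at hF
  induction hF using Algebra.adjoin_induction with
  | mem F hF =>
    obtain ⟨l, rfl⟩ := hF
    exact hc l
  | algebraMap a => exact differentiableAt_const a
  | add _ _ _ _ h₁ h₂ => exact h₁.add h₂
  | mul _ _ _ _ h₁ h₂ => exact h₁.mul h₂

variable {g : Type*} [LieRing g] [LieAlgebra ℂ g] [FiniteDimensional ℂ g] [IsKilling ℂ g]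
  {H : LieSubalgebra ℂ g} [H.IsCartanSubalgebra]

open Classical in
variable (H) in
/-- A point of the Cartan subalgebra `H` in the orbit of `x` under the adjoint group, for `x`
regular; `0` by convention if `x` is not regular. -/
def cartanRep (x : g) : H :=
  if hx : IsRegular ℂ x then
    ⟨(exists_mem_adjointGroup_apply_mem_cartan H hx).choose x,
      (exists_mem_adjointGroup_apply_mem_cartan H hx).choose_spec.2⟩
  else 0

variable (H) in
theorem exists_mem_adjointGroup_apply_eq_cartanRep {x : g} (hx : IsRegular ℂ x) :
    ∃ u ∈ adjointGroup g, u x = cartanRep H x := by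
  rw [cartanRep, dif_pos hx]
  exact ⟨_, (exists_mem_adjointGroup_apply_mem_cartan H hx).choose_spec.1, rfl⟩

theorem isRegular_cartanRep {x : g} (hx : IsRegular ℂ x) : IsRegular ℂ (cartanRep H x : g) := by
  obtain ⟨u, hu, hux⟩ := exists_mem_adjointGroup_apply_eq_cartanRep H hx
  rwa [← hux, isRegular_apply_iff_of_mem_lieAut (adjointGroup_le_lieAut hu)]

theorem apply_cartanRep_apply_of_forall_mem_weylGroup {F : H → ℂ}
    (hF : ∀ w ∈ weylGroup H, ∀ h, F (w h) = F h) {u : g ≃ₗ[ℂ] g} (hu : u ∈ adjointGroup g) {h : H}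
    (hh : IsRegular ℂ (h : g)) : F (cartanRep H (u h)) = F h := by
  have huh := (isRegular_apply_iff_of_mem_lieAut (adjointGroup_le_lieAut hu)).mpr hh
  obtain ⟨v, hv, hvh⟩ := exists_mem_adjointGroup_apply_eq_cartanRep H huh
  obtain ⟨w, hw, hwz⟩ := exists_mem_weylGroup_of_isRegular (H := H) (mul_mem hv hu) hh (by
    rw [LinearEquiv.mul_apply, hvh]; exact SetLike.coe_mem _)
  rw [← hF w hw h]
  exact congrArg F (Subtype.ext (by rw [hwz, LinearEquiv.mul_apply, hvh]))

theorem hasEigenvalue_ad_weight_cartanRep (α : Weight ℂ H g) {x : g} (hx : IsRegular ℂ x) :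
    (ad ℂ g x).HasEigenvalue (α (cartanRep H x)) := by
  obtain ⟨u, hu, hux⟩ := exists_mem_adjointGroup_apply_eq_cartanRep H hx
  obtain ⟨e, he, he0⟩ := α.exists_ne_zero
  have hlie : ⁅u x, e⁆ = α (cartanRep H x) • e := by
    rw [hux]; exact IsKilling.lie_eq_smul_of_mem_rootSpace he _
  refine Module.End.hasEigenvalue_of_hasEigenvector (x := u.symm e)
    ⟨Module.End.mem_eigenspace_iff.mpr (u.injective ?_), by simpa using he0⟩
  rw [ad_apply, adjointGroup_le_lieAut hu, u.apply_symm_apply, hlie, map_smul, u.apply_symm_apply]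

theorem hasPolyGrowth_weight_cartanRep (α : Weight ℂ H g) (x v : g) :
    HasPolyGrowth 1 fun s => α (cartanRep H (x + s • v)) := by
  obtain ⟨C, hC⟩ := exists_norm_eigenvalue_line_le (ad ℂ g x) (ad ℂ g v)
  refine Asymptotics.isBigO_top.mpr ⟨max C 0, fun s => ?_⟩
  have hs : 0 ≤ 1 + ‖s‖ := by positivity
  rw [pow_one, Real.norm_of_nonneg hs]
  by_cases hreg : IsRegular ℂ (x + s • v)
  · have heig := hasEigenvalue_ad_weight_cartanRep α hreg
    rw [map_add, map_smul] at heig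
    exact (hC s _ heig).trans (mul_le_mul_of_nonneg_right (le_max_left _ _) hs)
  · have hα : α (0 : H) = 0 := (α.toLinear ℂ H g).map_zero
    rw [cartanRep, dif_neg hreg, hα, norm_zero]
    exact mul_nonneg (le_max_right _ _) hs

theorem hasPolyGrowth_linear_cartanRep (l : H →ₗ[ℂ] ℂ) (x v : g) :
    HasPolyGrowth 1 fun s => l (cartanRep H (x + s • v)) := by
  have hl : l ∈ Submodule.span ℂ (Set.range (Weight.toLinear ℂ H g)) := by
    rw [IsKilling.span_weight_eq_top]; trivial
  induction hl using Submodule.span_induction with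
  | mem l hl =>
    obtain ⟨α, rfl⟩ := hl
    exact hasPolyGrowth_weight_cartanRep α x v
  | zero => exact HasPolyGrowth.const 0
  | add l m _ _ hl hm => exact hl.add hm
  | smul c l _ hl => simpa using (HasPolyGrowth.const (D := 0) c).mul hl

theorem differentiableAt_cartanRep_line_zero {F : H → ℂ} (hFpoly : IsPolyFun F)
    (hF : ∀ w ∈ weylGroup H, ∀ h, F (w h) = F h) {x : g} (hx : IsRegular ℂ x) (v : g) :
    DifferentiableAt ℂ (fun s : ℂ => F (cartanRep H (x + s • v))) 0 := by
  obtain ⟨u, hu, hux⟩ := exists_mem_adjointGroup_apply_eq_cartanRep H hx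
  obtain ⟨w, b, -, hw, hwb, hb⟩ := exists_adjointGroup_chart
    (isRegular_iff_forall_weight_ne_zero.mp (isRegular_cartanRep (H := H) hx)) (u v)
  have hfin := finite_setOf_not_isRegular_line (x := x) (v := v) ⟨0, by simpa using hx⟩
  have hreg : ∀ᶠ s in 𝓝 (0 : ℂ), IsRegular ℂ (x + s • v) := by
    filter_upwards [hfin.isClosed.isOpen_compl.mem_nhds (x := 0) (by simpa using hx)] with s hs
    exact not_not.mp hs
  refine (hFpoly.differentiableAt_comp hb).congr_of_eventuallyEq ?_
  filter_upwards [hreg, hwb] with s hs hws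
  have hm := mul_mem (inv_mem hu) (hw s)
  have hxs : x + s • v = (u⁻¹ * w s) (b s) := by
    refine (u.symm_apply_eq.mpr ?_).symm
    rw [map_add, map_smul, hux, ← hws]
    rfl
  rw [hxs, isRegular_apply_iff_of_mem_lieAut (adjointGroup_le_lieAut hm)] at hs
  rw [hxs, apply_cartanRep_apply_of_forall_mem_weylGroup hF hm hs]

variable (H) in
/-- The extension to `g` of a function `F` on the Cartan subalgebra `H` that is constant along the
orbits of the adjoint group, multiplied by the squared discriminant so that it stays differentiable
across the elements that are not regular. -/
def cartanExtension (F : H → ℂ) (x : g) : ℂ := adDiscriminant ℂ x ^ 2 * F (cartanRep H x)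

section

variable {F : H → ℂ}

theorem cartanExtension_apply_of_mem_adjointGroup (hF : ∀ w ∈ weylGroup H, ∀ h, F (w h) = F h)
    {u : g ≃ₗ[ℂ] g} (hu : u ∈ adjointGroup g) (x : g) :
    cartanExtension H F (u x) = cartanExtension H F x := by
  rw [cartanExtension, cartanExtension, adDiscriminant_apply_of_mem_lieAut
    (adjointGroup_le_lieAut hu)]
  by_cases hx : IsRegular ℂ x
  · obtain ⟨v, hv, hvx⟩ := exists_mem_adjointGroup_apply_eq_cartanRep H hx
    have hux : u x = (u * v⁻¹) (cartanRep H x) := by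
      rw [← hvx]; exact congrArg u (v.symm_apply_apply x).symm
    rw [hux, apply_cartanRep_apply_of_forall_mem_weylGroup hF (mul_mem hu (inv_mem hv))
      (isRegular_cartanRep hx)]
  · rw [not_not.mp (adDiscriminant_ne_zero_iff.not.mpr hx)]
    simp

theorem cartanExtension_apply_cartan (hF : ∀ w ∈ weylGroup H, ∀ h, F (w h) = F h) {h : H}
    (hh : IsRegular ℂ (h : g)) :
    cartanExtension H F h = adDiscriminant ℂ (h : g) ^ 2 * F h := by
  rw [cartanExtension]
  congr 1
  exact apply_cartanRep_apply_of_forall_mem_weylGroup hF (one_mem _) hh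

theorem differentiable_cartanExtension_line (hFpoly : IsPolyFun F)
    (hF : ∀ w ∈ weylGroup H, ∀ h, F (w h) = F h) (x v : g) :
    Differentiable ℂ fun s : ℂ => cartanExtension H F (x + s • v) := by
  have hzero (x : g) : DifferentiableAt ℂ (fun s : ℂ => cartanExtension H F (x + s • v)) 0 := by
    obtain ⟨P, hP⟩ := isPolyFun_adDiscriminant.exists_polynomial_line x v
    have hdisc : DifferentiableAt ℂ (fun s : ℂ => adDiscriminant ℂ (x + s • v)) 0 := by
      simpa only [hP] using P.differentiableAt
    by_cases hx : IsRegular ℂ x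
    · exact (hdisc.pow 2).mul (differentiableAt_cartanRep_line_zero hFpoly hF hx v)
    · obtain ⟨D, hD⟩ := hFpoly.exists_hasPolyGrowth_comp
      refine differentiableAt_sq_mul_of_isBigO_one hdisc ?_
        ((hD _ fun l => hasPolyGrowth_linear_cartanRep l x v).isBigO_one_nhds 0)
      simpa using not_not.mp (adDiscriminant_ne_zero_iff.not.mpr hx)
  intro a
  have h := hzero (x + a • v)
  rw [← sub_self a] at h
  refine (h.comp a (f := fun s => s - a) (by fun_prop)).congr_of_eventuallyEq
    (Eventually.of_forall fun s => ?_)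
  simp only [Function.comp_apply, sub_smul, add_assoc, add_sub_cancel]

theorem isPolyFun_cartanExtension (hFpoly : IsPolyFun F)
    (hF : ∀ w ∈ weylGroup H, ∀ h, F (w h) = F h) : IsPolyFun (cartanExtension H F) := by
  obtain ⟨D, hD⟩ := (isPolyFun_adDiscriminant (g := g)).exists_natDegree_le_forall_line
  obtain ⟨E, hE⟩ := hFpoly.exists_hasPolyGrowth_comp
  refine isPolyFun_of_forall_line (D := D + D + E) fun x v =>
    HasPolyGrowth.exists_polynomial (differentiable_cartanExtension_line hFpoly hF x v) ?_
  obtain ⟨P, hPD, hP⟩ := hD x v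
  have hdisc : HasPolyGrowth D fun s => adDiscriminant ℂ (x + s • v) := by
    simpa only [hP] using hasPolyGrowth_polynomial_eval hPD
  simpa only [cartanExtension, sq] using
    (hdisc.mul hdisc).mul (hE _ fun l => hasPolyGrowth_linear_cartanRep l x v)

end

end InvariantExtension

section Separation

open LieModule Module

theorem exists_isPolyFun_invariant_separating {V : Type*} [AddCommGroup V] [Module ℂ V]
    (Γ : Subgroup (V ≃ₗ[ℂ] V)) [Finite Γ] {x y : V} (hxy : ∀ w ∈ Γ, w x ≠ y) :
    ∃ F : V → ℂ, IsPolyFun F ∧ (∀ w ∈ Γ, ∀ z, F (w z) = F z) ∧ F x ≠ 0 ∧ F y = 0 := by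
  have := Fintype.ofFinite Γ
  obtain ⟨l, hl⟩ := exists_dual_forall_apply_ne_zero (K := ℂ) (fun w : Γ => w.1 x - y) fun w =>
    sub_ne_zero.mpr (hxy w w.2)
  refine ⟨fun z => ∏ w : Γ, (l (w.1 z) - l y), ?_, fun v hv z => ?_, ?_, ?_⟩
  · simp only [sub_eq_add_neg]
    exact isPolyFun_prod _ fun w _ =>
      (isPolyFun_linear (l ∘ₗ w.1.toLinearMap)).add (isPolyFun_const _)
  · exact Equiv.prod_comp (Equiv.mulRight (⟨v, hv⟩ : Γ)) fun w => l (w.1 z) - l y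
  · exact Finset.prod_ne_zero_iff.mpr fun w _ => by simpa only [map_sub] using hl w
  · exact Finset.prod_eq_zero (Finset.mem_univ 1) (sub_self _)

variable {g : Type*} [LieRing g] [LieAlgebra ℂ g] [FiniteDimensional ℂ g] [IsKilling ℂ g]
  {H : LieSubalgebra ℂ g} [H.IsCartanSubalgebra]

theorem apply_mem_rootSpace_comp_symm {u : g ≃ₗ[ℂ] g} (hu : u ∈ lieAut ℂ g) {w : H ≃ₗ[ℂ] H}
    (huw : ∀ h : H, u h = (w h : g)) {χ : H → ℂ} {x : g} (hx : x ∈ rootSpace H χ) :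
    u x ∈ rootSpace H (χ ∘ w.symm) := by
  refine weightSpace_le_genWeightSpace g _ ((mem_weightSpace _ _).mpr fun h => ?_)
  have hlie : ⁅(w.symm h : g), x⁆ = χ (w.symm h) • x := IsKilling.lie_eq_smul_of_mem_rootSpace hx _
  have := congrArg u hlie
  rwa [hu, huw, w.apply_symm_apply, map_smul] at this

theorem exists_weight_eq_comp {w : H ≃ₗ[ℂ] H} (hw : w ∈ weylGroup H) (α : Weight ℂ H g) :
    ∃ β : Weight ℂ H g, ∀ h, β h = α (w h) := by
  obtain ⟨u, hu, huw⟩ := inv_mem hw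
  obtain ⟨e, he, he0⟩ := α.exists_ne_zero
  have hue := apply_mem_rootSpace_comp_symm (adjointGroup_le_lieAut hu) huw he
  refine ⟨⟨α ∘ w, fun hbot => he0 (u.map_eq_zero_iff.mp ?_)⟩, fun _ => rfl⟩
  rw [← LieSubmodule.mem_bot (R := ℂ) (L := H), ← hbot]
  exact hue

instance finite_weylGroup : Finite (weylGroup H) := by
  choose f hf using fun w : weylGroup H => exists_weight_eq_comp w.2
  refine Finite.of_injective f fun w w' hww => Subtype.ext (LinearEquiv.ext fun h => ?_)
  have hker : w.1 h - w'.1 h ∈ ⨅ α : Weight ℂ H g, α.ker :=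
    (Submodule.mem_iInf _).mpr fun α => by
      rw [LinearMap.mem_ker, map_sub, sub_eq_zero, Weight.toLinear_apply, Weight.toLinear_apply,
        ← hf, ← hf, hww]
  rwa [IsKilling.iInf_ker_weight_eq_bot, Submodule.mem_bot, sub_eq_zero] at hker

theorem exists_mem_weylGroup_apply_eq {h k : H} (hh : IsRegular ℂ (h : g))
    (hk : IsRegular ℂ (k : g)) (hQ : ∀ Q : g → ℂ, IsPolyFun Q →
      (∀ u ∈ adjointGroup g, ∀ x, Q (u x) = Q x) → Q h = Q k) :
    ∃ w ∈ weylGroup H, w h = k := by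
  by_contra! hne
  obtain ⟨F, hFpoly, hF, hFh, hFk⟩ := exists_isPolyFun_invariant_separating (weylGroup H) hne
  have heq := hQ _ (isPolyFun_cartanExtension hFpoly hF) fun u hu =>
    cartanExtension_apply_of_mem_adjointGroup hF hu
  rw [cartanExtension_apply_cartan hF hh, cartanExtension_apply_cartan hF hk, hFk, mul_zero] at heq
  exact mul_ne_zero (pow_ne_zero 2 (adDiscriminant_ne_zero_iff.mpr hh)) hFh heq

theorem exists_mem_adjointGroup_forall_cartan_apply_eq {σ : g ≃ₗ[ℂ] g} (hσ : σ ∈ lieAut ℂ g)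
    (hσp : σ ∈ primeGroup (adjointGroup g)) (hσH : ∀ z, σ z ∈ H ↔ z ∈ H) :
    ∃ u ∈ adjointGroup g, ∀ h ∈ H, u h = σ h := by
  obtain ⟨s, hs⟩ := exists_linearEquiv_coe_eq hσH
  suffices s ∈ weylGroup H by
    obtain ⟨u, hu, hus⟩ := this
    exact ⟨u, hu, fun h hh => (hus ⟨h, hh⟩).trans (hs _)⟩
  by_contra hsW
  obtain ⟨h, hinj, hne⟩ := exists_injective_weight_apply_and_notMem H
    (fun w : weylGroup H => LinearMap.ker (w.1.toLinearMap - s.toLinearMap)) fun w hker => by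
      rw [LinearMap.ker_eq_top, sub_eq_zero] at hker
      exact hsW (LinearEquiv.toLinearMap_injective hker ▸ w.2)
  have hh : IsRegular ℂ (h : g) := isRegular_iff_forall_weight_ne_zero.mpr fun α =>
    weight_apply_ne_zero_of_injective hinj
  have hsh : IsRegular ℂ (s h : g) := by rwa [hs, isRegular_apply_iff_of_mem_lieAut hσ]
  obtain ⟨w, hw, hwh⟩ := exists_mem_weylGroup_apply_eq hh hsh fun Q hQ hinv => by
    rw [hs, hσp Q hQ hinv]
  exact hne ⟨w, hw⟩ (by simpa [sub_eq_zero] using hwh)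

end Separation

section Torus

open LieModule Module

section

variable {K L : Type*} [Field K] [CharZero K] [LieRing L] [LieAlgebra K L] [FiniteDimensional K L]
  [IsKilling K L] {H : LieSubalgebra K L} [H.IsCartanSubalgebra] [IsTriangularizable K H L]

theorem coe_reflectionPerm_self (i : H.root) :
    (((IsKilling.rootSystem H).reflectionPerm i i : Weight K H L) : H → K) =
      -((i : Weight K H L) : H → K) :=
  funext <| LinearMap.congr_fun <| ((IsKilling.rootSystem H).root_reflectionPerm i i).trans
    ((IsKilling.rootSystem H).reflection_apply_self i)

theorem exists_forall_mem_support_apply_eq (b : (IsKilling.rootSystem H).Base) (l : H.root → K) :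
    ∃ z : H, ∀ i ∈ b.support, (i : Weight K H L) z = l i := by
  refine ⟨(evalEquiv K H).symm (b.toWeightBasis.constr K fun i => l i), fun i hi => ?_⟩
  have hroot := apply_evalEquiv_symm_apply (R := K) (M := H) (b.toWeightBasis ⟨i, hi⟩)
    (b.toWeightBasis.constr K fun i => l i)
  rwa [b.toWeightBasis.constr_basis, b.toWeightBasis_apply] at hroot

-- Take `y` one step below the top of the `α`-string through `β`, so that `⁅e, y⁆` is a nonzero
-- multiple of the vector above `y` in an irreducible `sl₂`-representation.
theorem exists_lie_ne_zero_of_coe_eq_add {α β γ : Weight K H L} (hα : α.IsNonZero)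
    (hγ : (γ : H → K) = α + β) : ∃ e ∈ rootSpace H α, ∃ y ∈ rootSpace H β, ⁅e, y⁆ ≠ 0 := by
  obtain ⟨x, hx, hx0⟩ := (chainTop α β).exists_ne_zero
  obtain ⟨h, e, f, hsl, he, hf⟩ := IsKilling.exists_isSl2Triple_of_weight_isNonZero hα
  obtain rfl := hsl.h_eq_coroot hα he hf
  have hprim : hsl.HasPrimitiveVectorWith x (IsKilling.chainLength α β : K) := by
    have hex := lie_mem_genWeightSpace_of_mem_genWeightSpace he hx
    rw [genWeightSpace_add_chainTop _ _ hα] at hex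
    exact ⟨hx0, (IsKilling.chainLength_smul _ _ hx).symm, hex⟩
  obtain ⟨q, hq⟩ : ∃ q, chainTopCoeff α β = q + 1 := Nat.exists_eq_succ_of_ne_zero fun hzero => by
    have hbot := genWeightSpace_chainTopCoeff_add_one_nsmul_add α β hα
    rw [hzero, zero_add, one_smul, ← hγ] at hbot
    exact γ.2 hbot
  have hle := IsKilling.chainTopCoeff_le_chainLength α β
  refine ⟨e, he, (toEnd K L L f ^ (q + 1)) x, ?_, ?_⟩
  · have hmem := toEnd_pow_apply_mem hf hx (q + 1)
    have hβ : (q + 1) • (-α : H → K) + (chainTop α β : H → K) = β := by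
      rw [coe_chainTop', hq, smul_neg, neg_add_cancel_left]
    rwa [hβ] at hmem
  · rw [hprim.lie_e_pow_succ_toEnd_f q]
    refine smul_ne_zero (mul_ne_zero (Nat.cast_add_one_ne_zero q) (sub_ne_zero.mpr ?_))
      (hprim.pow_toEnd_f_ne_zero_of_eq_nat rfl (by omega))
    exact_mod_cast (by omega : IsKilling.chainLength α β ≠ q)

end

variable {g : Type*} [LieRing g] [LieAlgebra ℂ g] [FiniteDimensional ℂ g] {H : LieSubalgebra ℂ g}
  [H.IsCartanSubalgebra]

theorem mem_lieAut_of_forall_apply_eq_exp_weight_smul {τ : g ≃ₗ[ℂ] g} {z : H}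
    (hτ : ∀ α : Weight ℂ H g, ∀ x ∈ rootSpace H α, τ x = Complex.exp (α z) • x) :
    τ ∈ lieAut ℂ g := by
  have hτlie (α β : Weight ℂ H g) {x y : g} (hx : x ∈ rootSpace H α) (hy : y ∈ rootSpace H β) :
      τ ⁅x, y⁆ = ⁅τ x, τ y⁆ := by
    have hmem : ⁅x, y⁆ ∈ genWeightSpace g (α + β : H → ℂ) :=
      lie_mem_genWeightSpace_of_mem_genWeightSpace hx hy
    rw [hτ α x hx, hτ β y hy, smul_lie, lie_smul, smul_smul, ← Complex.exp_add]
    by_cases hbot : genWeightSpace g (α + β : H → ℂ) = ⊥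
    · rw [hbot, LieSubmodule.mem_bot] at hmem
      rw [hmem, map_zero, smul_zero]
    · exact hτ ⟨_, hbot⟩ _ hmem
  have hext : (LieModule.toEnd ℂ g g : g →ₗ[ℂ] Module.End ℂ g).compr₂ τ.toLinearMap =
      (LieModule.toEnd ℂ g g : g →ₗ[ℂ] Module.End ℂ g).compl₁₂ τ.toLinearMap τ.toLinearMap :=
    linearMap_ext_rootSpace H fun α x hx => linearMap_ext_rootSpace H fun β y hy =>
      hτlie α β hx hy
  exact fun x y => LinearMap.congr_fun₂ hext x y

variable [IsKilling ℂ g]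

theorem exists_smul_of_forall_cartan_apply_eq {σ : g ≃ₗ[ℂ] g} (hσ : σ ∈ lieAut ℂ g)
    (hfix : ∀ h ∈ H, σ h = h) (α : Weight ℂ H g) :
    ∃ c : ℂ, c ≠ 0 ∧ ∀ x ∈ rootSpace H α, σ x = c • x := by
  by_cases hα : α.IsZero
  · exact ⟨1, one_ne_zero, fun x hx =>
      (hfix x ((mem_rootSpace_of_isZero hα).mp hx)).trans (one_smul ℂ x).symm⟩
  obtain ⟨e, he, he0⟩ := α.exists_ne_zero
  obtain ⟨c, hc⟩ := exists_smul_eq_of_mem_rootSpace hα he he0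
    (apply_mem_rootSpace_comp_symm hσ (w := LinearEquiv.refl ℂ H) (fun h => hfix h h.2) he)
  refine ⟨c, ?_, fun x hx => ?_⟩
  · rintro rfl
    exact he0 (σ.map_eq_zero_iff.mp (hc.symm.trans (zero_smul ℂ e)))
  · obtain ⟨d, rfl⟩ := exists_smul_eq_of_mem_rootSpace hα he he0 hx
    rw [map_smul, ← hc, smul_comm]

theorem exists_forall_exp_weight_eq {c : Weight ℂ H g → ℂ} (hc0 : ∀ α, c α ≠ 0)
    (hc : ∀ α β γ : Weight ℂ H g, (γ : H → ℂ) = α + β → c γ = c α * c β) :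
    ∃ z : H, ∀ α : Weight ℂ H g, Complex.exp (α z) = c α := by
  obtain ⟨b⟩ := RootPairing.nonempty_base (IsKilling.rootSystem H)
  obtain ⟨z, hz⟩ := exists_forall_mem_support_apply_eq b fun i => Complex.log (c i)
  have hzero {α : Weight ℂ H g} (hα : α.IsZero) : Complex.exp (α z) = c α := by
    have hsq : c α = c α * c α := hc α α α (by rw [hα.eq, add_zero])
    rw [hα.eq, Pi.zero_apply, Complex.exp_zero]
    exact mul_right_cancel₀ (hc0 α) (by rw [one_mul, ← hsq])
  have hbase (i : H.root) (hi : i ∈ b.support) : Complex.exp ((i : Weight ℂ H g) z) = c i := by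
    rw [hz i hi, Complex.exp_log (hc0 i)]
  have hroot (i : H.root) : Complex.exp ((i : Weight ℂ H g) z) = c i := by
    induction i using b.induction_add with
    | h₀ i ih =>
      obtain ⟨e, -, he0⟩ := (i : Weight ℂ H g).exists_ne_zero
      have : Nontrivial g := nontrivial_of_ne e 0 he0
      have hij := hc i ((IsKilling.rootSystem H).reflectionPerm i i) 0 (by
        rw [coe_reflectionPerm_self, FunLike.coe_zero, add_neg_cancel])
      rw [← hzero Weight.isZero_zero, ← ih, FunLike.coe_zero, Pi.zero_apply,
        Complex.exp_zero] at hij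
      rw [coe_reflectionPerm_self, Pi.neg_apply, Complex.exp_neg]
      exact inv_eq_of_mul_eq_one_right hij.symm
    | h₁ i hi => exact hbase i hi
    | h₂ i j k hk ih hj =>
      have hk' : ((k : Weight ℂ H g) : H → ℂ) = (i : Weight ℂ H g) + (j : Weight ℂ H g) :=
        funext (LinearMap.congr_fun hk)
      rw [hc i j k hk', hk', Pi.add_apply, Complex.exp_add, ih, hbase j hj]
  refine ⟨z, fun α => ?_⟩
  by_cases hα : α.IsZero
  · exact hzero hα
  · exact hroot ⟨α, by simpa using hα⟩

theorem exists_forall_apply_eq_exp_weight_smul {σ : g ≃ₗ[ℂ] g} (hσ : σ ∈ lieAut ℂ g)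
    (hfix : ∀ h ∈ H, σ h = h) :
    ∃ z : H, ∀ α : Weight ℂ H g, ∀ x ∈ rootSpace H α, σ x = Complex.exp (α z) • x := by
  choose c hc0 hc using exists_smul_of_forall_cartan_apply_eq hσ hfix
  obtain ⟨z, hz⟩ := exists_forall_exp_weight_eq hc0 fun α β γ hγ => by
    by_cases hα : α.IsZero
    · obtain ⟨e, he, he0⟩ := α.exists_ne_zero
      have h1 : c α = 1 := smul_left_injective ℂ he0 <| by
        change c α • e = (1 : ℂ) • e
        rw [← hc α e he, hfix e ((mem_rootSpace_of_isZero hα).mp he), one_smul]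
      have hγβ : γ = β := Weight.ext fun h => by rw [hγ, hα.eq, zero_add]
      rw [hγβ, h1, one_mul]
    obtain ⟨e, he, y, hy, hey⟩ := exists_lie_ne_zero_of_coe_eq_add hα hγ
    have hmem : ⁅e, y⁆ ∈ rootSpace H γ :=
      hγ ▸ lie_mem_genWeightSpace_of_mem_genWeightSpace he hy
    refine smul_left_injective ℂ hey ?_
    change c γ • ⁅e, y⁆ = (c α * c β) • ⁅e, y⁆
    rw [← hc γ _ hmem, hσ, hc α e he, hc β y hy, smul_lie, lie_smul, smul_smul]
  exact ⟨z, fun α x hx => by rw [hz, hc α x hx]⟩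

theorem exists_mem_lieAut_forall_apply_eq_exp_weight_smul (z : H) : ∃ τ ∈ lieAut ℂ g,
    ∀ α : Weight ℂ H g, ∀ x ∈ rootSpace H α, τ x = Complex.exp (α z) • x := by
  obtain ⟨h, hh⟩ := exists_injective_weight_apply (K := ℂ) H
  obtain ⟨P, hP⟩ := exists_aeval_ad_eq_smul hh fun α => Complex.exp (α z)
  obtain ⟨Q, hQ⟩ := exists_aeval_ad_eq_smul hh fun α => Complex.exp (-α z)
  let τ : g ≃ₗ[ℂ] g := LinearEquiv.ofLinearMap (Polynomial.aeval (ad ℂ g (h : g)) P)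
    (Polynomial.aeval (ad ℂ g (h : g)) Q)
    (linearMap_ext_rootSpace H fun α x hx => by
      rw [LinearMap.comp_apply, hQ α x hx, map_smul, hP α x hx, smul_smul, ← Complex.exp_add,
        neg_add_cancel, Complex.exp_zero, one_smul, LinearMap.id_apply])
    (linearMap_ext_rootSpace H fun α x hx => by
      rw [LinearMap.comp_apply, hP α x hx, map_smul, hQ α x hx, smul_smul, ← Complex.exp_add,
        add_neg_cancel, Complex.exp_zero, one_smul, LinearMap.id_apply])
  exact ⟨τ, mem_lieAut_of_forall_apply_eq_exp_weight_smul hP, hP⟩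

-- Writing `σ` as the square of a torus element `τ`, and using that `ψ` inverts the torus, `σ` is
-- the commutator of `τ` and `ψ`.
theorem mem_adjointGroup_of_forall_cartan_apply_eq {σ ψ : g ≃ₗ[ℂ] g} (hσ : σ ∈ lieAut ℂ g)
    (hfix : ∀ h ∈ H, σ h = h) (hψ : ψ ∈ adjointGroup g) (hψH : ∀ h ∈ H, ψ h = -h) :
    σ ∈ adjointGroup g := by
  obtain ⟨z, hz⟩ := exists_forall_apply_eq_exp_weight_smul hσ hfix
  obtain ⟨τ, hτ, hτz⟩ := exists_mem_lieAut_forall_apply_eq_exp_weight_smul ((1 / 2 : ℂ) • z)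
  have hcomm : σ * (ψ * τ) = τ * ψ := by
    refine LinearEquiv.toLinearMap_injective (linearMap_ext_rootSpace H fun α x hx => ?_)
    have hψx := apply_mem_rootSpace_comp_symm (adjointGroup_le_lieAut hψ)
      (w := LinearEquiv.neg ℂ) (fun h => hψH h h.2) hx
    have hcomp : (α : H → ℂ) ∘ (LinearEquiv.neg ℂ : H ≃ₗ[ℂ] H).symm = (-α : Weight ℂ H g) :=
      funext fun h => α.toLinear.map_neg h
    rw [hcomp] at hψx
    change σ (ψ (τ x)) = τ (ψ x)
    rw [hτz _ x hx, map_smul, map_smul, hz _ _ hψx, hτz _ _ hψx, smul_smul, ← Complex.exp_add]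
    have hhalf (β : Weight ℂ H g) : β ((1 / 2 : ℂ) • z) = 1 / 2 * β z := β.toLinear.map_smul _ z
    rw [hhalf, hhalf, Weight.coe_neg, Pi.neg_apply]
    congr 2
    ring
  have hσeq : σ = τ * ψ * τ⁻¹ * ψ⁻¹ := by
    rw [eq_mul_inv_iff_mul_eq, eq_mul_inv_iff_mul_eq, mul_assoc, hcomm]
  rw [hσeq]
  exact mul_mem (conj_mem_adjointGroup hτ hψ) (inv_mem hψ)

theorem mem_adjointGroup_of_mem_lieAut_of_mem_primeGroup {σ ψ : g ≃ₗ[ℂ] g} (hσ : σ ∈ lieAut ℂ g)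
    (hσp : σ ∈ primeGroup (adjointGroup g)) (hψ : ψ ∈ adjointGroup g) (hψH : ∀ h ∈ H, ψ h = -h) :
    σ ∈ adjointGroup g := by
  obtain ⟨u, hu, huH⟩ := exists_mem_adjointGroup_mul_apply_mem_cartan_iff H hσ
  have huσ : u * σ ∈ lieAut ℂ g := mul_mem (adjointGroup_le_lieAut hu) hσ
  obtain ⟨w, hw, hwH⟩ := exists_mem_adjointGroup_forall_cartan_apply_eq huσ
    (mul_mem (adjointGroup_le_primeGroup hu) hσp) huH
  have hmem : w⁻¹ * (u * σ) ∈ adjointGroup g :=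
    mem_adjointGroup_of_forall_cartan_apply_eq
      (mul_mem (inv_mem (adjointGroup_le_lieAut hw)) huσ)
      (fun h hh => (congrArg w.symm (hwH h hh)).symm.trans (w.symm_apply_apply h)) hψ hψH
  rwa [Subgroup.mul_mem_cancel_left _ (inv_mem hw), Subgroup.mul_mem_cancel_left _ hu] at hmem

end Torus

section PrimeGroup

variable {g : Type*} [LieRing g] [LieAlgebra ℂ g] [FiniteDimensional ℂ g]

attribute [local instance] LieRing.ofAssociativeRing in
theorem preservesAdTraces_of_mem_primeGroup {φ : g ≃ₗ[ℂ] g}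
    (hφ : φ ∈ primeGroup (adjointGroup g)) : PreservesAdTraces φ := fun k =>
  hφ _ (isPolyFun_trace_pow (ad ℂ g).toLinearMap k) fun _ hu =>
    trace_ad_pow_of_mem_lieAut (adjointGroup_le_lieAut hu) k

end PrimeGroup

/-- Let `g` be a complex simple Lie algebra whose Chevalley involution
`ψ` is an inner automorphism, and let `G = Aut(g)⁰` be its adjoint group acting on
`V = g`.  Then `G'/G` is the group of order 2 generated by the coset of the scalar map
`-1`; equivalently `G' = G ∪ (-1)·G` and `-1 ∉ G`. -/
theorem stmt8 (g : Type) [LieRing g] [LieAlgebra ℂ g] [FiniteDimensional ℂ g]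
    [LieAlgebra.IsSimple ℂ g]
    (t : LieSubalgebra ℂ g) [t.IsCartanSubalgebra]
    -- the Chevalley involution `ψ`, assumed inner
    (ψ : g ≃ₗ⁅ℂ⁆ g) (hψ2 : ∀ x : g, ψ (ψ x) = x) (hψt : ∀ x ∈ t, ψ x = -x)
    (hinner : ψ.toLinearEquiv ∈ adjointGroup g) :
    (LinearEquiv.neg ℂ : g ≃ₗ[ℂ] g) ∉ adjointGroup g ∧
    (∀ φ : g ≃ₗ[ℂ] g, φ ∈ primeGroup (adjointGroup g) ↔
      (φ ∈ adjointGroup g ∨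
        ∃ u ∈ adjointGroup g, φ = (LinearEquiv.neg ℂ : g ≃ₗ[ℂ] g) * u)) := by
  have hneg := neg_mem_primeGroup_adjointGroup hinner hψt
  refine ⟨fun h => neg_notMem_lieAut (LieAlgebra.IsSimple.non_abelian ℂ) (adjointGroup_le_lieAut h),
    fun φ => ⟨fun hφ => ?_, ?_⟩⟩
  · obtain ⟨σ, hσ, rfl | rfl⟩ :=
      (preservesAdTraces_of_mem_primeGroup hφ).exists_mem_lieAut_eq_or_eq_neg_mul
    · exact .inl (mem_adjointGroup_of_mem_lieAut_of_mem_primeGroup hσ hφ hinner hψt)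
    · have hσp := (Subgroup.mul_mem_cancel_left _ hneg).mp hφ
      exact .inr ⟨σ, mem_adjointGroup_of_mem_lieAut_of_mem_primeGroup hσ hσp hinner hψt, rfl⟩
  · rintro (hφ | ⟨u, hu, rfl⟩)
    · exact adjointGroup_le_primeGroup hφ
    · exact mul_mem hneg (adjointGroup_le_primeGroup hu)
end
end

section
/- Let V be a finite-dimensional complex vector space, G ⊆ GL(V) a reductive subgroup, and let U ⊆ V be the set of points whose G-orbit is closed and whose G-stabilizer is trivial. If the complement V ∖ U has codimension at least 2 in V, then G' = G. -/
noncomputable section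

namespace Stmt10

/-- A subset of a complex vector space is Zariski closed if it is the common zero locus
of a family of polynomial functions. -/
def IsZariskiClosed {W : Type*} [AddCommGroup W] [Module ℂ W] (S : Set W) : Prop :=
  ∃ P : Set (W → ℂ), (∀ p ∈ P, IsPolyFun p) ∧ S = {w | ∀ p ∈ P, p w = 0}

/-- A subgroup `G ⊆ GL(V)` is linearly reductive if every rational finite-dimensional
representation of `G` (one whose matrix coefficients are polynomial in the entries of
`g ∈ G ⊆ End(V)` and in `det(g)⁻¹`) is completely reducible: every invariant subspace
admits an invariant complement. -/
def IsLinearlyReductive {V : Type} [AddCommGroup V] [Module ℂ V]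
    (G : Subgroup (V ≃ₗ[ℂ] V)) : Prop :=
  ∀ (W : Type) [AddCommGroup W] [Module ℂ W] [FiniteDimensional ℂ W]
    (ρ : G →* (W ≃ₗ[ℂ] W)),
    (∀ (l : W →ₗ[ℂ] ℂ) (w : W), ∃ p : ((V →ₗ[ℂ] V) × ℂ) → ℂ, IsPolyFun p ∧
      ∀ g : G, l (ρ g w) =
        p (((g : V ≃ₗ[ℂ] V) : V →ₗ[ℂ] V),
          (LinearMap.det ((g : V ≃ₗ[ℂ] V) : V →ₗ[ℂ] V))⁻¹)) →
    ∀ U : Submodule ℂ W, (∀ g : G, ∀ w ∈ U, ρ g w ∈ U) →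
      ∃ U' : Submodule ℂ W, (∀ g : G, ∀ w ∈ U', ρ g w ∈ U') ∧ IsCompl U U'

/-- `G` is a reductive algebraic subgroup of `GL(V)`: it is Zariski closed in `End(V)`
(intersected with `GL(V)`) and linearly reductive. -/
def IsReductiveSubgroup {V : Type} [AddCommGroup V] [Module ℂ V]
    (G : Subgroup (V ≃ₗ[ℂ] V)) : Prop :=
  (∃ Z : Set (V →ₗ[ℂ] V), IsZariskiClosed Z ∧
    ∀ φ : V ≃ₗ[ℂ] V, φ ∈ G ↔ (φ : V →ₗ[ℂ] V) ∈ Z) ∧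
  IsLinearlyReductive G

variable (n : ℕ)

/-- The ideal of polynomials vanishing on a subset of `ℂⁿ`. -/
def vanishingIdeal (S : Set (Fin n → ℂ)) : Ideal (MvPolynomial (Fin n) ℂ) where
  carrier := {p | ∀ v ∈ S, MvPolynomial.eval v p = 0}
  zero_mem' := by intro v _; simp
  add_mem' := by intro a b ha hb v hv; simp [ha v hv, hb v hv]
  smul_mem' := by intro c p hp v hv; simp [smul_eq_mul, hp v hv]

/-!
Let `φ` preserve the invariant polynomials. Reductivity lets invariant polynomials separate closed
orbits, so on `U ∩ φ⁻¹(U)` one has `φ x = γ(x) x` for a unique `γ(x) ∈ G`. The orbit map of a point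
`v ∈ U` is an injective morphism onto a closed orbit, hence in characteristic zero, by homogeneity,
an isomorphism; together with reductivity this produces a `G`-equivariant polynomial map
`F : V → End V` with `F(v) = 1`, and `γ(x) = F(φ x) F(x)⁻¹` is a rational expression regular near
`v`. As the complement of `U ∩ φ⁻¹(U)` has codimension at least two, `γ` extends to a polynomial map
`Q : V → End V`, and `Q(0) ∈ G` by density. Comparing linear terms in `Q(x) x = φ x` gives
`φ = Q(0)`.
-/

section CommutativeAlgebra

open Polynomial TensorProduct

section TensorSquare

variable {K T : Type*} [Field K] [CommRing T] [Algebra K T] {b : T}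

lemma isIntegral_of_isNilpotent_tmul_one_sub
    (hb : IsNilpotent (b ⊗ₜ[K] (1 : T) - (1 : T) ⊗ₜ[K] b)) : IsIntegral K b := by
  rw [← isAlgebraic_iff_isIntegral]
  by_contra htr
  have hinj : Function.Injective (aeval b : K[X] →ₐ[K] T) :=
    transcendental_iff_injective.1 htr
  let φ : K[X] ⊗[K] K[X] →ₐ[K] T ⊗[K] T := Algebra.TensorProduct.map (aeval b) (aeval b)
  have hφ : Function.Injective φ := TensorProduct.map_injective_of_flat_flat
    (aeval b : K[X] →ₐ[K] T).toLinearMap (aeval b : K[X] →ₐ[K] T).toLinearMap hinj hinj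
  have hX : IsNilpotent ((X : K[X]) ⊗ₜ[K] (1 : K[X]) - (1 : K[X]) ⊗ₜ[K] (X : K[X])) := by
    rw [← IsNilpotent.map_iff hφ]
    simpa [φ] using hb
  let setSecondZero : K[X] ⊗[K] K[X] →ₐ[K] K[X] :=
    Algebra.TensorProduct.lift (AlgHom.id K K[X]) (aeval (0 : K[X])) fun _ _ => Commute.all _ _
  simpa [setSecondZero] using hX.map setSecondZero

lemma separable_minpoly_of_isReduced [PerfectField K] [IsReduced T] (hb : IsIntegral K b) :
    (minpoly K b).Separable := by
  refine PerfectField.separable_iff_squarefree.2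
    (IsRadical.squarefree (minpoly.ne_zero hb) fun n p hp => ?_)
  rw [minpoly.dvd_iff] at hp ⊢
  rw [map_pow] at hp
  exact eq_zero_of_pow_eq_zero hp

/- `b ⊗ 1` and `1 ⊗ b` are roots of the same separable polynomial differing by a nilpotent, so they
coincide by the uniqueness part of Newton's lemma. -/
lemma tmul_one_eq_one_tmul_of_isNilpotent_sub [PerfectField K] [IsReduced T]
    (hb : IsNilpotent (b ⊗ₜ[K] (1 : T) - (1 : T) ⊗ₜ[K] b)) :
    b ⊗ₜ[K] (1 : T) = (1 : T) ⊗ₜ[K] b := by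
  have hleft : aeval (b ⊗ₜ[K] (1 : T)) (minpoly K b) = 0 := by
    simpa using aeval_algHom_apply
      (Algebra.TensorProduct.includeLeft : T →ₐ[K] T ⊗[K] T) b (minpoly K b)
  have hright : aeval ((1 : T) ⊗ₜ[K] b) (minpoly K b) = 0 := by
    simpa using aeval_algHom_apply
      (Algebra.TensorProduct.includeRight : T →ₐ[K] T ⊗[K] T) b (minpoly K b)
  have hunit : IsUnit (aeval (b ⊗ₜ[K] (1 : T)) (derivative (minpoly K b))) := by
    obtain ⟨u, w, huw⟩ := separable_minpoly_of_isReduced (isIntegral_of_isNilpotent_tmul_one_sub hb)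
    have := congrArg (aeval (b ⊗ₜ[K] (1 : T))) huw
    simp only [map_add, map_mul, hleft, mul_zero, zero_add, map_one] at this
    exact IsUnit.of_mul_eq_one_right _ this
  have hnewton := existsUnique_nilpotent_sub_and_aeval_eq_zero
    (by rw [hleft]; exact IsNilpotent.zero) hunit
  exact hnewton.unique ⟨by rw [sub_self]; exact IsNilpotent.zero, hleft⟩ ⟨hb, hright⟩

lemma mem_range_algebraMap_of_tmul_one_eq_one_tmul [Nontrivial T]
    (hb : b ⊗ₜ[K] (1 : T) = (1 : T) ⊗ₜ[K] b) : b ∈ (algebraMap K T).range := by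
  obtain ⟨E, hE⟩ := LinearMap.exists_leftInverse_of_injective (Algebra.linearMap K T)
    (LinearMap.ker_eq_bot.2 (FaithfulSMul.algebraMap_injective K T))
  have hE1 : E 1 = 1 := by simpa using LinearMap.congr_fun hE 1
  have : E b • (1 : T) = b := by
    simpa [hE1] using congrArg (TensorProduct.lid K T ∘ LinearMap.rTensor T E) hb
  exact ⟨E b, by rw [Algebra.algebraMap_eq_smul_one, this]⟩

end TensorSquare

section Characters

variable {K T : Type*} [Field K] [IsAlgClosed K] [CommRing T] [Algebra K T]
  [Algebra.FiniteType K T]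

lemma isNilpotent_of_forall_algHom_eq_zero {t : T} (ht : ∀ χ : T →ₐ[K] K, χ t = 0) :
    IsNilpotent t := by
  have : IsJacobsonRing T := isJacobsonRing_of_finiteType (A := K)
  rw [← mem_nilradical, nilradical, Ideal.radical_eq_jacobson, Ideal.jacobson, Submodule.mem_sInf]
  rintro J ⟨-, hJ⟩
  let _ : Field (T ⧸ J) := Ideal.Quotient.field J
  have : Module.Finite K (T ⧸ J) := finite_of_finite_type_of_isJacobsonRing K (T ⧸ J)
  let e : K ≃ₐ[K] T ⧸ J := AlgEquiv.ofBijective (Algebra.ofId K (T ⧸ J))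
    IsAlgClosed.algebraMap_bijective_of_isIntegral
  have hχ : e.symm (Ideal.Quotient.mk J t) = 0 :=
    ht (e.symm.toAlgHom.comp (Ideal.Quotient.mkₐ K J))
  exact Ideal.Quotient.eq_zero_iff_mem.1 ((map_eq_zero_iff _ e.symm.injective).1 hχ)

variable {A : Subalgebra K T}

lemma isNilpotent_tmul_one_sub_of_separates
    (hA : ∀ χ₁ χ₂ : T →ₐ[K] K, (∀ a ∈ A, χ₁ a = χ₂ a) → χ₁ = χ₂) (b : T) :
    IsNilpotent (b ⊗ₜ[A] (1 : T) - (1 : T) ⊗ₜ[A] b) := by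
  have : Algebra.FiniteType A T := Algebra.FiniteType.of_restrictScalars_finiteType K A T
  have : Algebra.FiniteType K (T ⊗[A] T) := Algebra.FiniteType.trans (S := T) ‹_› inferInstance
  refine isNilpotent_of_forall_algHom_eq_zero (K := K) fun χ => ?_
  let inl : T →ₐ[K] T ⊗[A] T := Algebra.TensorProduct.includeLeft
  let inr : T →ₐ[K] T ⊗[A] T :=
    (Algebra.TensorProduct.includeRight : T →ₐ[A] T ⊗[A] T).restrictScalars K
  have hχ : χ.comp inl = χ.comp inr := hA _ _ fun a ha =>
    congrArg χ (Algebra.TensorProduct.tmul_one_eq_one_tmul (⟨a, ha⟩ : A))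
  rw [map_sub, sub_eq_zero]
  exact AlgHom.congr_fun hχ b

end Characters

section Birational

lemma isNilpotent_tmul_one_sub_map {A F B T : Type*} [CommRing A] [CommRing F] [CommRing B]
    [CommRing T] [Algebra A F] [Algebra A B] [Algebra A T] [Algebra F T] [IsScalarTower A F T]
    (f : B →ₐ[A] T) {b : B} (hb : IsNilpotent (b ⊗ₜ[A] (1 : B) - (1 : B) ⊗ₜ[A] b)) :
    IsNilpotent (f b ⊗ₜ[F] (1 : T) - (1 : T) ⊗ₜ[F] f b) := by
  let inl : T →ₐ[F] T ⊗[F] T := Algebra.TensorProduct.includeLeft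
  let inr : T →ₐ[F] T ⊗[F] T := Algebra.TensorProduct.includeRight
  let φ : B ⊗[A] B →ₐ[A] T ⊗[F] T := Algebra.TensorProduct.lift
    ((inl.restrictScalars A).comp f) ((inr.restrictScalars A).comp f) fun _ _ => Commute.all _ _
  simpa [φ, inl, inr] using hb.map φ

lemma exists_smul_mem_range_of_algebraMap_mem_range {A B : Type*} [CommRing A] [CommRing B]
    [Algebra A B] (M : Submonoid A) {b : B}
    (hb : algebraMap B (Localization (Algebra.algebraMapSubmonoid B M)) b ∈
      (algebraMap (Localization M) (Localization (Algebra.algebraMapSubmonoid B M))).range) :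
    ∃ a ∈ M, a • b ∈ (algebraMap A B).range := by
  obtain ⟨k, hk⟩ := hb
  obtain ⟨⟨c, a⟩, hca⟩ := IsLocalization.surj M k
  have hloc : algebraMap B (Localization (Algebra.algebraMapSubmonoid B M)) (algebraMap A B a * b) =
      algebraMap B (Localization (Algebra.algebraMapSubmonoid B M)) (algebraMap A B c) := by
    have := congrArg (algebraMap (Localization M) (Localization (Algebra.algebraMapSubmonoid B M)))
      hca
    rw [map_mul, hk, ← IsScalarTower.algebraMap_apply, ← IsScalarTower.algebraMap_apply,
      IsScalarTower.algebraMap_apply A B _ a.1, IsScalarTower.algebraMap_apply A B _ c] at this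
    rw [map_mul, mul_comm, this]
  obtain ⟨⟨_, x, hx, rfl⟩, hxac⟩ :=
    IsLocalization.exists_of_eq (M := Algebra.algebraMapSubmonoid B M) hloc
  refine ⟨x * a, mul_mem hx a.2, x * c, ?_⟩
  rw [Algebra.smul_def, map_mul, map_mul, mul_assoc]
  exact hxac.symm

/- `A` localized at the minimal prime `p` is a field of characteristic zero, so there the assertion
is about a reduced algebra over a perfect field. -/
lemma exists_notMem_smul_mem_range_of_isNilpotent_tmul_one_sub (K : Type*) {A B : Type*} [Field K]
    [CharZero K] [CommRing A] [CommRing B] [Algebra K A] [Algebra A B] [FaithfulSMul A B]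
    [IsReduced B] {p : Ideal A} (hp : p ∈ minimalPrimes A) {b : B}
    (hb : IsNilpotent (b ⊗ₜ[A] (1 : B) - (1 : B) ⊗ₜ[A] b)) :
    ∃ a ∉ p, a • b ∈ (algebraMap A B).range := by
  have : p.IsPrime := hp.1.1
  have : IsReduced A := isReduced_of_injective _ (FaithfulSMul.algebraMap_injective A B)
  have : Ring.KrullDimLE 0 (Localization.AtPrime p) := .of_isLocalization _ hp _
  let : Field (Localization.AtPrime p) := Ring.KrullDimLE.isField_of_isReduced.toField
  have : CharZero (Localization.AtPrime p) :=
    charZero_of_injective_algebraMap (algebraMap K (Localization.AtPrime p)).injective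
  let M := Algebra.algebraMapSubmonoid B p.primeCompl
  have : IsReduced (Localization M) := isReduced_localizationPreserves M _ inferInstance
  have hM : (0 : B) ∉ M := by
    rintro ⟨x, hx, hx0⟩
    exact hx (((FaithfulSMul.algebraMap_eq_zero_iff A B).1 hx0) ▸ p.zero_mem)
  have : Nontrivial (Localization M) := (Localization.monoidOf M).nontrivial hM
  exact exists_smul_mem_range_of_algebraMap_mem_range p.primeCompl
    (mem_range_algebraMap_of_tmul_one_eq_one_tmul
      (tmul_one_eq_one_tmul_of_isNilpotent_sub (isNilpotent_tmul_one_sub_map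
        (F := Localization.AtPrime p) (IsScalarTower.toAlgHom A B (Localization M)) hb)))

lemma exists_ne_zero_smul_mem_of_separates {K B : Type*} [Field K] [CharZero K] [IsAlgClosed K]
    [CommRing B] [IsReduced B] [Nontrivial B] [Algebra K B] [Algebra.FiniteType K B]
    {A : Subalgebra K B} (hA : ∀ χ₁ χ₂ : B →ₐ[K] K, (∀ a ∈ A, χ₁ a = χ₂ a) → χ₁ = χ₂)
    {κ : Type*} [Finite κ] (b : κ → B) : ∃ a : A, a ≠ 0 ∧ ∀ i, a • b i ∈ A := by
  have := Fintype.ofFinite κ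
  classical
  obtain ⟨p, hp⟩ := Ideal.nonempty_minimalPrimes (I := (⊥ : Ideal A)) bot_ne_top
  have : p.IsPrime := hp.1.1
  choose a ha hab using fun i => exists_notMem_smul_mem_range_of_isNilpotent_tmul_one_sub K hp
    (isNilpotent_tmul_one_sub_of_separates hA (b i))
  refine ⟨∏ i, a i, fun h => ?_, fun i => ?_⟩
  · exact prod_mem (S := p.primeCompl) (fun i _ => ha i) (h ▸ p.zero_mem)
  · rw [← Finset.prod_erase_mul _ _ (Finset.mem_univ i), mul_smul]
    obtain ⟨c, hc⟩ := hab i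
    exact A.mul_mem (Subtype.mem _) (hc ▸ c.2)

end Birational

end CommutativeAlgebra

section BigSets

open MvPolynomial

lemma exists_reduced_fraction_dvd {R : Type*} [CommRing R] [IsDomain R]
    [UniqueFactorizationMonoid R] {d₀ : R} (hd₀ : d₀ ≠ 0) (N₀ : R) :
    ∃ d₁ ≠ 0, ∃ N₁, ∀ d N, d₀ * N = N₀ * d → ∃ e, d = d₁ * e ∧ N = N₁ * e := by
  obtain ⟨d₁, N₁, c, hrel, rfl, rfl⟩ :=
    UniqueFactorizationMonoid.exists_reduced_factors d₀ hd₀ N₀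
  have hc : c ≠ 0 := left_ne_zero_of_mul hd₀
  have hd₁ : d₁ ≠ 0 := right_ne_zero_of_mul hd₀
  refine ⟨d₁, hd₁, N₁, fun d N h => ?_⟩
  have hcross : d₁ * N = N₁ * d := mul_left_cancel₀ hc (by rw [← mul_assoc, h, mul_assoc])
  obtain ⟨e, rfl⟩ : d₁ ∣ d := hrel.dvd_of_dvd_mul_left (hcross ▸ dvd_mul_right _ _)
  exact ⟨e, rfl, mul_left_cancel₀ hd₁ (by rw [hcross]; ring)⟩

lemma height_inf {R : Type*} [CommRing R] (I J : Ideal R) :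
    (I ⊓ J).height = min I.height J.height := by
  refine le_antisymm (le_min (Ideal.height_mono inf_le_left) (Ideal.height_mono inf_le_right)) ?_
  rw [(I ⊓ J).height_eq_inf_minimalPrimes]
  refine le_iInf₂ fun p hp => ?_
  have : p.IsPrime := hp.1.1
  obtain h | h := (Ideal.IsPrime.inf_le this).1 hp.1.2
  · exact (min_le_left _ _).trans (Ideal.height_mono h)
  · exact (min_le_right _ _).trans (Ideal.height_mono h)

lemma isPrincipal_of_height_le_one {R : Type*} [CommRing R] [IsDomain R]
    [UniqueFactorizationMonoid R] {p : Ideal R} [p.IsPrime] (hp : p.height ≤ 1) :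
    p.IsPrincipal := by
  obtain h | h := Order.le_one_iff.1 hp
  · rw [Ideal.height_eq_zero_iff_eq_bot.1 h]
    exact bot_isPrincipal
  · exact UniqueFactorizationMonoid.isPrincipal_of_height_eq_one h

variable {ι K : Type*} [Field K]

lemma vanishingIdeal_union (S T : Set (ι → K)) : MvPolynomial.vanishingIdeal K (S ∪ T) =
    MvPolynomial.vanishingIdeal K S ⊓ MvPolynomial.vanishingIdeal K T := by
  ext p
  simp only [Ideal.mem_inf, mem_vanishingIdeal_iff, Set.mem_union, or_imp, forall_and]

lemma height_vanishingIdeal_preimage (f : (ι → K) ≃ (ι → K))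
    (e : MvPolynomial ι K ≃ₐ[K] MvPolynomial ι K) (hef : ∀ x p, eval x (e p) = eval (f x) p)
    (S : Set (ι → K)) : (MvPolynomial.vanishingIdeal K (f ⁻¹' S)).height =
      (MvPolynomial.vanishingIdeal K S).height := by
  rw [← e.toRingEquiv.height_comap]
  congr 1
  ext p
  simp only [Ideal.mem_comap, mem_vanishingIdeal_iff, aeval_eq_eval, Set.mem_preimage]
  exact f.forall_congr fun x => by rw [← hef]; rfl

/-- The automorphism `p(x) ↦ p(x + a)` of a polynomial ring. Translations act transitively on the
maximal ideals, which therefore all have the same height. -/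
def translate (a : ι → K) : MvPolynomial ι K ≃ₐ[K] MvPolynomial ι K :=
  AlgEquiv.ofAlgHom (aeval fun i => X i + C (a i)) (aeval fun i => X i - C (a i))
    (by ext i; simp) (by ext i; simp)

lemma eval_translate (a x : ι → K) (p : MvPolynomial ι K) :
    eval x (translate a p) = eval (x + a) p := by
  have : (aeval x).comp (translate a).toAlgHom = aeval (R := K) (x + a) := by
    ext i; simp [translate]
  simpa [aeval_eq_eval] using AlgHom.congr_fun this p

/-- A subset of affine space is big if the (Zariski closure of the) complement has codimension at
least two, codimension being encoded as the height of the vanishing ideal. -/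
def IsBig (U : Set (ι → K)) : Prop :=
  2 ≤ (MvPolynomial.vanishingIdeal K Uᶜ).height

namespace IsBig

variable {U V : Set (ι → K)}

lemma inter (hU : IsBig U) (hV : IsBig V) : IsBig (U ∩ V) := by
  rw [IsBig, Set.compl_inter, vanishingIdeal_union, height_inf]
  exact le_min hU hV

lemma preimage (hU : IsBig U) (f : (ι → K) ≃ (ι → K))
    (e : MvPolynomial ι K ≃ₐ[K] MvPolynomial ι K) (hef : ∀ x p, eval x (e p) = eval (f x) p) :
    IsBig (f ⁻¹' U) := by
  rw [IsBig, ← Set.preimage_compl, height_vanishingIdeal_preimage f e hef]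
  exact hU

lemma eq_zero_of_forall_eval_eq_zero [Infinite K] (hU : IsBig U) {p : MvPolynomial ι K}
    (hp : ∀ x ∈ U, eval x p = 0) : p = 0 := by
  have hne : MvPolynomial.vanishingIdeal K Uᶜ ≠ ⊥ := by
    intro h
    rw [IsBig, h, Ideal.height_bot] at hU
    exact absurd hU (by simp)
  obtain ⟨r, hr, hr0⟩ := Submodule.exists_mem_ne_zero_of_ne_bot hne
  refine (mul_eq_zero.1 (MvPolynomial.funext fun x => ?_ : p * r = 0)).resolve_right hr0
  rw [map_mul, map_zero, mul_eq_zero]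
  by_cases hx : x ∈ U
  · exact .inl (hp x hx)
  · exact .inr (hr x hx)

end IsBig

variable [IsAlgClosed K] [Finite ι]

lemma IsBig.exists_eval_eq_zero_of_irreducible {U : Set (ι → K)} (hU : IsBig U)
    {q : MvPolynomial ι K} (hq : Irreducible q) : ∃ x ∈ U, eval x q = 0 := by
  by_contra! hne
  have hsub : zeroLocus K (Ideal.span {q}) ⊆ Uᶜ := fun x hx hxU =>
    hne x hxU (by simpa [aeval_eq_eval] using hx q (Ideal.mem_span_singleton_self q))
  have : (Ideal.span {q}).IsPrime := (Ideal.span_singleton_prime hq.ne_zero).2 hq.prime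
  have hle : MvPolynomial.vanishingIdeal K Uᶜ ≤ Ideal.span {q} :=
    (vanishingIdeal_anti_mono hsub).trans_eq (IsPrime.vanishingIdeal_zeroLocus _)
  have htwo : (2 : ℕ∞) ≤ 1 :=
    (hU.trans (Ideal.height_mono hle)).trans (Ideal.height_span_singleton_le_one hq.not_isUnit)
  exact absurd htwo (by decide)

lemma height_eq_ringKrullDim_of_isMaximal (m : Ideal (MvPolynomial ι K)) [m.IsMaximal] :
    m.height = ringKrullDim (MvPolynomial ι K) := by
  refine le_antisymm Ideal.height_le_ringKrullDim_of_isPrime ?_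
  rw [ringKrullDim_le_iff_isMaximal_height_le]
  intro m' _
  obtain ⟨x, rfl⟩ := isMaximal_iff_eq_vanishingIdeal_singleton.1 ‹m.IsMaximal›
  obtain ⟨y, rfl⟩ := isMaximal_iff_eq_vanishingIdeal_singleton.1 ‹m'.IsMaximal›
  have := height_vanishingIdeal_preimage (Equiv.addRight (x - y)) (translate (x - y))
    (fun z p => eval_translate (x - y) z p) {x}
  rw [show (Equiv.addRight (x - y)) ⁻¹' {x} = {y} by ext z; simp] at this
  rw [this]

lemma two_le_height_of_ringKrullDim_quotient_add_two_le {I : Ideal (MvPolynomial ι K)}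
    (hI : ringKrullDim (MvPolynomial ι K ⧸ I) + 2 ≤ ringKrullDim (MvPolynomial ι K)) :
    2 ≤ I.height := by
  by_contra! hlt
  have hle : I.height ≤ 1 := Order.le_of_lt_add_one hlt
  obtain ⟨k, hk⟩ := ENat.ne_top_iff_exists.1 (hlt.trans_le le_top).ne
  obtain ⟨p, _, hIp, hp⟩ := Ideal.exists_isPrime_height_eq hk.symm
  obtain ⟨q, rfl⟩ := isPrincipal_of_height_le_one (hp.trans_le (hk.trans_le hle))
  obtain ⟨m, hm, hqm⟩ := Ideal.exists_le_maximal _ (‹Ideal.IsPrime _›.ne_top)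
  have hdim : ringKrullDim (MvPolynomial ι K) ≤ ringKrullDim (MvPolynomial ι K ⧸ I) + 1 := calc
    ringKrullDim (MvPolynomial ι K) = m.height := (height_eq_ringKrullDim_of_isMaximal m).symm
    _ ≤ ringKrullDim (MvPolynomial ι K ⧸ Ideal.span {q}) + 1 :=
      Ideal.height_le_ringKrullDim_quotient_add_one (hqm (Ideal.mem_span_singleton_self q))
    _ ≤ ringKrullDim (MvPolynomial ι K ⧸ I) + 1 := by
      gcongr
      exact ringKrullDim_le_of_surjective _ (Ideal.Quotient.factor_surjective hIp)
  have hcard : ringKrullDim (MvPolynomial ι K) = (Nat.card ι : ℕ) := by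
    rw [ringKrullDim_of_isNoetherianRing, ringKrullDim_eq_zero_of_field, zero_add]
  have : ringKrullDim (MvPolynomial ι K) + 1 ≤ ringKrullDim (MvPolynomial ι K) := calc
    _ ≤ ringKrullDim (MvPolynomial ι K ⧸ I) + 1 + 1 := by gcongr
    _ ≤ _ := by rwa [add_assoc, one_add_one_eq_two]
  rw [hcard] at this
  exact absurd (show Nat.card ι + 1 ≤ Nat.card ι by exact_mod_cast this) (by omega)

/-- A function is locally rational on `U` if near every point of `U` it is a quotient `N / d` of
polynomials; the identity is demanded on all of `U`, multiplied out to avoid junk values. -/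
def IsLocallyRationalOn (γ : (ι → K) → K) (U : Set (ι → K)) : Prop :=
  ∀ x₀ ∈ U, ∃ d N : MvPolynomial ι K, eval x₀ d ≠ 0 ∧ ∀ x ∈ U, γ x * eval x d = eval x N

/- In the reduced fraction `N₁ / d₁` representing `γ` the denominator `d₁` divides every local
denominator, so it has no zero on `U` and hence no irreducible factor. -/
lemma IsLocallyRationalOn.exists_eq_eval {U : Set (ι → K)} {γ : (ι → K) → K}
    (hγ : IsLocallyRationalOn γ U) (hU : IsBig U) :
    ∃ Q : MvPolynomial ι K, ∀ x ∈ U, γ x = eval x Q := by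
  obtain ⟨x₀, hx₀⟩ : U.Nonempty := by
    rw [Set.nonempty_iff_ne_empty]
    rintro rfl
    exact one_ne_zero (hU.eq_zero_of_forall_eval_eq_zero (p := 1) (by simp))
  obtain ⟨d₀, N₀, hd₀, h₀⟩ := hγ x₀ hx₀
  obtain ⟨d₁, hd₁, N₁, hred⟩ :=
    exists_reduced_fraction_dvd (d₀ := d₀) (by rintro rfl; simp at hd₀) N₀
  have hdvd : ∀ d N, (∀ x ∈ U, γ x * eval x d = eval x N) → ∃ e, d = d₁ * e ∧ N = N₁ * e :=
    fun d N h => hred d N <| sub_eq_zero.1 <| hU.eq_zero_of_forall_eval_eq_zero fun x hx => by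
      simp only [map_sub, map_mul, ← h x hx, ← h₀ x hx]
      ring
  have hunit : IsUnit d₁ := by
    by_contra hnu
    obtain ⟨q, hq, r, rfl⟩ := WfDvdMonoid.exists_irreducible_factor hnu hd₁
    obtain ⟨x, hx, hxq⟩ := hU.exists_eval_eq_zero_of_irreducible hq
    obtain ⟨d, N, hdx, hd⟩ := hγ x hx
    obtain ⟨e, rfl, -⟩ := hdvd d N hd
    simp [hxq] at hdx
  obtain ⟨u, hu⟩ := hunit.exists_right_inv
  refine ⟨N₁ * u, fun x hx => ?_⟩
  obtain ⟨d, N, hdx, hd⟩ := hγ x hx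
  obtain ⟨e, rfl, rfl⟩ := hdvd d N hd
  have hux : eval x d₁ * eval x u = 1 := by rw [← map_mul, hu, map_one]
  have hγx := hd x hx
  rw [map_mul] at hdx
  rw [map_mul, map_mul, ← mul_assoc] at hγx
  have hγd : γ x * eval x d₁ = eval x N₁ :=
    mul_right_cancel₀ (right_ne_zero_of_mul hdx) hγx
  rw [map_mul, ← hγd, mul_assoc, hux, mul_one]

end BigSets

section ZariskiClosed

open MvPolynomial

variable {ι K : Type*} [Field K] [IsAlgClosed K] [Finite ι]

lemma eq_top_of_zeroLocus_eq_empty {I : Ideal (MvPolynomial ι K)} (hI : zeroLocus K I = ∅) :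
    I = ⊤ := by
  rw [← Ideal.radical_eq_top, ← vanishingIdeal_zeroLocus_eq_radical (K := K), hI,
    vanishingIdeal_empty]

lemma exists_eval_eq_zero_and_eval_eq_one {I J : Ideal (MvPolynomial ι K)}
    (hIJ : Disjoint (zeroLocus K I) (zeroLocus K J)) :
    ∃ p : MvPolynomial ι K, (∀ x ∈ zeroLocus K I, eval x p = 0) ∧
      ∀ x ∈ zeroLocus K J, eval x p = 1 := by
  have htop : I ⊔ J = ⊤ := eq_top_of_zeroLocus_eq_empty <| by
    rw [zeroLocus_vanishingIdeal_galoisConnection.l_sup]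
    exact hIJ.eq_bot
  obtain ⟨p, hp, q, hq, hpq⟩ := Submodule.mem_sup.1 ((Ideal.eq_top_iff_one _).1 htop)
  refine ⟨p, fun x hx => hx p hp, fun x hx => ?_⟩
  have hqx : eval x q = 0 := hx q hq
  simpa [hqx] using congrArg (eval x) hpq

end ZariskiClosed

section PolynomialFunctions

open MvPolynomial Module

variable {κ V : Type*} [AddCommGroup V] [Module ℂ V]

lemma isPolyFun_eval {F : κ → V → ℂ} (hF : ∀ k, IsPolyFun (F k)) (p : MvPolynomial κ ℂ) :
    IsPolyFun fun v => eval (fun k => F k v) p := by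
  induction p using MvPolynomial.induction_on with
  | C c =>
    simp_rw [eval_C]
    exact Subalgebra.algebraMap_mem _ c
  | add p q hp hq =>
    simp_rw [map_add]
    exact add_mem hp hq
  | mul_X p k hp =>
    simp_rw [map_mul, eval_X]
    exact mul_mem hp (hF k)

lemma exists_eval_repr_eq_of_isPolyFun [Finite κ] (b : Basis κ ℂ V) {f : V → ℂ}
    (hf : IsPolyFun f) : ∃ p : MvPolynomial κ ℂ, ∀ v, eval (b.repr v) p = f v := by
  have := Fintype.ofFinite κ
  induction hf using Algebra.adjoin_induction with
  | mem f hf =>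
    obtain ⟨l, rfl⟩ := hf
    refine ⟨∑ k, C (l (b k)) * X k, fun v => ?_⟩
    calc eval (b.repr v) (∑ k, C (l (b k)) * X k) = l (∑ k, b.repr v k • b k) := by
          simp only [map_sum, map_mul, eval_C, eval_X, map_smul, smul_eq_mul, mul_comm]
      _ = l v := by rw [b.sum_repr]
  | algebraMap c => exact ⟨C c, fun v => eval_C c⟩
  | add f g _ _ hf hg =>
    obtain ⟨p, hp⟩ := hf
    obtain ⟨q, hq⟩ := hg
    exact ⟨p + q, fun v => by rw [map_add, hp, hq, Pi.add_apply]⟩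
  | mul f g _ _ hf hg =>
    obtain ⟨p, hp⟩ := hf
    obtain ⟨q, hq⟩ := hg
    exact ⟨p * q, fun v => by rw [map_mul, hp, hq, Pi.mul_apply]⟩

lemma IsZariskiClosed.exists_mem_iff_repr_mem_zeroLocus [Finite κ] (b : Basis κ ℂ V) {S : Set V}
    (hS : IsZariskiClosed S) :
    ∃ I : Ideal (MvPolynomial κ ℂ), ∀ v, v ∈ S ↔ ⇑(b.repr v) ∈ zeroLocus ℂ I := by
  obtain ⟨P, hP, rfl⟩ := hS
  choose! p hp using fun f hf => exists_eval_repr_eq_of_isPolyFun b (hP f hf)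
  refine ⟨Ideal.span (p '' P), fun v => ?_⟩
  rw [zeroLocus_span, Set.mem_ofPred_eq, Set.mem_ofPred_eq, Set.forall_mem_image]
  exact forall₂_congr fun f hf => by rw [aeval_eq_eval, hp f hf]

variable {ι : Type*}

lemma IsZariskiClosed.exists_eq_zeroLocus [Finite ι] {S : Set (ι → ℂ)} (hS : IsZariskiClosed S) :
    ∃ I : Ideal (MvPolynomial ι ℂ), S = zeroLocus ℂ I := by
  obtain ⟨I, hI⟩ := hS.exists_mem_iff_repr_mem_zeroLocus (Pi.basisFun ℂ ι)
  exact ⟨I, Set.ext hI⟩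

lemma isPolyFun_eval_pi (p : MvPolynomial ι ℂ) : IsPolyFun fun x : ι → ℂ => eval x p :=
  isPolyFun_eval (fun i => Algebra.subset_adjoin ⟨LinearMap.proj i, rfl⟩) p

end PolynomialFunctions

section LinearSubstitution

open MvPolynomial Matrix

variable {K ι : Type*} [Field K] [Fintype ι] [DecidableEq ι]

/-- The matrix of an element of `GL(K^ι)` in the standard basis, as a monoid homomorphism. -/
def matrixHom : ((ι → K) ≃ₗ[K] (ι → K)) →* Matrix ι ι K :=
  (LinearMap.toMatrixAlgEquiv' (R := K) (n := ι)).toAlgHom.toMonoidHom.comp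
    LinearEquiv.automorphismGroup.toLinearMapMonoidHom

lemma matrixHom_mulVec (g : (ι → K) ≃ₗ[K] (ι → K)) (x : ι → K) : matrixHom g *ᵥ x = g x :=
  LinearMap.toMatrix'_mulVec (g : (ι → K) →ₗ[K] (ι → K)) x

lemma det_matrixHom (g : (ι → K) ≃ₗ[K] (ι → K)) :
    (matrixHom g).det = LinearMap.det (g : (ι → K) →ₗ[K] (ι → K)) :=
  LinearMap.det_toMatrix' (g : (ι → K) →ₗ[K] (ι → K))

lemma matrixHom_inv (g : (ι → K) ≃ₗ[K] (ι → K)) :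
    matrixHom g⁻¹ =
      (LinearMap.det (g : (ι → K) →ₗ[K] (ι → K)))⁻¹ • (matrixHom g).adjugate := by
  have h : matrixHom g * matrixHom g⁻¹ = 1 := by rw [← map_mul, mul_inv_cancel, map_one]
  rw [← Matrix.inv_eq_right_inv h, Matrix.inv_def, Ring.inverse_eq_inv', det_matrixHom]

/-- Linear substitution in polynomials, pulling back along `g`. -/
def precomp (g : (ι → K) ≃ₗ[K] (ι → K)) : MvPolynomial ι K →ₐ[K] MvPolynomial ι K :=
  aeval (matrixHom g).toMvPolynomial

lemma eval_precomp (g : (ι → K) ≃ₗ[K] (ι → K)) (p : MvPolynomial ι K) (x : ι → K) :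
    eval x (precomp g p) = eval (g x) p := by
  rw [precomp, ← coe_aeval_eq_eval, ← coe_aeval_eq_eval, RingHom.coe_coe, RingHom.coe_coe,
    ← AlgHom.comp_apply, comp_aeval]
  simp_rw [aeval_eq_eval, toMvPolynomial_eval_eq_apply, matrixHom_mulVec]

lemma precomp_one : precomp (1 : (ι → K) ≃ₗ[K] (ι → K)) = AlgHom.id K _ := by
  rw [precomp, map_one, toMvPolynomial_one, aeval_X_left]

lemma precomp_mul (g h : (ι → K) ≃ₗ[K] (ι → K)) :
    precomp (g * h) = (precomp h).comp (precomp g) := by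
  ext1 i
  rw [precomp, map_mul, aeval_X, AlgHom.comp_apply]
  simp only [toMvPolynomial_mul, precomp, aeval_X]
  rfl

/-- The automorphism of the polynomial ring pulling back along `g`. -/
def precompEquiv (g : (ι → K) ≃ₗ[K] (ι → K)) : MvPolynomial ι K ≃ₐ[K] MvPolynomial ι K :=
  AlgEquiv.ofAlgHom (precomp g) (precomp g⁻¹)
    (by rw [← precomp_mul, inv_mul_cancel, precomp_one])
    (by rw [← precomp_mul, mul_inv_cancel, precomp_one])

lemma totalDegree_precomp_le (g : (ι → K) ≃ₗ[K] (ι → K)) (p : MvPolynomial ι K) :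
    (precomp g p).totalDegree ≤ p.totalDegree := by
  rw [precomp, aeval_def, eval₂_eq']
  refine totalDegree_finsetSum_le fun d hd => (totalDegree_mul _ _).trans ?_
  rw [algebraMap_eq, totalDegree_C, zero_add]
  calc (∏ i, (matrixHom g).toMvPolynomial i ^ d i).totalDegree
      ≤ ∑ i, ((matrixHom g).toMvPolynomial i ^ d i).totalDegree := totalDegree_finsetProd _ _
    _ ≤ ∑ i, d i := Finset.sum_le_sum fun i _ => (totalDegree_pow _ _).trans <|
        (Nat.mul_le_mul_left _ (toMvPolynomial_totalDegree_le _ i)).trans (mul_one _).le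
    _ = d.sum fun _ e => e := (d.sum_fintype (fun _ e => e) fun _ => rfl).symm
    _ ≤ p.totalDegree := le_totalDegree hd

end LinearSubstitution

section Reductivity

open MvPolynomial Matrix

lemma isPolyFun_adjugate_apply {V κ : Type*} [AddCommGroup V] [Module ℂ V] [Fintype κ]
    [DecidableEq κ] {M : V → Matrix κ κ ℂ} (hM : ∀ k l, IsPolyFun fun v => M v k l) (k l : κ) :
    IsPolyFun fun v => (M v).adjugate k l := by
  have hX (v : V) : (M v).adjugate k l =
      eval (fun kl : κ × κ => M v kl.1 kl.2) ((mvPolynomialX κ κ ℂ).adjugate k l) := by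
    conv_lhs => rw [← mvPolynomialX_mapMatrix_eval (M v), ← RingHom.map_adjugate]
    rfl
  simp_rw [hX]
  exact isPolyFun_eval (F := fun (kl : κ × κ) v => M v kl.1 kl.2) (fun kl => hM kl.1 kl.2) _

lemma exists_isPolyFun_eq_eval_inv {ι : Type*} [Finite ι] (p : MvPolynomial ι ℂ) (x : ι → ℂ) :
    ∃ P : ((ι → ℂ) →ₗ[ℂ] (ι → ℂ)) × ℂ → ℂ, IsPolyFun P ∧ ∀ g : (ι → ℂ) ≃ₗ[ℂ] (ι → ℂ),
      eval (g⁻¹ x) p = P (g, (LinearMap.det (g : (ι → ℂ) →ₗ[ℂ] (ι → ℂ)))⁻¹) := by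
  have := Fintype.ofFinite ι
  classical
  let F (i : ι) (y : ((ι → ℂ) →ₗ[ℂ] (ι → ℂ)) × ℂ) : ℂ :=
    ((y.2 • (LinearMap.toMatrix' y.1).adjugate) *ᵥ x) i
  have hF (i : ι) : IsPolyFun (F i) := by
    have hadj (j : ι) : IsPolyFun fun y : ((ι → ℂ) →ₗ[ℂ] (ι → ℂ)) × ℂ =>
        (LinearMap.toMatrix' y.1).adjugate i j :=
      isPolyFun_adjugate_apply (fun k l => Algebra.subset_adjoin
        ⟨entryLinearMap ℂ ℂ k l ∘ₗ LinearMap.toMatrix'.toLinearMap ∘ₗ LinearMap.fst ℂ _ ℂ, rfl⟩) i j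
    have hsnd : IsPolyFun fun y : ((ι → ℂ) →ₗ[ℂ] (ι → ℂ)) × ℂ => y.2 :=
      Algebra.subset_adjoin ⟨LinearMap.snd ℂ _ ℂ, rfl⟩
    have hsum := sum_mem fun j (_ : j ∈ Finset.univ) =>
      mul_mem (mul_mem hsnd (hadj j)) (Subalgebra.algebraMap_mem _ (x j))
    rwa [Finset.sum_fn] at hsum
  refine ⟨fun y => eval (F · y) p, isPolyFun_eval hF p, fun g => ?_⟩
  rw [← matrixHom_mulVec, matrixHom_inv]
  rfl

variable {ι : Type*} [Fintype ι] [DecidableEq ι]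

/-- The representation of `GL(K^ι)` on the polynomials of degree at most `d`, in which `g` sends
`p` to `p ∘ g⁻¹`. -/
def polynomialRep {K : Type*} [Field K] (d : ℕ) :
    ((ι → K) ≃ₗ[K] (ι → K)) →* (restrictTotalDegree ι K d ≃ₗ[K] restrictTotalDegree ι K d) :=
  (LinearMap.GeneralLinearGroup.generalLinearEquiv K _).toMonoidHom.comp <| MonoidHom.toHomUnits
    { toFun g := (precomp g⁻¹).toLinearMap.restrict fun p hp => (mem_restrictTotalDegree _ _ _).2 <|
        (totalDegree_precomp_le _ p).trans ((mem_restrictTotalDegree _ _ _).1 hp)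
      map_one' := by
        ext1 p
        exact Subtype.ext (by simp [LinearMap.restrict_apply, precomp_one])
      map_mul' g h := by
        ext1 p
        exact Subtype.ext (by simp [LinearMap.restrict_apply, precomp_mul]) }

lemma coe_polynomialRep {K : Type*} [Field K] (d : ℕ) (g : (ι → K) ≃ₗ[K] (ι → K))
    (p : restrictTotalDegree ι K d) :
    (polynomialRep d g p : MvPolynomial ι K) = precomp g⁻¹ p := rfl

lemma span_range_aeval_restrictTotalDegree (σ K : Type*) [Finite σ] [Field K] [Infinite K]
    (d : ℕ) :
    Submodule.span K (Set.range fun x : σ → K =>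
      (aeval x).toLinearMap ∘ₗ (restrictTotalDegree σ K d).subtype) = ⊤ := by
  refine Submodule.span_eq_top_of_ne_zero fun p hp => ?_
  by_contra! h
  refine hp (Subtype.ext (MvPolynomial.funext fun x => ?_))
  rw [← aeval_eq_eval]
  exact (h _ ⟨x, rfl⟩).trans (map_zero _).symm

lemma exists_isPolyFun_eq_polynomialRep (d : ℕ) (l : restrictTotalDegree ι ℂ d →ₗ[ℂ] ℂ)
    (p : restrictTotalDegree ι ℂ d) :
    ∃ P : ((ι → ℂ) →ₗ[ℂ] (ι → ℂ)) × ℂ → ℂ, IsPolyFun P ∧ ∀ g : (ι → ℂ) ≃ₗ[ℂ] (ι → ℂ),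
      l (polynomialRep d g p) = P (g, (LinearMap.det (g : (ι → ℂ) →ₗ[ℂ] (ι → ℂ)))⁻¹) := by
  have hl := (span_range_aeval_restrictTotalDegree ι ℂ d).ge (Submodule.mem_top (x := l))
  induction hl using Submodule.span_induction with
  | mem l hl =>
    obtain ⟨x, rfl⟩ := hl
    obtain ⟨P, hP, h⟩ := exists_isPolyFun_eq_eval_inv p.1 x
    refine ⟨P, hP, fun g => ?_⟩
    rw [← h g, ← eval_precomp, ← coe_polynomialRep, ← aeval_eq_eval]
    rfl
  | zero => exact ⟨0, zero_mem _, fun g => rfl⟩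
  | add l m _ _ hl hm =>
    obtain ⟨P, hP, hl⟩ := hl
    obtain ⟨Q, hQ, hm⟩ := hm
    exact ⟨P + Q, add_mem hP hQ, fun g => congrArg₂ (· + ·) (hl g) (hm g)⟩
  | smul c l _ hl =>
    obtain ⟨P, hP, hl⟩ := hl
    exact ⟨c • P, Subalgebra.smul_mem _ hP c, fun g => congrArg (c • ·) (hl g)⟩

end Reductivity

section EquivariantExtension

open MvPolynomial

variable {ι : Type} {G : Subgroup ((ι → ℂ) ≃ₗ[ℂ] (ι → ℂ))}

lemma IsLinearlyReductive.exists_isCompl_restrictTotalDegree [Fintype ι] [DecidableEq ι]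
    (hG : IsLinearlyReductive G) {d : ℕ}
    {L : Submodule ℂ (restrictTotalDegree ι ℂ d)}
    (hL : ∀ g ∈ G, ∀ p ∈ L, polynomialRep d g p ∈ L) :
    ∃ C : Submodule ℂ (restrictTotalDegree ι ℂ d),
      (∀ g ∈ G, ∀ p ∈ C, polynomialRep d g p ∈ C) ∧ IsCompl L C := by
  obtain ⟨C, hC, hLC⟩ := hG _ ((polynomialRep d).comp G.subtype) (fun l p =>
    (exists_isPolyFun_eq_polynomialRep d l p).imp fun P hP => ⟨hP.1, fun g => hP.2 g⟩)
    L fun g => hL g g.2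
  exact ⟨C, fun g hg => hC ⟨g, hg⟩, hLC⟩

/- Project the `f k` along the polynomials vanishing on `S` onto a `G`-stable complement: there an
identity that holds on `S` holds everywhere. -/
lemma IsLinearlyReductive.exists_equivariant_extension [Finite ι]
    (hG : IsLinearlyReductive G) {S : Set (ι → ℂ)} (hS : ∀ g ∈ G, ∀ x ∈ S, g x ∈ S)
    {κ : Type*} [Fintype κ] (f : κ → MvPolynomial ι ℂ) (M : ((ι → ℂ) ≃ₗ[ℂ] (ι → ℂ)) → Matrix κ κ ℂ)
    (hf : ∀ g ∈ G, ∀ x ∈ S, ∀ k, eval (g x) (f k) = ∑ l, M g k l * eval x (f l)) :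
    ∃ F : κ → MvPolynomial ι ℂ, (∀ x ∈ S, ∀ k, eval x (F k) = eval x (f k)) ∧
      ∀ g ∈ G, ∀ x k, eval (g x) (F k) = ∑ l, M g k l * eval x (F l) := by
  have := Fintype.ofFinite ι
  classical
  let d := Finset.univ.sup fun k => (f k).totalDegree
  have hfd (k) : f k ∈ restrictTotalDegree ι ℂ d := (mem_restrictTotalDegree _ _ _).2
    (Finset.le_sup (f := fun k => (f k).totalDegree) (Finset.mem_univ k))
  let L : Submodule ℂ (restrictTotalDegree ι ℂ d) :=
    ((MvPolynomial.vanishingIdeal ℂ S).restrictScalars ℂ).comap (Submodule.subtype _)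
  have mem_L (p) : p ∈ L ↔ ∀ x ∈ S, eval x (p : MvPolynomial ι ℂ) = 0 := Iff.rfl
  obtain ⟨C, hCG, hLC⟩ := hG.exists_isCompl_restrictTotalDegree (L := L) fun g hg p hp =>
    (mem_L _).2 fun x hx => by
      rw [coe_polynomialRep, eval_precomp]
      exact (mem_L p).1 hp _ (hS _ (G.inv_mem hg) x hx)
  have hsplit (k : κ) : ∃ F ∈ C, ∀ x ∈ S, eval x (F : MvPolynomial ι ℂ) = eval x (f k) := by
    obtain ⟨p, hp, F, hF, hpF⟩ := Submodule.mem_sup.1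
      (hLC.sup_eq_top.ge (Submodule.mem_top (x := ⟨f k, hfd k⟩)))
    refine ⟨F, hF, fun x hx => ?_⟩
    have := congrArg (fun q : restrictTotalDegree ι ℂ d => eval x (q : MvPolynomial ι ℂ)) hpF
    simpa [(mem_L p).1 hp x hx] using this
  choose F hFC hFf using hsplit
  refine ⟨fun k => F k, fun x hx k => hFf k x hx, fun g hg x k => ?_⟩
  let D := polynomialRep d g⁻¹ (F k) - ∑ l, M g k l • F l
  have eval_D (y : ι → ℂ) : eval y (D : MvPolynomial ι ℂ) =
      eval (g y) (F k : MvPolynomial ι ℂ) - ∑ l, M g k l * eval y (F l : MvPolynomial ι ℂ) := by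
    simp only [D, Submodule.coe_sub, Submodule.coe_sum, Submodule.coe_smul, coe_polynomialRep,
      inv_inv, map_sub, map_sum, eval_precomp, smul_eval]
  have hDL : D ∈ L := (mem_L D).2 fun y hy => by
    simp_rw [eval_D, hFf _ _ (hS g hg y hy), hFf _ _ hy, hf g hg y hy, sub_self]
  have hDC : D ∈ C := sub_mem (hCG _ (G.inv_mem hg) _ (hFC k))
    (sum_mem fun l _ => C.smul_mem _ (hFC l))
  have hD : D = 0 := Submodule.disjoint_def.1 hLC.disjoint D hDL hDC
  rw [← sub_eq_zero, ← eval_D, hD, Submodule.coe_zero, map_zero]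

lemma IsLinearlyReductive.orbit_eq_of_forall_eval_eq [Finite ι]
    (hG : IsLinearlyReductive G) {u v : ι → ℂ}
    (hu : IsZariskiClosed (MulAction.orbit G u)) (hv : IsZariskiClosed (MulAction.orbit G v))
    (huv : ∀ p : MvPolynomial ι ℂ, (∀ g ∈ G, ∀ x, eval (g x) p = eval x p) →
      eval u p = eval v p) :
    MulAction.orbit G u = MulAction.orbit G v := by
  refine (MulAction.orbit.eq_or_disjoint u v).resolve_right fun hdisj => ?_
  obtain ⟨I, hI⟩ := hu.exists_eq_zeroLocus
  obtain ⟨J, hJ⟩ := hv.exists_eq_zeroLocus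
  rw [hI, hJ] at hdisj
  obtain ⟨p, hpu, hpv⟩ := exists_eval_eq_zero_and_eval_eq_one hdisj
  rw [← hI] at hpu
  rw [← hJ] at hpv
  have hstable (w : ι → ℂ) (g) (hg : g ∈ G) (x) (hx : x ∈ MulAction.orbit G w) :
      g x ∈ MulAction.orbit G w :=
    MulAction.mem_orbit_of_mem_orbit (⟨g, hg⟩ : G) hx
  obtain ⟨F, hFp, hF⟩ := hG.exists_equivariant_extension (κ := Unit)
    (S := MulAction.orbit G u ∪ MulAction.orbit G v)
    (fun g hg x hx => hx.imp (hstable u g hg x) (hstable v g hg x)) (fun _ => p) (fun _ => 1)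
    (fun g hg x hx _ => by
      rcases hx with hx | hx
      · simp [hpu _ hx, hpu _ (hstable u g hg x hx)]
      · simp [hpv _ hx, hpv _ (hstable v g hg x hx)])
  have h := huv (F ()) fun g hg x => by simpa using hF g hg x ()
  rw [hFp u (.inl (MulAction.mem_orbit_self u)), hFp v (.inr (MulAction.mem_orbit_self v)),
    hpu u (MulAction.mem_orbit_self u), hpv v (MulAction.mem_orbit_self v)] at h
  exact zero_ne_one h

end EquivariantExtension

section RegularFunctions

open MvPolynomial

variable {K T σ τ : Type*} [Field K]

/-- The algebra of functions on `T` that are polynomial in the coordinates of `c : T → K^σ`. If `c`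
is injective with Zariski closed range, this is the coordinate ring of the affine variety `T`. -/
def regularFunctions (c : T → σ → K) : Subalgebra K (T → K) :=
  (aeval fun k t => c t k : MvPolynomial σ K →ₐ[K] T → K).range

lemma aeval_coord_apply (c : T → σ → K) (p : MvPolynomial σ K) (t : T) :
    (aeval (fun k t => c t k) p : T → K) t = eval (c t) p := by
  rw [← aeval_eq_eval]
  exact map_aeval _ (Pi.evalRingHom (fun _ : T => K) t) p

lemma mem_regularFunctions {c : T → σ → K} {f : T → K} :
    f ∈ regularFunctions c ↔ ∃ p : MvPolynomial σ K, ∀ t, eval (c t) p = f t := by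
  simp_rw [regularFunctions, AlgHom.mem_range, funext_iff, aeval_coord_apply]

instance [Finite σ] (c : T → σ → K) : Algebra.FiniteType K (regularFunctions c) :=
  .of_surjective (AlgHom.rangeRestrict _) (AlgHom.rangeRestrict_surjective _)

lemma exists_algHom_regularFunctions_eq_apply {c : T → σ → K}
    (hc : zeroLocus K (MvPolynomial.vanishingIdeal K (Set.range c)) ⊆ Set.range c)
    (χ : regularFunctions c →ₐ[K] K) : ∃ t, ∀ f, χ f = f.1 t := by
  let π : MvPolynomial σ K →ₐ[K] regularFunctions c := AlgHom.rangeRestrict _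
  have coe_π (p t) : (π p).1 t = eval (c t) p := aeval_coord_apply c p t
  let x (k : σ) : K := χ (π (X k))
  have hχ (p) : χ (π p) = eval x p := by
    rw [← aeval_eq_eval]
    exact DFunLike.congr_fun (aeval_unique (χ.comp π)) p
  obtain ⟨t, ht⟩ := hc (show x ∈ _ from mem_zeroLocus_iff.2 fun p hp => by
    have hπp : π p = 0 := Subtype.ext <| funext fun t =>
      (coe_π p t).trans (mem_vanishingIdeal_iff.1 hp _ ⟨t, rfl⟩)
    rw [aeval_eq_eval, ← hχ, hπp, map_zero])
  refine ⟨t, fun f => ?_⟩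
  obtain ⟨p, rfl⟩ := AlgHom.rangeRestrict_surjective _ f
  exact (hχ p).trans ((congrArg (eval · p) ht).symm.trans (coe_π p t).symm)

/- An injective morphism `c'` from the affine variety `T` is birational onto its image: the
characters of the coordinate ring of `T` are points of `T`, hence are separated by `c'`. -/
lemma exists_eval_ne_zero_and_eval_mul_eq [CharZero K] [IsAlgClosed K] [Nonempty T] [Finite σ]
    {c : T → σ → K}
    (hc : zeroLocus K (MvPolynomial.vanishingIdeal K (Set.range c)) ⊆ Set.range c)
    {c' : T → τ → K} (hc' : Function.Injective c') (h : ∀ k, (c' · k) ∈ regularFunctions c) :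
    ∃ q : MvPolynomial τ K, (∃ t, eval (c' t) q ≠ 0) ∧
      ∀ k, ∃ p : MvPolynomial τ K, ∀ t, eval (c' t) p = eval (c' t) q * c t k := by
  let B := regularFunctions c
  let coord (k : σ) : B := ⟨(c · k), mem_regularFunctions.2 ⟨X k, fun _ => eval_X k⟩⟩
  have : IsReduced B := isReduced_of_injective B.val Subtype.val_injective
  obtain ⟨⟨a, ha⟩, ha0, hab⟩ := exists_ne_zero_smul_mem_of_separates
    (A := (regularFunctions c').comap B.val) (fun χ₁ χ₂ hχ => by
      obtain ⟨s, hs⟩ := exists_algHom_regularFunctions_eq_apply hc χ₁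
      obtain ⟨t, ht⟩ := exists_algHom_regularFunctions_eq_apply hc χ₂
      have hst : s = t := hc' <| funext fun k => by
        have := hχ ⟨_, h k⟩ (mem_regularFunctions.2 ⟨X k, fun _ => eval_X k⟩)
        rwa [hs, ht] at this
      exact AlgHom.ext fun f => by rw [hs, ht, hst]) coord
  obtain ⟨q, hq⟩ := mem_regularFunctions.1 ha
  refine ⟨q, ?_, fun k => ?_⟩
  · by_contra! hq0
    refine ha0 (Subtype.ext (Subtype.ext (funext fun t => ?_)))
    calc a.1 t = eval (c' t) q := (hq t).symm
      _ = 0 := hq0 t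
  · obtain ⟨p, hp⟩ := mem_regularFunctions.1 (hab k)
    refine ⟨p, fun t => ?_⟩
    rw [hp, hq]
    rfl

end RegularFunctions

section FreeClosedOrbits

open MvPolynomial Matrix

variable {K ι : Type*} [Field K]

/-- The points with a Zariski closed `G`-orbit and a trivial stabilizer in `G`. -/
structure HasFreeClosedOrbit (G : Subgroup ((ι → ℂ) ≃ₗ[ℂ] (ι → ℂ))) (v : ι → ℂ) : Prop where
  isZariskiClosed : IsZariskiClosed (MulAction.orbit G v)
  eq_one : ∀ g ∈ G, g v = v → g = 1

lemma HasFreeClosedOrbit.apply_injective {G : Subgroup ((ι → ℂ) ≃ₗ[ℂ] (ι → ℂ))} {v : ι → ℂ}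
    (hv : HasFreeClosedOrbit G v) :
    Function.Injective fun g : G => g.1 v := fun g h hgh => by
  have : h⁻¹ * g = 1 := Subtype.ext <| hv.eq_one _ (mul_mem (inv_mem h.2) g.2) <|
    (LinearEquiv.symm_apply_eq h.1).2 hgh
  exact (inv_mul_eq_one.1 this).symm

lemma IsReductiveSubgroup.exists_mem_iff_matrixHom_mem_zeroLocus {ι : Type} [Fintype ι]
    [DecidableEq ι] {G : Subgroup ((ι → ℂ) ≃ₗ[ℂ] (ι → ℂ))} (hG : IsReductiveSubgroup G) :
    ∃ I : Ideal (MvPolynomial (ι × ι) ℂ),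
      ∀ g, g ∈ G ↔ (fun ij => matrixHom g ij.1 ij.2) ∈ zeroLocus ℂ I := by
  obtain ⟨⟨Z, hZ, hGZ⟩, -⟩ := hG
  obtain ⟨I, hI⟩ := hZ.exists_mem_iff_repr_mem_zeroLocus
    ((Matrix.stdBasis ℂ ι ι).map LinearMap.toMatrix'.symm)
  exact ⟨I, fun g => (hGZ g).trans (hI g)⟩

variable [Fintype ι] [DecidableEq ι]

/-- The entries of `g` and of `g⁻¹`, as a point of affine space. This embeds `GL(K^ι)` as a Zariski
closed set. -/
def entries (g : (ι → K) ≃ₗ[K] (ι → K)) : (ι × ι) ⊕ (ι × ι) → K :=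
  Sum.elim (fun ij => matrixHom g ij.1 ij.2) (fun ij => matrixHom g⁻¹ ij.1 ij.2)

lemma exists_entries_eq {x : (ι × ι) ⊕ (ι × ι) → K}
    (hx : (of fun i j => x (.inl (i, j))) * (of fun i j => x (.inr (i, j))) = 1) :
    ∃ g, entries g = x := by
  refine ⟨LinearEquiv.ofLinearMap (toLin' _) (toLin' _) (by rw [← toLin'_mul, hx, toLin'_one])
    (by rw [← toLin'_mul, mul_eq_one_comm.1 hx, toLin'_one]), funext ?_⟩
  rintro (⟨i, j⟩ | ⟨i, j⟩)
  · exact congrFun₂ (LinearMap.toMatrix'_toLin' (of fun i j => x (.inl (i, j)))) i j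
  · exact congrFun₂ (LinearMap.toMatrix'_toLin' (of fun i j => x (.inr (i, j)))) i j

lemma zeroLocus_vanishingIdeal_range_entries_subset {G : Subgroup ((ι → K) ≃ₗ[K] (ι → K))}
    {I : Ideal (MvPolynomial (ι × ι) K)}
    (hI : ∀ g, g ∈ G ↔ (fun ij => matrixHom g ij.1 ij.2) ∈ zeroLocus K I) :
    zeroLocus K (MvPolynomial.vanishingIdeal K (Set.range fun g : G => entries g.1)) ⊆
      Set.range fun g : G => entries g.1 := by
  intro x hx
  have hx (p) (hp : ∀ g : G, eval (entries g.1) p = 0) : eval x p = 0 :=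
    mem_zeroLocus_iff.1 hx p (mem_vanishingIdeal_iff.2 (Set.forall_mem_range.2 hp))
  obtain ⟨g, hgx⟩ := exists_entries_eq (x := x) <| by
    ext i j
    have eval_relation (y : (ι × ι) ⊕ (ι × ι) → K) :
        eval y (∑ l, X (.inl (i, l)) * X (.inr (l, j)) - C ((1 : Matrix ι ι K) i j)) =
          ∑ l, y (.inl (i, l)) * y (.inr (l, j)) - (1 : Matrix ι ι K) i j := by
      simp only [map_sub, map_sum, map_mul, eval_X, eval_C]
    have := hx _ fun g => by
      rw [eval_relation, sub_eq_zero, ← map_one matrixHom, ← mul_inv_cancel g.1, map_mul]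
      rfl
    exact sub_eq_zero.1 ((eval_relation x).symm.trans this)
  have hgG : g ∈ G := (hI g).2 fun p hp => by
    have := hx (rename .inl p) fun h => by
      rw [eval_rename]
      exact (hI h).1 h.2 p hp
    rwa [eval_rename, ← hgx] at this
  exact ⟨⟨g, hgG⟩, hgx⟩

variable {G : Subgroup ((ι → K) ≃ₗ[K] (ι → K))} {v : ι → K}

/-- The polynomials `q` for which every `q(g v) * g i j` is a polynomial in `g v`, for `g ∈ G`. It
is the unit ideal exactly when the inverse `g v ↦ g` of the orbit map is a morphism. -/
def denominatorIdeal (G : Subgroup ((ι → K) ≃ₗ[K] (ι → K))) (v : ι → K) :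
    Ideal (MvPolynomial ι K) where
  carrier := {q | ∀ i j, ∃ p : MvPolynomial ι K, ∀ g ∈ G,
    eval (g v) p = eval (g v) q * matrixHom g i j}
  zero_mem' i j := ⟨0, fun g _ => by simp only [map_zero, zero_mul]⟩
  add_mem' ha hb i j := by
    obtain ⟨p, hp⟩ := ha i j
    obtain ⟨q, hq⟩ := hb i j
    exact ⟨p + q, fun g hg => by rw [map_add, map_add, hp g hg, hq g hg, add_mul]⟩
  smul_mem' r q hq i j := by
    obtain ⟨p, hp⟩ := hq i j
    exact ⟨r * p, fun g hg => by rw [smul_eq_mul, map_mul, map_mul, hp g hg, mul_assoc]⟩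

lemma precomp_mem_denominatorIdeal {h : (ι → K) ≃ₗ[K] (ι → K)} (hh : h ∈ G)
    {q : MvPolynomial ι K} (hq : q ∈ denominatorIdeal G v) :
    precomp h q ∈ denominatorIdeal G v := by
  intro i j
  choose p hp using hq
  refine ⟨∑ l, C (matrixHom h⁻¹ i l) * precomp h (p l j), fun g hg => ?_⟩
  have hg' : matrixHom g i j = ∑ l, matrixHom h⁻¹ i l * matrixHom (h * g) l j := by
    rw [← Matrix.mul_apply, ← map_mul, inv_mul_cancel_left]
  have hp' (l) : eval (h (g v)) (p l j) = eval (h (g v)) q * matrixHom (h * g) l j :=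
    hp l j (h * g) (mul_mem hh hg)
  simp only [map_sum, map_mul, eval_C, eval_precomp, hp', hg', Finset.mul_sum, mul_left_comm]

namespace HasFreeClosedOrbit

variable {G : Subgroup ((ι → ℂ) ≃ₗ[ℂ] (ι → ℂ))} {v : ι → ℂ}

lemma exists_mem_denominatorIdeal_eval_ne_zero (hv : HasFreeClosedOrbit G v)
    {I : Ideal (MvPolynomial (ι × ι) ℂ)}
    (hI : ∀ g, g ∈ G ↔ (fun ij => matrixHom g ij.1 ij.2) ∈ zeroLocus ℂ I) :
    ∃ q ∈ denominatorIdeal G v, ∃ g ∈ G, eval (g v) q ≠ 0 := by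
  have hmem (i : ι) : (fun g : G => g.1 v i) ∈ regularFunctions fun g : G => entries g.1 :=
    mem_regularFunctions.2 ⟨∑ j, X (.inl (i, j)) * C (v j), fun g => by
      rw [← matrixHom_mulVec]
      simp only [map_sum, map_mul, eval_X, eval_C]
      rfl⟩
  obtain ⟨q, ⟨⟨g, hg⟩, hqg⟩, hq⟩ := exists_eval_ne_zero_and_eval_mul_eq
    (zeroLocus_vanishingIdeal_range_entries_subset hI) hv.apply_injective hmem
  refine ⟨q, fun i j => ?_, g, hg, hqg⟩
  obtain ⟨p, hp⟩ := hq (.inl (i, j))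
  exact ⟨p, fun g hg => hp ⟨g, hg⟩⟩

/- The zero locus of the denominator ideal is a `G`-stable proper subset of the orbit. -/
lemma denominatorIdeal_eq_top (hv : HasFreeClosedOrbit G v)
    {I : Ideal (MvPolynomial (ι × ι) ℂ)}
    (hI : ∀ g, g ∈ G ↔ (fun ij => matrixHom g ij.1 ij.2) ∈ zeroLocus ℂ I) :
    denominatorIdeal G v = ⊤ := by
  refine eq_top_of_zeroLocus_eq_empty (Set.eq_empty_of_forall_notMem fun x hx => ?_)
  have hx (q) (hq : q ∈ denominatorIdeal G v) : eval x q = 0 := mem_zeroLocus_iff.1 hx q hq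
  obtain ⟨J, hJ⟩ := hv.isZariskiClosed.exists_eq_zeroLocus
  have hxv : x ∈ MulAction.orbit G v := by
    rw [hJ]
    refine mem_zeroLocus_iff.2 fun p hp => hx p fun i j => ⟨0, fun g hg => ?_⟩
    have hgv : g v ∈ zeroLocus ℂ J := hJ ▸ MulAction.mem_orbit v (⟨g, hg⟩ : G)
    have : eval (g v) p = 0 := mem_zeroLocus_iff.1 hgv p hp
    rw [this, map_zero, zero_mul]
  obtain ⟨⟨h, hh⟩, rfl⟩ := hxv
  obtain ⟨q, hq, g, hg, hqg⟩ := hv.exists_mem_denominatorIdeal_eval_ne_zero hI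
  refine hqg ?_
  have := hx _ (precomp_mem_denominatorIdeal (mul_mem hg (inv_mem hh)) hq)
  rw [eval_precomp] at this
  rw [← this]
  exact congrArg (fun w => eval (g w) q) (h.symm_apply_apply v).symm

lemma exists_eval_apply_eq_matrixHom (hv : HasFreeClosedOrbit G v)
    {I : Ideal (MvPolynomial (ι × ι) ℂ)}
    (hI : ∀ g, g ∈ G ↔ (fun ij => matrixHom g ij.1 ij.2) ∈ zeroLocus ℂ I) (i j : ι) :
    ∃ p : MvPolynomial ι ℂ, ∀ g ∈ G, eval (g v) p = matrixHom g i j := by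
  obtain ⟨p, hp⟩ := ((Ideal.eq_top_iff_one _).1 (hv.denominatorIdeal_eq_top hI)) i j
  exact ⟨p, fun g hg => by rw [hp g hg, map_one, one_mul]⟩

end HasFreeClosedOrbit

end FreeClosedOrbits

section EquivariantMatrix

open MvPolynomial Matrix

variable {ι : Type} [Fintype ι] [DecidableEq ι] {G : Subgroup ((ι → ℂ) ≃ₗ[ℂ] (ι → ℂ))}

lemma HasFreeClosedOrbit.exists_equivariant_matrix {v : ι → ℂ} (hv : HasFreeClosedOrbit G v)
    (hG : IsReductiveSubgroup G) :
    ∃ F : Matrix ι ι (MvPolynomial ι ℂ), F.map (eval v) = 1 ∧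
      ∀ g ∈ G, ∀ x, F.map (eval (g x)) = matrixHom g * F.map (eval x) := by
  obtain ⟨I, hI⟩ := hG.exists_mem_iff_matrixHom_mem_zeroLocus
  choose f hf using hv.exists_eval_apply_eq_matrixHom hI
  have extend (j : ι) := hG.2.exists_equivariant_extension (S := MulAction.orbit G v)
    (fun g hg x hx => MulAction.mem_orbit_of_mem_orbit (⟨g, hg⟩ : G) hx) (f · j) matrixHom <| by
      rintro g hg _ ⟨⟨h, hh⟩, rfl⟩ i
      calc eval (g (h v)) (f i j) = matrixHom (g * h) i j := hf i j (g * h) (mul_mem hg hh)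
        _ = ∑ l, matrixHom g i l * matrixHom h l j := by rw [map_mul, Matrix.mul_apply]
        _ = ∑ l, matrixHom g i l * eval (h v) (f l j) := by simp_rw [hf _ _ h hh]
  choose F hFf hF using extend
  refine ⟨of fun i j => F j i, ?_, fun g hg x => ?_⟩
  · ext i j
    exact (hFf j v (MulAction.mem_orbit_self v) i).trans
      ((hf i j 1 G.one_mem).trans (by rw [map_one]))
  · ext i j
    exact hF j g hg x i

/- Cramer's rule for `F(φ x) = γ(x) F(x)`. -/
lemma isLocallyRationalOn_matrixHom (hG : IsReductiveSubgroup G) {U : Set (ι → ℂ)}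
    (hU : ∀ x ∈ U, HasFreeClosedOrbit G x) {φ : (ι → ℂ) ≃ₗ[ℂ] (ι → ℂ)}
    {γ : (ι → ℂ) → ((ι → ℂ) ≃ₗ[ℂ] (ι → ℂ))} (hγG : ∀ x ∈ U, γ x ∈ G)
    (hγ : ∀ x ∈ U, γ x x = φ x) (i j : ι) :
    IsLocallyRationalOn (fun x => matrixHom (γ x) i j) U := by
  intro v hv
  obtain ⟨F, hFv, hF⟩ := (hU v hv).exists_equivariant_matrix hG
  let N := F.map (precomp φ) * F.adjugate
  have eval_det (x : ι → ℂ) : eval x F.det = (F.map (eval x)).det := RingHom.map_det _ _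
  refine ⟨F.det, N i j, by rw [eval_det, hFv, det_one]; exact one_ne_zero, fun x hx => ?_⟩
  have hφ : (F.map (precomp φ)).map (eval x) = matrixHom (γ x) * F.map (eval x) := by
    rw [← hF _ (hγG x hx), hγ x hx]
    ext i j
    exact eval_precomp φ (F i j) x
  have hN : N.map (eval x) = eval x F.det • matrixHom (γ x) := by
    calc N.map (eval x) = matrixHom (γ x) * F.map (eval x) * (F.map (eval x)).adjugate := by
          rw [← hφ, Matrix.map_mul]
          exact congrArg _ (RingHom.map_adjugate (eval x) F)
      _ = eval x F.det • matrixHom (γ x) := by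
          rw [mul_assoc, mul_adjugate, Matrix.mul_smul, Matrix.mul_one, eval_det]
  rw [mul_comm]
  exact (congrFun₂ hN i j).symm

end EquivariantMatrix

section PolynomialMatrices

open MvPolynomial Matrix

lemma coeff_single_sum_mul_X {σ R : Type*} [Fintype σ] [CommSemiring R]
    (q : σ → MvPolynomial σ R) (j : σ) :
    coeff (Finsupp.single j 1) (∑ l, q l * X l) = constantCoeff (q j) := by
  classical
  have (l : σ) : coeff (Finsupp.single j 1) (q l * X l) = if l = j then coeff 0 (q l) else 0 := by
    by_cases h : l = j <;> simp [h, coeff_mul_X']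
  simp [coeff_sum, this, constantCoeff_eq]

variable {K ι : Type*} [Field K] [Fintype ι] [DecidableEq ι]

/- Compare the linear terms in the polynomial identity `Q(x) x = φ x`. -/
lemma map_eval_zero_eq_matrixHom {U : Set (ι → K)}
    (hU : ∀ p : MvPolynomial ι K, (∀ x ∈ U, eval x p = 0) → p = 0)
    {Q : Matrix ι ι (MvPolynomial ι K)} {φ : (ι → K) ≃ₗ[K] (ι → K)}
    (hQ : ∀ x ∈ U, Q.map (eval x) *ᵥ x = φ x) :
    Q.map (eval 0) = matrixHom φ := by
  ext i j
  have h : ∑ l, Q i l * X l = ∑ l, C (matrixHom φ i l) * X l :=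
    sub_eq_zero.1 <| hU _ fun x hx => by
      simp only [map_sub, map_sum, map_mul, eval_X, eval_C, sub_eq_zero]
      exact congrFun ((hQ x hx).trans (matrixHom_mulVec φ x).symm) i
  have := congrArg (coeff (Finsupp.single j 1)) h
  rwa [coeff_single_sum_mul_X, coeff_single_sum_mul_X, constantCoeff_C, ← eval_zero] at this

lemma mem_of_forall_map_eval_eq_matrixHom {G : Subgroup ((ι → K) ≃ₗ[K] (ι → K))}
    {I : Ideal (MvPolynomial (ι × ι) K)}
    (hI : ∀ g, g ∈ G ↔ (fun ij => matrixHom g ij.1 ij.2) ∈ zeroLocus K I) {U : Set (ι → K)}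
    (hU : ∀ p : MvPolynomial ι K, (∀ x ∈ U, eval x p = 0) → p = 0)
    {φ : (ι → K) ≃ₗ[K] (ι → K)} {Q : Matrix ι ι (MvPolynomial ι K)}
    (hQ : ∀ x ∈ U, ∃ g ∈ G, g x = φ x ∧ Q.map (eval x) = matrixHom g) :
    φ ∈ G := by
  have hφ : Q.map (eval 0) = matrixHom φ := map_eval_zero_eq_matrixHom hU fun x hx => by
    obtain ⟨g, -, hgx, hg⟩ := hQ x hx
    rw [hg, matrixHom_mulVec, hgx]
  refine (hI φ).2 fun p hp => ?_
  have eval_bind (x : ι → K) :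
      eval x (bind₁ (fun ij => Q ij.1 ij.2) p) = aeval (fun ij => Q.map (eval x) ij.1 ij.2) p := by
    rw [← aeval_eq_eval, aeval_bind₁]
    rfl
  have hp0 : bind₁ (fun ij => Q ij.1 ij.2) p = 0 := hU _ fun x hx => by
    obtain ⟨g, hgG, -, hg⟩ := hQ x hx
    rw [eval_bind, hg]
    exact (hI g).1 hgG p hp
  rw [← hφ, ← eval_bind, hp0, map_zero]

end PolynomialMatrices

section PrimeGroup

open MvPolynomial

lemma le_primeGroup {V : Type*} [AddCommGroup V] [Module ℂ V] (G : Subgroup (V ≃ₗ[ℂ] V)) :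
    G ≤ primeGroup G :=
  fun g hg _ _ hf => hf g hg

variable {ι : Type} {G : Subgroup ((ι → ℂ) ≃ₗ[ℂ] (ι → ℂ))}

lemma IsLinearlyReductive.exists_apply_eq_of_mem_primeGroup [Finite ι]
    (hG : IsLinearlyReductive G) {φ : (ι → ℂ) ≃ₗ[ℂ] (ι → ℂ)} (hφ : φ ∈ primeGroup G) {x : ι → ℂ}
    (hx : IsZariskiClosed (MulAction.orbit G x))
    (hφx : IsZariskiClosed (MulAction.orbit G (φ x))) : ∃ g ∈ G, g x = φ x := by
  have h := hG.orbit_eq_of_forall_eval_eq hφx hx fun p hp =>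
    hφ (fun y => eval y p) (isPolyFun_eval_pi p) hp x
  obtain ⟨g, hg⟩ := MulAction.orbit_eq_iff.1 h
  exact ⟨g, g.2, hg⟩

theorem IsReductiveSubgroup.primeGroup_eq [Finite ι] (hG : IsReductiveSubgroup G)
    (hU : IsBig {v | HasFreeClosedOrbit G v}) : primeGroup G = G := by
  have := Fintype.ofFinite ι
  classical
  refine le_antisymm (fun φ hφ => ?_) (le_primeGroup G)
  have hU₀ := hU.inter (hU.preimage φ (precompEquiv φ) fun x p => eval_precomp φ p x)
  have hsep (x) (hx : x ∈ {v | HasFreeClosedOrbit G v} ∩ φ ⁻¹' {v | HasFreeClosedOrbit G v}) :=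
    hG.2.exists_apply_eq_of_mem_primeGroup hφ hx.1.isZariskiClosed hx.2.isZariskiClosed
  choose! γ hγG hγ using hsep
  choose Q hQ using fun i j => (isLocallyRationalOn_matrixHom hG (fun x hx => hx.1) hγG hγ i
    j).exists_eq_eval hU₀
  obtain ⟨I, hI⟩ := hG.exists_mem_iff_matrixHom_mem_zeroLocus
  exact mem_of_forall_map_eval_eq_matrixHom hI (fun p => hU₀.eq_zero_of_forall_eval_eq_zero)
    (Q := Matrix.of Q) fun x hx => ⟨γ x, hγG x hx, hγ x hx, by ext i j; exact (hQ i j x hx).symm⟩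

lemma isBig_of_ringKrullDim_add_two_le {n : ℕ} {U : Set (Fin n → ℂ)}
    (hU : ringKrullDim (MvPolynomial (Fin n) ℂ ⧸ vanishingIdeal n (Set.univ \ U)) + 2 ≤ n) :
    IsBig U := by
  have h : vanishingIdeal n (Set.univ \ U) = MvPolynomial.vanishingIdeal ℂ Uᶜ := by
    rw [← Set.compl_eq_univ_sdiff]
    rfl
  rw [h] at hU
  exact two_le_height_of_ringKrullDim_quotient_add_two_le (by simpa using hU)

end PrimeGroup

/-- Let `V` be a finite-dimensional complex vector space (realized as
`ℂⁿ`), `G ⊆ GL(V)` a reductive subgroup, and `U ⊆ V` the set of points whose `G`-orbit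
is (Zariski) closed and whose `G`-stabilizer is trivial.  If the complement `V \ U` has
codimension at least 2 in `V` (the coordinate ring of its Zariski closure has Krull
dimension at most `n - 2`), then `G' = G`. -/
theorem stmt10 (G : Subgroup ((Fin n → ℂ) ≃ₗ[ℂ] (Fin n → ℂ)))
    (hred : IsReductiveSubgroup G)
    (U : Set (Fin n → ℂ))
    (hU : U = {v | IsZariskiClosed {w | ∃ φ ∈ G, φ v = w} ∧
      ∀ φ ∈ G, φ v = v → φ = 1})
    (hcodim : ringKrullDim (MvPolynomial (Fin n) ℂ ⧸ vanishingIdeal n (Set.univ \ U)) + 2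
      ≤ (n : WithBot (WithTop ℕ))) :
    primeGroup G = G := by
  have horbit (v : Fin n → ℂ) : {w | ∃ φ ∈ G, φ v = w} = MulAction.orbit G v :=
    Set.ext fun w => by simp [MulAction.mem_orbit_iff, Subgroup.smul_def]
  have hU' : U = {v | HasFreeClosedOrbit G v} := by
    simp only [hU, horbit]
    exact Set.ext fun v => ⟨fun ⟨hv, hfree⟩ => ⟨hv, hfree⟩, fun ⟨hv, hfree⟩ => ⟨hv, hfree⟩⟩
  exact hred.primeGroup_eq (hU' ▸ isBig_of_ringKrullDim_add_two_le hcodim)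

end Stmt10
end
end
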